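/- arXiv:math/0210188 — 3 statements merged into one kernel-verified Lean document; each statement's English description precedes it below -/
import Mathlib

section
/- Let 𝔨 = 𝔥 ⊕ ⨁_{α∈P} 𝔤_α be a reductive subalgebra of maximal rank of 𝔤 corresponding to a closed symmetric subsystem P ⊆ Ω. Then there exists a finite chain Ω = P_0 ⊇ P_1 ⊇ ⋯ ⊇ P_m = P of closed symmetric subsystems of Ω such that for each j = 1, …, m the subsystem P_j is obtained from P_{j−1} by applying either the Levi procedure or the Dynkin procedure. -/
open LieAlgebra

section CombinatorialDefs

variable {V : Type*} [AddCommGroup V] [Module ℂ V]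

/-- `P` is a closed symmetric subsystem of `Ω`: `P ⊆ Ω`, `P = -P`, and `P` is closed
under addition within `Ω`. -/
def IsClosedSymmetricSubsystem (Ω P : Set V) : Prop :=
  P ⊆ Ω ∧ (∀ a ∈ P, -a ∈ P) ∧ ∀ a ∈ P, ∀ b ∈ P, a + b ∈ Ω → a + b ∈ P

/-- `Pi` is a system of simple roots of `Q`: a linearly independent subset of `Q` such that
every element of `Q` is an integral linear combination of elements of `Pi` with coefficients
all nonnegative or all nonpositive. -/
def IsSimpleSystem (Q Pi : Set V) : Prop :=
  Pi ⊆ Q ∧ LinearIndependent ℂ (Subtype.val : Pi → V) ∧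
    ∀ q ∈ Q, ∃ c : V →₀ ℤ, (c.support : Set V) ⊆ Pi ∧
      q = c.sum (fun v n => n • v) ∧ ((∀ v, 0 ≤ c v) ∨ (∀ v, c v ≤ 0))

/-- The Levi procedure: `Q' = ℤΣ ∩ Q` for a subset `Sig` of a system of simple roots of `Q`. -/
def LeviStep (Q Q' : Set V) : Prop :=
  ∃ Pi Sig : Set V, IsSimpleSystem Q Pi ∧ Sig ⊆ Pi ∧
    Q' = {q ∈ Q | q ∈ AddSubgroup.closure Sig}

/-- The Dynkin procedure: `Q'` consists of those elements of `Q` whose coefficient of `α`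
in the expansion in the simple system `Pi` is divisible by `n`. -/
def DynkinStep (Q Q' : Set V) : Prop :=
  ∃ Pi : Set V, IsSimpleSystem Q Pi ∧ ∃ α ∈ Pi, ∃ n : ℕ, 0 < n ∧
    Q' = {β ∈ Q | ∃ c : V →₀ ℤ, (c.support : Set V) ⊆ Pi ∧
      β = c.sum (fun v k => k • v) ∧ (n : ℤ) ∣ c α}

end CombinatorialDefs

section LieSetup

variable (L : Type*) [LieRing L] [LieAlgebra ℂ L] [FiniteDimensional ℂ L]
  (H : LieSubalgebra ℂ L) [H.IsCartanSubalgebra]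

/-- The set `Ω` of roots of `L` with respect to the Cartan subalgebra `H`, regarded as
(nonzero) linear functionals on `H` with nonzero root space. -/
def lieRoots : Set (Module.Dual ℂ H) :=
  {α | α ≠ 0 ∧ rootSpace H ⇑α ≠ ⊥}

/-- The group `Γ_𝔨 = ℤΩ / ℤP`. -/
abbrev GammaK (P : Set (Module.Dual ℂ H)) : Type _ :=
  AddSubgroup.closure (lieRoots L H) ⧸
    (AddSubgroup.closure P).addSubgroupOf (AddSubgroup.closure (lieRoots L H))

/-- The image `ᾱ` of a root `α` in `Γ_𝔨 = ℤΩ / ℤP`. -/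
def rootImage (P : Set (Module.Dual ℂ H)) {α : Module.Dual ℂ H}
    (hα : α ∈ lieRoots L H) : GammaK L H P :=
  QuotientAddGroup.mk ⟨α, AddSubgroup.subset_closure hα⟩

/-- The subspace `𝔨 = 𝔥 ⊕ ⨁_{α ∈ P} 𝔤_α` of `L`. -/
noncomputable def lieK (P : Set (Module.Dual ℂ H)) : Submodule ℂ L :=
  H.toSubmodule ⊔ ⨆ α ∈ P, (rootSpace H ⇑α : LieSubmodule ℂ H L).toSubmodule

/-- The subspace `𝔪 = ⨁_{γ ∈ Ω \ P} 𝔤_γ` of `L`. -/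
noncomputable def lieM (P : Set (Module.Dual ℂ H)) : Submodule ℂ L :=
  ⨆ γ ∈ lieRoots L H \ P, (rootSpace H ⇑γ : LieSubmodule ℂ H L).toSubmodule

end LieSetup


namespace DynkinAux

set_option linter.unusedSectionVars false

variable {V : Type*} [AddCommGroup V] [Module ℂ V]

structure RS (B : V →ₗ[ℝ] V →ₗ[ℝ] ℝ) (Q : Set V) : Prop where
  symm : ∀ x y, B x y = B y x
  pos : ∀ x, x ≠ 0 → 0 < B x x
  fin : Q.Finite
  zero : (0 : V) ∉ Q
  neg : ∀ a ∈ Q, -a ∈ Q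
  sub : ∀ a ∈ Q, ∀ b ∈ Q, a ≠ b → 0 < B a b → a - b ∈ Q
  refl : ∀ a ∈ Q, ∀ b ∈ Q, ∃ n : ℤ, 2 * B a b = n * B b b ∧ a - n • b ∈ Q
  indep : ∀ u ∈ Submodule.span ℝ Q, ∀ w ∈ Submodule.span ℝ Q, u + Complex.I • w = 0 → u = 0

structure BD (B : V →ₗ[ℝ] V →ₗ[ℝ] ℝ) (Q : Set V) (S : Finset V) (w : V → V →ₗ[ℝ] ℝ)
    (h : V →ₗ[ℝ] ℝ) : Prop where
  sub : (S : Set V) ⊆ Q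
  hpos : ∀ a ∈ S, 0 < h a
  hw1 : ∀ a ∈ S, w a a = 1
  hw0 : ∀ a ∈ S, ∀ b ∈ S, a ≠ b → w a b = 0
  mem : ∀ b ∈ Q, b ∈ AddSubmonoid.closure (S : Set V) ∨ -b ∈ AddSubmonoid.closure (S : Set V)
  obt : ∀ a ∈ S, ∀ b ∈ S, a ≠ b → B a b ≤ 0
  indec : ∀ a ∈ S, ∀ b ∈ Q, ∀ c ∈ Q, 0 < h b → 0 < h c → a ≠ b + c
  simple : IsSimpleSystem Q (S : Set V)

lemma closure_inter {B : V →ₗ[ℝ] V →ₗ[ℝ] ℝ} {Q P : Set V} (hQ : RS B Q)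
    (hP : IsClosedSymmetricSubsystem Q P) {b : V} (hb : b ∈ Q)
    (hb' : b ∈ AddSubgroup.closure P) : b ∈ P := by
  have key : ∀ n : ℕ, ∀ s : Multiset V, s.card = n → (∀ x ∈ s, x ∈ P) → s.sum ∈ Q → s.sum ∈ P := by
    intro n
    induction n with
    | zero =>
      intro s hs _ h
      rw [Multiset.card_eq_zero] at hs
      subst hs
      exact absurd h (by simpa using hQ.zero)
    | succ n ih =>
      intro s hs hsP hsQ
      have hne : s.sum ≠ 0 := fun h => hQ.zero (h ▸ hsQ)
      have hpos := hQ.pos _ hne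
      have : ∃ p ∈ s, 0 < B s.sum p := by
        by_contra! hcon
        have h1 : B s.sum s.sum = (s.map (B s.sum)).sum := by
          rw [← map_multiset_sum]
        have h2 : (s.map (B s.sum)).sum ≤ 0 := by
          refine Multiset.sum_induction (fun x : ℝ => x ≤ 0) _ (fun a b => add_nonpos) le_rfl ?_
          intro x hx
          obtain ⟨p, hp, rfl⟩ := Multiset.mem_map.1 hx
          exact hcon p hp
        linarith
      obtain ⟨p, hp, hBp⟩ := this
      by_cases hsp : s.sum = p
      · rw [hsp]; exact hsP p hp
      have hpQ := hP.1 (hsP p hp)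
      have hsub := hQ.sub _ hsQ _ hpQ hsp hBp
      obtain ⟨t, rfl⟩ := Multiset.exists_cons_of_mem hp
      have ht : t.sum ∈ P := by
        apply ih t
        · simpa using hs
        · intro x hx; exact hsP x (Multiset.mem_cons_of_mem hx)
        · simpa using hsub
      have := hP.2.2 p (hsP p hp) _ ht (by simpa using hsQ)
      simpa using this
  have h2 : b ∈ AddSubmonoid.closure P := by
    have : AddSubgroup.closure P = AddSubgroup.closure P := rfl
    rw [← AddSubgroup.mem_toAddSubmonoid, AddSubgroup.closure_toAddSubmonoid] at hb'
    have hneg : -P ⊆ P := by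
      intro x hx
      have := hP.2.1 _ hx
      simpa using this
    rwa [Set.union_eq_self_of_subset_right hneg] at hb'
  obtain ⟨s, hs, rfl⟩ := AddSubmonoid.exists_multiset_of_mem_closure h2
  exact key _ s rfl hs hb

lemma RS.sub_system {B : V →ₗ[ℝ] V →ₗ[ℝ] ℝ} {Q P : Set V} (hQ : RS B Q)
    (hP : IsClosedSymmetricSubsystem Q P) : RS B P where
  symm := hQ.symm
  pos := hQ.pos
  fin := hQ.fin.subset hP.1
  zero := fun h => hQ.zero (hP.1 h)
  neg := hP.2.1
  sub := fun a ha b hb hab h => by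
    have := hQ.sub a (hP.1 ha) b (hP.1 hb) hab h
    rw [sub_eq_add_neg] at this ⊢
    exact hP.2.2 a ha _ (hP.2.1 b hb) this
  refl := fun a ha b hb => by
    obtain ⟨n, h1, h2⟩ := hQ.refl a (hP.1 ha) b (hP.1 hb)
    refine ⟨n, h1, closure_inter hQ hP h2 ?_⟩
    exact sub_mem (AddSubgroup.subset_closure ha)
      (zsmul_mem (AddSubgroup.subset_closure hb) n)
  indep := fun u hu w hw => hQ.indep u (Submodule.span_mono hP.1 hu) w (Submodule.span_mono hP.1 hw)

lemma RS.linInd {B : V →ₗ[ℝ] V →ₗ[ℝ] ℝ} {Q : Set V} (hQ : RS B Q) {S : Set V} (hS : S ⊆ Q)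
    (h : LinearIndependent ℝ (Subtype.val : S → V)) :
    LinearIndependent ℂ (Subtype.val : S → V) := by
  rw [linearIndependent_iff'] at h ⊢
  intro s g hg i hi
  have hmem : ∀ r : S → ℝ, ∑ i ∈ s, r i • (i : V) ∈ Submodule.span ℝ Q := fun r =>
    Submodule.sum_mem _ fun i _ => Submodule.smul_mem _ _ (Submodule.subset_span (hS i.2))
  have hdec : ∑ i ∈ s, (g i).re • (i : V) + Complex.I • ∑ i ∈ s, (g i).im • (i : V) = 0 := by
    rw [← hg, Finset.smul_sum, ← Finset.sum_add_distrib]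
    refine Finset.sum_congr rfl fun i _ => ?_
    conv_rhs => rw [← Complex.re_add_im (g i), add_smul, mul_comm, mul_smul]
    rfl
  have h1 := hQ.indep _ (hmem _) _ (hmem _) hdec
  rw [h1, zero_add, smul_eq_zero_iff_right Complex.I_ne_zero] at hdec
  exact Complex.ext (h s _ h1 i hi) (h s _ hdec i hi)

lemma exists_pos_functional {B : V →ₗ[ℝ] V →ₗ[ℝ] ℝ} {Q : Set V} (hQ : RS B Q) (x : V →ₗ[ℝ] ℝ) :
    ∃ h : V →ₗ[ℝ] ℝ, (∀ b ∈ Q, h b ≠ 0) ∧ ∀ b ∈ Q, 0 < h b → 0 ≤ x b := by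
  have := hQ.fin.to_subtype
  obtain ⟨g, hg⟩ := Module.exists_dual_forall_apply_ne_zero (K := ℝ) (fun b : Q => (b : V))
    (fun b hb => hQ.zero (by rw [← hb]; exact b.2))
  have hK : ∀ b ∈ Q, ∃ K : ℝ, 0 ≤ K ∧ (x b ≠ 0 → |g b| < K * |x b|) := by
    intro b _
    by_cases hx : x b = 0
    · exact ⟨0, le_rfl, fun h => absurd hx h⟩
    · have : 0 < |x b| := abs_pos.2 hx
      refine ⟨(|g b| + 1) / |x b|, by positivity, fun _ => ?_⟩
      rw [div_mul_cancel₀ _ this.ne']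
      linarith
  choose! K hK0 hK using hK
  let M := ∑ b ∈ hQ.fin.toFinset, K b
  have hM : ∀ b ∈ Q, K b ≤ M := fun b hb =>
    Finset.single_le_sum (f := K) (fun i hi => hK0 i (hQ.fin.mem_toFinset.1 hi))
      (hQ.fin.mem_toFinset.2 hb)
  have hM' : ∀ b ∈ Q, x b ≠ 0 → |g b| < M * |x b| := fun b hb hx =>
    (hK b hb hx).trans_le (mul_le_mul_of_nonneg_right (hM b hb) (abs_nonneg _))
  refine ⟨M • x + g, ?_, ?_⟩
  · intro b hb h0
    by_cases hx : x b = 0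
    · exact hg ⟨b, hb⟩ (by simpa [hx] using h0)
    · have := hM' b hb hx
      simp at h0
      have hM0 : 0 ≤ M := (hK0 b hb).trans (hM b hb)
      have h1 : g b = -(M * x b) := by linarith
      rw [h1, abs_neg, abs_mul, abs_of_nonneg hM0] at this
      exact lt_irrefl _ this
  · intro b hb h0
    by_contra! hx
    have := hM' b hb hx.ne
    simp at h0
    rw [abs_of_neg hx] at this
    have := le_abs_self (g b)
    linarith

lemma finset_induct {Q : Set V} (hQ : Q.Finite) (h : V → ℝ) (p : V → Prop)
    (H : ∀ b ∈ Q, (∀ c ∈ Q, h c < h b → p c) → p b) : ∀ b ∈ Q, p b := by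
  intro b hb
  by_contra hcon
  obtain ⟨c, hc, hmin⟩ := Set.exists_min_image {b ∈ Q | ¬ p b} h (hQ.subset fun x hx => hx.1)
    ⟨b, hb, hcon⟩
  refine hc.2 (H c hc.1 fun d hd hlt => ?_)
  by_contra hpd
  exact absurd (hmin d ⟨hd, hpd⟩) (not_le.2 hlt)

lemma closure_repr {S : Set V} {b : V} (hb : b ∈ AddSubmonoid.closure S) :
    ∃ c : V →₀ ℤ, (c.support : Set V) ⊆ S ∧ b = c.sum (fun v n => n • v) ∧ ∀ v, 0 ≤ c v := by
  classical
  induction hb using AddSubmonoid.closure_induction with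
  | mem x hx =>
    refine ⟨Finsupp.single x 1, ?_, ?_, ?_⟩
    · intro y hy
      have := Finsupp.support_single_subset hy
      simp at this
      rwa [this]
    · simp
    · intro v
      rw [Finsupp.single_apply]; split_ifs <;> simp
  | zero => exact ⟨0, by simp, by simp, by simp⟩
  | add x y _ _ hx hy =>
    obtain ⟨c, h1, h2, h3⟩ := hx
    obtain ⟨d, g1, g2, g3⟩ := hy
    refine ⟨c + d, ?_, ?_, ?_⟩
    · intro v hv
      rcases Finset.mem_union.1 (Finsupp.support_add hv) with h | h
      · exact h1 h
      · exact g1 h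
    · rw [Finsupp.sum_add_index' (by simp) (by intros; rw [add_smul]), ← h2, ← g2]
    · intro v; exact add_nonneg (h3 v) (g3 v)

lemma exists_base {B : V →ₗ[ℝ] V →ₗ[ℝ] ℝ} {Q : Set V} (hQ : RS B Q) (x : V →ₗ[ℝ] ℝ) :
    ∃ S w h, BD B Q S w h ∧ ∀ a ∈ S, 0 ≤ x a := by
  classical
  obtain ⟨h, hne, hx⟩ := exists_pos_functional hQ x
  let S : Finset V := hQ.fin.toFinset.filter
    (fun a => 0 < h a ∧ ∀ b ∈ Q, ∀ c ∈ Q, 0 < h b → 0 < h c → a ≠ b + c)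
  have hS : ∀ a, a ∈ S ↔ a ∈ Q ∧ 0 < h a ∧ ∀ b ∈ Q, ∀ c ∈ Q, 0 < h b → 0 < h c → a ≠ b + c := by
    intro a; simp [S]
  have hSQ : (S : Set V) ⊆ Q := fun a ha => ((hS a).1 ha).1
  have hcl : ∀ b ∈ Q, 0 < h b → b ∈ AddSubmonoid.closure (S : Set V) := by
    refine finset_induct hQ.fin h _ ?_
    intro b hb ih hhb
    by_cases hbS : b ∈ S
    · exact AddSubmonoid.subset_closure hbS
    · rw [hS] at hbS
      push Not at hbS
      obtain ⟨c, hc, d, hd, hhc, hhd, rfl⟩ := hbS hb hhb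
      rw [map_add] at ih
      exact add_mem (ih c hc (by linarith) hhc) (ih d hd (by linarith) hhd)
  have hmem : ∀ b ∈ Q, b ∈ AddSubmonoid.closure (S : Set V) ∨
      -b ∈ AddSubmonoid.closure (S : Set V) := by
    intro b hb
    rcases lt_or_gt_of_ne (hne b hb) with h1 | h1
    · right; exact hcl _ (hQ.neg b hb) (by simpa using h1)
    · left; exact hcl b hb h1
  have hobt : ∀ a ∈ S, ∀ b ∈ S, a ≠ b → B a b ≤ 0 := by
    intro a ha b hb hab
    by_contra! hpos
    have h1 := hQ.sub a (hSQ ha) b (hSQ hb) hab hpos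
    have ha' := (hS a).1 ha
    have hb' := (hS b).1 hb
    rcases lt_or_gt_of_ne (hne _ h1) with h2 | h2
    · refine hb'.2.2 a ha'.1 (-(a - b)) (hQ.neg _ h1) ha'.2.1 (by rw [map_neg]; linarith) (by abel)
    · refine ha'.2.2 b hb'.1 (a - b) h1 hb'.2.1 h2 (by abel)
  have hLI : LinearIndependent ℝ (Subtype.val : ↥(S : Set V) → V) := by
    refine LinearMap.BilinForm.linearIndependent_of_pairwise_le_zero B ?_ h _ ?_ ?_
    · intro v hv
      exact hQ.pos v hv
    · intro i; exact ((hS i).1 i.2).2.1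
    · intro i j hij
      exact hobt i i.2 j j.2 (fun h => hij (Subtype.ext h))
  have hLC := hQ.linInd hSQ hLI
  have hw : ∀ a ∈ S, ∃ w : V →ₗ[ℝ] ℝ, ∀ b ∈ S, w b = if a = b then 1 else 0 := by
    intro a ha
    have hLI2 : LinearIndepOn ℝ id (S : Set V) := hLI
    let bs := Module.Basis.extend hLI2
    refine ⟨bs.coord ⟨a, hLI2.subset_extend _ ha⟩, fun b hb => ?_⟩
    have : bs ⟨b, hLI2.subset_extend _ hb⟩ = b := Module.Basis.extend_apply_self _ _
    conv_lhs => rw [← this]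
    rw [Module.Basis.coord_apply, Module.Basis.repr_self, Finsupp.single_apply]
    simp [eq_comm]
  choose! w hw using hw
  refine ⟨S, w, h, ⟨hSQ, fun a ha => ((hS a).1 ha).2.1,
    fun a ha => by simp [hw a ha a ha], fun a ha b hb hab => by simp [hw a ha b hb, hab], hmem, hobt,
    fun a ha => ((hS a).1 ha).2.2, ⟨hSQ, hLC, ?_⟩⟩, fun a ha => hx a (hSQ ha) ((hS a).1 ha).2.1⟩
  intro q hq
  rcases hmem q hq with h1 | h1
  · obtain ⟨c, c1, c2, c3⟩ := closure_repr h1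
    exact ⟨c, c1, c2, Or.inl c3⟩
  · obtain ⟨c, c1, c2, c3⟩ := closure_repr h1
    refine ⟨-c, by simpa using c1, ?_, Or.inr (by simpa using c3)⟩
    rw [Finsupp.sum_neg_index (by simp)]
    simp only [neg_smul]
    rw [Finsupp.sum_neg, ← c2, neg_neg]


section base
variable {B : V →ₗ[ℝ] V →ₗ[ℝ] ℝ} {Q : Set V} {S : Finset V} {w : V → V →ₗ[ℝ] ℝ}
    {h : V →ₗ[ℝ] ℝ}

lemma BD.w_sum (d : BD B Q S w h) {a : V} (ha : a ∈ S) (r : V → ℝ) :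
    w a (∑ b ∈ S, r b • b) = r a := by
  rw [map_sum, Finset.sum_eq_single a]
  · simp [d.hw1 a ha]
  · intro b hb hba
    simp [d.hw0 a ha b hb hba.symm]
  · intro h; exact absurd ha h

lemma BD.expand (d : BD B Q S w h) {v : V} (hv : v ∈ AddSubmonoid.closure (S : Set V)) :
    v = ∑ a ∈ S, w a v • a := by
  classical
  induction hv using AddSubmonoid.closure_induction with
  | mem x hx =>
    rw [Finset.sum_eq_single x]
    · simp [d.hw1 x hx]
    · intro b hb hbx
      simp [d.hw0 b hb x hx hbx]
    · intro h; exact absurd hx h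
  | zero => simp
  | add x y _ _ hx hy =>
    simp only [map_add, add_smul, Finset.sum_add_distrib]
    rw [← hx, ← hy]

lemma BD.wnat (d : BD B Q S w h) {v : V} (hv : v ∈ AddSubmonoid.closure (S : Set V)) {a : V}
    (ha : a ∈ S) : ∃ k : ℕ, w a v = k := by
  induction hv using AddSubmonoid.closure_induction with
  | mem x hx =>
    by_cases hax : a = x
    · subst hax; exact ⟨1, by simp [d.hw1 a ha]⟩
    · exact ⟨0, by simp [d.hw0 a ha x hx hax]⟩
  | zero => exact ⟨0, by simp⟩
  | add x y _ _ hx hy =>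
    obtain ⟨k, hk⟩ := hx
    obtain ⟨l, hl⟩ := hy
    exact ⟨k + l, by simp [hk, hl]⟩

lemma BD.wnonneg (d : BD B Q S w h) {v : V} (hv : v ∈ AddSubmonoid.closure (S : Set V)) {a : V}
    (ha : a ∈ S) : 0 ≤ w a v := by
  obtain ⟨k, hk⟩ := d.wnat hv ha
  rw [hk]; positivity

lemma BD.apply (d : BD B Q S w h) {v : V} (hv : v ∈ AddSubmonoid.closure (S : Set V))
    (f : V →ₗ[ℝ] ℝ) : f v = ∑ a ∈ S, w a v * f a := by
  conv_lhs => rw [d.expand hv]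
  simp

lemma BD.lower (d : BD B Q S w h) {v : V} (hv : v ∈ AddSubmonoid.closure (S : Set V))
    (f : V →ₗ[ℝ] ℝ) (hf : ∀ a ∈ S, 0 ≤ f a) {a : V} (ha : a ∈ S) : w a v * f a ≤ f v := by
  rw [d.apply hv f]
  exact Finset.single_le_sum (f := fun a => w a v * f a)
    (fun i hi => mul_nonneg (d.wnonneg hv hi) (hf i hi)) ha

lemma BD.fnonneg (d : BD B Q S w h) {v : V} (hv : v ∈ AddSubmonoid.closure (S : Set V))
    (f : V →ₗ[ℝ] ℝ) (hf : ∀ a ∈ S, 0 ≤ f a) : 0 ≤ f v := by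
  rw [d.apply hv f]
  exact Finset.sum_nonneg fun i hi => mul_nonneg (d.wnonneg hv hi) (hf i hi)

lemma BD.wint (d : BD B Q S w h) {v : V} (hv : v ∈ Q) {a : V}
    (ha : a ∈ S) : ∃ k : ℤ, w a v = k := by
  rcases d.mem v hv with h1 | h1
  · obtain ⟨k, hk⟩ := d.wnat h1 ha
    exact ⟨k, by simpa using hk⟩
  · obtain ⟨k, hk⟩ := d.wnat h1 ha
    refine ⟨-k, ?_⟩
    rw [map_neg] at hk
    push_cast
    linarith

lemma BD.w_finsupp (d : BD B Q S w h) {a : V} (ha : a ∈ S) (c : V →₀ ℤ)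
    (hc : (c.support : Set V) ⊆ (S : Set V)) : w a (c.sum (fun v n => n • v)) = c a := by
  rw [Finsupp.sum_of_support_subset c (Finset.coe_subset.1 hc) _ (by simp), map_sum,
    Finset.sum_eq_single a]
  · simp [d.hw1 a ha]
  · intro b hb hba
    simp [d.hw0 a ha b hb hba.symm]
  · intro h; exact absurd ha h

lemma BD.step (d : BD B Q S w h) {a : V} (ha : a ∈ S) (n : ℕ) :
    LeviStep Q {b ∈ Q | ∃ k : ℤ, w a b = n * k} ∨ DynkinStep Q {b ∈ Q | ∃ k : ℤ, w a b = n * k} := by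
  rcases Nat.eq_zero_or_pos n with rfl | hn
  · left
    refine ⟨S, S \ {a}, d.simple, Set.sdiff_subset, ?_⟩
    ext b
    simp only [Set.mem_ofPred_eq]
    refine and_congr_right fun hb => ?_
    constructor
    · rintro ⟨k, hk⟩
      obtain ⟨c, hc, hbc, -⟩ := d.simple.2.2 b hb
      have h1 := d.w_finsupp ha c hc
      rw [← hbc, hk] at h1
      have h2 : c a = 0 := by exact_mod_cast (by simpa using h1.symm : (c a : ℝ) = 0)
      rw [hbc]
      refine sum_mem fun v hv => ?_
      have hva : v ∈ (S : Set V) \ {a} := by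
        refine ⟨hc hv, ?_⟩
        rintro rfl
        exact (Finsupp.mem_support_iff.1 hv) h2
      exact zsmul_mem (AddSubgroup.subset_closure hva) _
    · intro hb2
      refine ⟨0, ?_⟩
      have : AddSubgroup.closure ((S : Set V) \ {a}) ≤ (w a).toAddMonoidHom.ker := by
        rw [AddSubgroup.closure_le]
        rintro x ⟨hx, hxa⟩
        exact d.hw0 a ha x hx (fun h => hxa h.symm)
      simpa using (AddMonoidHom.mem_ker.1 (this hb2) : w a b = 0)
  · right
    refine ⟨S, d.simple, a, ha, n, hn, ?_⟩
    ext b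
    simp only [Set.mem_ofPred_eq]
    refine and_congr_right fun hb => ?_
    constructor
    · rintro ⟨k, hk⟩
      obtain ⟨c, hc, hbc, -⟩ := d.simple.2.2 b hb
      refine ⟨c, hc, hbc, k, ?_⟩
      have h1 := d.w_finsupp ha c hc
      rw [← hbc, hk] at h1
      exact_mod_cast h1.symm
    · rintro ⟨c, hc, hbc, k, hk⟩
      refine ⟨k, ?_⟩
      have h1 := d.w_finsupp ha c hc
      rw [← hbc, hk] at h1
      exact_mod_cast h1

lemma step_closed {O : Set V} (hQ : IsClosedSymmetricSubsystem O Q) (f : V →ₗ[ℝ] ℝ) (n : ℕ) :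
    IsClosedSymmetricSubsystem O {b ∈ Q | ∃ k : ℤ, f b = n * k} := by
  refine ⟨fun b hb => hQ.1 hb.1, ?_, ?_⟩
  · rintro b ⟨hb, k, hk⟩
    exact ⟨hQ.2.1 b hb, -k, by simp [hk]⟩
  · rintro b ⟨hb, k, hk⟩ c ⟨hc, l, hl⟩ hbc
    exact ⟨hQ.2.2 b hb c hc hbc, k + l, by simp [hk, hl]; ring⟩

/-- positive roots are reached by adding simple roots -/
lemma BD.pos_induct (hQ : RS B Q) (d : BD B Q S w h) (p : V → Prop) (h1 : ∀ a ∈ S, p a)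
    (h2 : ∀ b ∈ Q, b ∈ AddSubmonoid.closure (S : Set V) → ∀ a ∈ S, b + a ∈ Q → p b → p (b + a)) :
    ∀ b ∈ Q, b ∈ AddSubmonoid.closure (S : Set V) → p b := by
  refine finset_induct hQ.fin h _ ?_
  intro b hb ih hbc
  have hb0 : b ≠ 0 := fun h => hQ.zero (h ▸ hb)
  have hpos := hQ.pos b hb0
  have : ∃ a ∈ S, 0 < B b a := by
    by_contra! hcon
    rw [d.apply hbc] at hpos
    have : ∑ a ∈ S, w a b * B b a ≤ 0 :=
      Finset.sum_nonpos fun i hi => mul_nonpos_of_nonneg_of_nonpos (d.wnonneg hbc hi) (hcon i hi)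
    linarith
  obtain ⟨a, ha, hBa⟩ := this
  by_cases hba : b = a
  · rw [hba]; exact h1 a ha
  have hsub := hQ.sub b hb a (d.sub ha) hba hBa
  have hs0 : b - a ≠ 0 := sub_ne_zero.2 hba
  have hhp : ∀ v ∈ Q, v ∈ AddSubmonoid.closure (S : Set V) → 0 < h v := by
    intro v hv hvc
    have h0 := d.fnonneg hvc h (fun a ha => (d.hpos a ha).le)
    rcases h0.lt_or_eq with h3 | h3
    · exact h3
    · exfalso
      have hz : ∀ a ∈ S, w a v = 0 := by
        intro a ha
        have h5 := d.lower hvc h (fun a ha => (d.hpos a ha).le) ha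
        have h6 := d.wnonneg hvc ha
        have h7 := d.hpos a ha
        rw [← h3] at h5
        nlinarith
      have := d.expand hvc
      rw [Finset.sum_eq_zero (fun a ha => by rw [hz a ha, zero_smul])] at this
      exact hQ.zero (this ▸ hv)
  have hc : b - a ∈ AddSubmonoid.closure (S : Set V) := by
    rcases d.mem _ hsub with h3 | h3
    · exact h3
    · exfalso
      exact d.indec a ha b hb (-(b - a)) (hQ.neg _ hsub) (hhp b hb hbc)
        (hhp _ (hQ.neg _ hsub) h3) (by abel)
  have := h2 (b - a) hsub hc a ha (by simpa using hb)
    (ih _ hsub (by rw [map_sub]; linarith [d.hpos a ha]) hc)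
  simpa using this

/-- dominant roots above -/
lemma BD.exists_max (hQ : RS B Q) (d : BD B Q S w h) {b : V} (hb : b ∈ Q)
    (hbc : b ∈ AddSubmonoid.closure (S : Set V)) :
    ∃ t ∈ Q, t ∈ AddSubmonoid.closure (S : Set V) ∧ t - b ∈ AddSubmonoid.closure (S : Set V) ∧
      ∀ a ∈ S, 0 ≤ B t a := by
  obtain ⟨t, ⟨ht, htb⟩, hmax⟩ := Set.exists_max_image
    {t ∈ Q | t - b ∈ AddSubmonoid.closure (S : Set V)} h (hQ.fin.subset fun x hx => hx.1)
    ⟨b, hb, by simp⟩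
  have htc : t ∈ AddSubmonoid.closure (S : Set V) := by
    have := add_mem htb hbc
    simpa using this
  refine ⟨t, ht, htc, htb, ?_⟩
  intro a ha
  by_contra! hneg
  have hta : t ≠ -a := by
    intro h1
    have h2 := d.wnonneg htc ha
    rw [h1, map_neg, d.hw1 a ha] at h2
    linarith
  have h1 := hQ.sub t ht (-a) (hQ.neg a (d.sub ha)) hta (by simpa using hneg)
  rw [sub_neg_eq_add] at h1
  have h2 := hmax (t + a) ⟨h1, by
    have := add_mem htb (AddSubmonoid.subset_closure (show a ∈ (S : Set V) from ha))
    convert this using 1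
    abel⟩
  rw [map_add] at h2
  linarith [d.hpos a ha]

lemma BD.supp (hQ : RS B Q) (d : BD B Q S w h) {t : V}
    (htc : t ∈ AddSubmonoid.closure (S : Set V)) (hdom : ∀ a ∈ S, 0 ≤ B t a) :
    ∀ b ∈ Q, b ∈ AddSubmonoid.closure (S : Set V) →
      (∀ a ∈ S, 0 < w a b → 0 < w a t) ∨ (∀ a ∈ S, 0 < w a b → w a t = 0) := by
  have horth : ∀ k ∈ S, w k t = 0 → ∀ a ∈ S, 0 < w a t → B a k = 0 := by
    intro k hk hkt a ha hat
    have h1 := hdom k hk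
    rw [hQ.symm, d.apply htc] at h1
    have h2 : ∀ i ∈ S, w i t * B k i ≤ 0 := by
      intro i hi
      by_cases hik : i = k
      · subst hik; simp [hkt]
      · exact mul_nonpos_of_nonneg_of_nonpos (d.wnonneg htc hi) (d.obt k hk i hi (Ne.symm hik))
    have h3 : ∑ i ∈ S, w i t * B k i = 0 := le_antisymm (Finset.sum_nonpos h2) h1
    have h4 := (Finset.sum_eq_zero_iff_of_nonpos h2).1 h3 a ha
    rw [hQ.symm]
    exact (mul_eq_zero.1 h4).resolve_left hat.ne'
  have step : ∀ b ∈ Q, b ∈ AddSubmonoid.closure (S : Set V) → ∀ k ∈ S, b + k ∈ Q →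
      w k b = 0 → (∀ a ∈ S, 0 < w a b → B a k = 0) → False := by
    intro b hb hbc k hk hbk hkb ho
    have h1 : B b k = 0 := by
      rw [hQ.symm, d.apply hbc]
      refine Finset.sum_eq_zero fun i hi => ?_
      rcases (d.wnonneg hbc hi).lt_or_eq with h2 | h2
      · rw [hQ.symm, ho i hi h2, mul_zero]
      · rw [← h2, zero_mul]
    have hk0 : k ≠ 0 := fun h => hQ.zero (h ▸ d.sub hk)
    have hkk := hQ.pos k hk0
    obtain ⟨n, hn, hmem⟩ := hQ.refl _ hbk k (d.sub hk)
    rw [map_add, LinearMap.add_apply, h1, zero_add] at hn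
    have hn2 : n = 2 := by exact_mod_cast (mul_right_cancel₀ hkk.ne' hn).symm
    subst hn2
    have h3 : b + k - (2 : ℤ) • k = b - k := by rw [two_zsmul]; abel
    rw [h3] at hmem
    rcases d.mem _ hmem with h4 | h4
    · have := d.wnonneg h4 hk
      rw [map_sub, hkb, d.hw1 k hk] at this
      linarith
    · have hz : ∀ a ∈ S, w a b = 0 := by
        intro a ha
        by_cases hak : a = k
        · rw [hak, hkb]
        · have h5 := d.wnonneg h4 ha
          rw [map_neg, map_sub, d.hw0 a ha k hk hak] at h5
          linarith [d.wnonneg hbc ha]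
      have := d.expand hbc
      rw [Finset.sum_eq_zero (fun a ha => by rw [hz a ha, zero_smul])] at this
      exact hQ.zero (this ▸ hb)
  refine d.pos_induct hQ _ ?_ ?_
  · intro a ha
    have h1 : ∀ c ∈ S, 0 < w c a → c = a := by
      intro c hc hca
      by_contra hne
      rw [d.hw0 c hc a ha hne] at hca
      exact lt_irrefl _ hca
    rcases (d.wnonneg htc ha).lt_or_eq with h2 | h2
    · left; intro c hc hca; rw [h1 c hc hca]; exact h2
    · right; intro c hc hca; rw [h1 c hc hca]; exact h2.symm
  · intro b hb hbc k hk hbk hp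
    have h1 : ∀ c ∈ S, 0 < w c (b + k) → c = k ∨ 0 < w c b := by
      intro c hc hca
      by_cases hck : c = k
      · exact Or.inl hck
      · right; rwa [map_add, d.hw0 c hc k hk hck, add_zero] at hca
    rcases (d.wnonneg htc hk).lt_or_eq with h2 | h2 <;> rcases hp with hp | hp
    · left; intro c hc hca
      rcases h1 c hc hca with rfl | h3
      · exact h2
      · exact hp c hc h3
    · exfalso
      refine step b hb hbc k hk hbk ?_ ?_
      · rcases (d.wnonneg hbc hk).lt_or_eq with h3 | h3
        · have := hp k hk h3; linarith
        · exact h3.symm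
      · intro a ha hab
        rw [hQ.symm]
        exact horth a ha (hp a ha hab) k hk h2
    · exfalso
      refine step b hb hbc k hk hbk ?_ ?_
      · rcases (d.wnonneg hbc hk).lt_or_eq with h3 | h3
        · have := hp k hk h3; linarith
        · exact h3.symm
      · intro a ha hab
        exact horth k hk h2.symm a ha (hp a ha hab)
    · right; intro c hc hca
      rcases h1 c hc hca with rfl | h3
      · exact h2.symm
      · exact hp c hc h3

/-- uniqueness of coefficients at level one -/
lemma BD.uniq (hQ : RS B Q) (d : BD B Q S w h) (x : V →ₗ[ℝ] ℝ) (hx : ∀ a ∈ S, 0 ≤ x a)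
    (hx1 : ∀ b ∈ Q, x b ≤ 1) {b c : V} (hb : b ∈ Q) (hbc : b ∈ AddSubmonoid.closure (S : Set V))
    (hc : c ∈ Q) (hcc : c ∈ AddSubmonoid.closure (S : Set V)) (hxb : x b = 1) (hxc : x c = 1)
    {a : V} (ha : a ∈ S) (hab : 0 < w a b) (hac : 0 < w a c) :
    ∀ e ∈ S, 0 < x e → w e b = w e c := by
  obtain ⟨t, htQ, htc, htb, htd⟩ := d.exists_max hQ hb hbc
  obtain ⟨u, huQ, huc, hub, hud⟩ := d.exists_max hQ hc hcc
  have hzero : ∀ v ∈ AddSubmonoid.closure (S : Set V), x v = 0 → ∀ e ∈ S, 0 < x e → w e v = 0 := by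
    intro v hv hxv e he hxe
    have h1 := d.lower hv x hx he
    have h2 := d.wnonneg hv he
    rw [hxv] at h1
    nlinarith
  have hxt : x t = 1 := by
    have := d.fnonneg htb x hx
    rw [map_sub] at this
    linarith [hx1 t htQ]
  have hxu : x u = 1 := by
    have := d.fnonneg hub x hx
    rw [map_sub] at this
    linarith [hx1 u huQ]
  have htb' : ∀ e ∈ S, 0 < x e → w e t = w e b := by
    intro e he hxe
    have := hzero _ htb (by rw [map_sub]; linarith) e he hxe
    rw [map_sub] at this; linarith
  have huc' : ∀ e ∈ S, 0 < x e → w e u = w e c := by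
    intro e he hxe
    have := hzero _ hub (by rw [map_sub]; linarith) e he hxe
    rw [map_sub] at this; linarith
  have hat : 0 < w a t := by
    have := d.wnonneg htb ha
    rw [map_sub] at this; linarith
  have hau : 0 < w a u := by
    have := d.wnonneg hub ha
    rw [map_sub] at this; linarith
  suffices ∀ e ∈ S, 0 < x e → w e t = w e u by
    intro e he hxe
    rw [← htb' e he hxe, ← huc' e he hxe, this e he hxe]
  intro e he hxe
  by_cases htu : t = u
  · rw [htu]
  have hBnn : 0 ≤ B t u := d.fnonneg huc (B t) htd
  rcases hBnn.lt_or_eq with h1 | h1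
  · have h2 := hQ.sub t htQ u huQ htu h1
    rcases d.mem _ h2 with h3 | h3
    · have := hzero _ h3 (by rw [map_sub]; linarith) e he hxe
      rw [map_sub] at this; linarith
    · have := hzero _ h3 (by rw [map_neg, map_sub]; linarith) e he hxe
      rw [map_neg, map_sub] at this; linarith
  · exfalso
    have h2 : ∀ i ∈ S, 0 < w i u → B t i = 0 := by
      intro i hi hiu
      have h3 := d.lower huc (B t) htd hi
      have h4 := htd i hi
      rw [← h1] at h3
      nlinarith
    have h3 : ∀ i ∈ S, 0 < w i t → 0 < w i u := by
      rcases d.supp hQ huc hud t htQ htc with h4 | h4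
      · exact h4
      · have := h4 a ha hat; linarith
    have h4 : B t t = 0 := by
      rw [d.apply htc]
      refine Finset.sum_eq_zero fun i hi => ?_
      rcases (d.wnonneg htc hi).lt_or_eq with h5 | h5
      · rw [h2 i hi (h3 i hi h5), mul_zero]
      · rw [← h5, zero_mul]
    have := hQ.pos t (fun h => hQ.zero (h ▸ htQ))
    linarith

end base

section main
variable {B : V →ₗ[ℝ] V →ₗ[ℝ] ℝ} {Q P : Set V}

lemma exists_level (hQ : RS B Q) (hP : IsClosedSymmetricSubsystem Q P) {q : V} (hq : q ∈ Q)
    (hqP : q ∉ P) : ∃ x : V →ₗ[ℝ] ℝ, (∀ b ∈ P, ∃ k : ℤ, x b = k) ∧ (¬ ∃ k : ℤ, x q = k) ∧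
      ∃ D : ℕ, 0 < D ∧ ∀ b ∈ Q, ∃ k : ℤ, D * x b = k := by
  classical
  obtain ⟨S, w, h, d, -⟩ := exists_base hQ 0
  have hqc : q ∉ AddSubgroup.closure P := fun hc => hqP (closure_inter hQ hP hq hc)
  have hne : (QuotientAddGroup.mk q : V ⧸ AddSubgroup.closure P) ≠ 0 := by
    rwa [Ne, QuotientAddGroup.eq_zero_iff]
  obtain ⟨c, hc⟩ := CharacterModule.exists_character_apply_ne_zero_of_ne_zero hne
  let χ : V →+ AddCircle (1 : ℚ) :=
    AddMonoidHom.comp (c : _ →+ AddCircle (1 : ℚ)) (QuotientAddGroup.mk' (AddSubgroup.closure P))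
  have hχq : χ q ≠ 0 := hc
  have hχP : ∀ b ∈ P, χ b = 0 := by
    intro b hb
    have : (QuotientAddGroup.mk' (AddSubgroup.closure P)) b = 0 := by
      rw [QuotientAddGroup.mk'_apply, QuotientAddGroup.eq_zero_iff]
      exact AddSubgroup.subset_closure hb
    have h2 : χ b = (c : _ →+ AddCircle (1 : ℚ)) ((QuotientAddGroup.mk' (AddSubgroup.closure P)) b) := rfl
    rw [h2, this]
    exact map_zero _
  have hr : ∀ a : V, ∃ r : ℚ, (r : AddCircle (1 : ℚ)) = χ a := fun a =>
    QuotientAddGroup.mk_surjective (χ a)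
  choose r hr using hr
  let x : V →ₗ[ℝ] ℝ := ∑ a ∈ S, (r a : ℝ) • w a
  have hxS : ∀ a ∈ S, x a = r a := by
    intro a ha
    simp only [x, LinearMap.sum_apply, LinearMap.smul_apply, smul_eq_mul]
    rw [Finset.sum_eq_single a]
    · simp [d.hw1 a ha]
    · intro b hb hba
      simp [d.hw0 b hb a ha hba]
    · intro h; exact absurd ha h
  let D : ℕ := ∏ a ∈ S, (r a).den
  have hD : 0 < D := Finset.prod_pos fun a _ => (r a).den_pos
  have hcl : ∀ v ∈ AddSubmonoid.closure (S : Set V), ∃ y : ℚ, x v = y ∧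
      (y : AddCircle (1 : ℚ)) = χ v ∧ ∃ k : ℤ, D * y = k := by
    intro v hv
    induction hv using AddSubmonoid.closure_induction with
    | mem a ha =>
      refine ⟨r a, hxS a ha, hr a, ?_⟩
      obtain ⟨m, hm⟩ := Finset.dvd_prod_of_mem (fun a => (r a).den) ha
      refine ⟨m * (r a).num, ?_⟩
      have h1 : (D : ℚ) = (r a).den * m := by exact_mod_cast hm
      rw [h1]
      push_cast
      rw [← Rat.mul_den_eq_num (r a)]
      ring
    | zero => exact ⟨0, by simp, by simp, 0, by simp⟩
    | add u v _ _ hu hv =>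
      obtain ⟨y, h1, h2, k, h3⟩ := hu
      obtain ⟨z, g1, g2, l, g3⟩ := hv
      refine ⟨y + z, by simp [h1, g1], by simp [h2, g2], k + l, ?_⟩
      push_cast
      rw [mul_add, h3, g3]
  have hclQ : ∀ v ∈ Q, ∃ y : ℚ, x v = y ∧
      (y : AddCircle (1 : ℚ)) = χ v ∧ ∃ k : ℤ, D * y = k := by
    intro v hv
    rcases d.mem v hv with h1 | h1
    · exact hcl v h1
    · obtain ⟨y, h1, h2, k, h3⟩ := hcl _ h1
      rw [map_neg] at h1 h2
      refine ⟨-y, by push_cast; linarith, by simp [h2], -k, by push_cast; linarith⟩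
  refine ⟨x, ?_, ?_, D, hD, ?_⟩
  · intro b hb
    obtain ⟨y, h1, h2, -⟩ := hclQ b (hP.1 hb)
    rw [hχP b hb, AddCircle.coe_eq_zero_iff] at h2
    obtain ⟨n, hn⟩ := h2
    refine ⟨n, ?_⟩
    rw [h1, ← hn]; simp
  · rintro ⟨k, hk⟩
    obtain ⟨y, h1, h2, -⟩ := hclQ q hq
    apply hχq
    rw [← h2, AddCircle.coe_eq_zero_iff]
    refine ⟨k, ?_⟩
    rw [h1] at hk
    have : y = k := by exact_mod_cast hk
    rw [this]; simp
  · intro b hb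
    obtain ⟨y, h1, -, k, h3⟩ := hclQ b hb
    refine ⟨k, ?_⟩
    rw [h1]
    exact_mod_cast h3

lemma exists_level_le (hQ : RS B Q) (hPQ : P ⊆ Q) {q : V} (hq : q ∈ Q) (D : ℕ) (hD : 0 < D) :
    ∀ M : ℕ, ∀ x : V →ₗ[ℝ] ℝ, (∀ b ∈ P, ∃ k : ℤ, x b = k) → (¬ ∃ k : ℤ, x q = k) →
      (∀ b ∈ Q, ∃ k : ℤ, D * x b = k) → (∑ b ∈ hQ.fin.toFinset, (D * x b) ^ 2 = M) →
    ∃ x : V →ₗ[ℝ] ℝ, (∀ b ∈ P, ∃ k : ℤ, x b = k) ∧ (¬ ∃ k : ℤ, x q = k) ∧ ∀ b ∈ Q, x b ≤ 1 := by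
  intro M
  induction M using Nat.strong_induction_on with
  | _ M ih =>
  intro x hx1 hx2 hx3 hM
  by_cases hall : ∀ b ∈ Q, x b ≤ 1
  · exact ⟨x, hx1, hx2, hall⟩
  push Not at hall
  obtain ⟨β, hβ, hxβ⟩ := hall
  have hβ0 : β ≠ 0 := fun h => hQ.zero (h ▸ hβ)
  have hBβ := hQ.pos β hβ0
  let l : V →ₗ[ℝ] ℝ := (2 / B β β) • B β
  have hl : ∀ v, l v = 2 * B v β / B β β := by
    intro v
    simp only [l, LinearMap.smul_apply, smul_eq_mul]
    rw [hQ.symm β v]; ring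
  have hlβ : l β = 2 := by rw [hl]; field_simp
  have hlint : ∀ b ∈ Q, ∃ n : ℤ, l b = n ∧ b - l b • β ∈ Q := by
    intro b hb
    obtain ⟨n, h1, h2⟩ := hQ.refl b hb β hβ
    have h3 : l b = n := by rw [hl, h1]; field_simp
    refine ⟨n, h3, ?_⟩
    rw [h3, Int.cast_smul_eq_zsmul]; exact h2
  have hsum : ∑ b ∈ hQ.fin.toFinset, x b * l b =
      ∑ b ∈ hQ.fin.toFinset, (x b - l b * x β) * (- l b) := by
    refine Finset.sum_nbij' (fun v => v - l v • β) (fun v => v - l v • β) ?_ ?_ ?_ ?_ ?_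
    · intro b hb
      rw [Set.Finite.mem_toFinset] at hb ⊢
      exact (hlint b hb).choose_spec.2
    · intro b hb
      rw [Set.Finite.mem_toFinset] at hb ⊢
      exact (hlint b hb).choose_spec.2
    · intro b _
      simp only [map_sub, map_smul, smul_eq_mul, hlβ]
      module
    · intro b _
      simp only [map_sub, map_smul, smul_eq_mul, hlβ]
      module
    · intro b _
      simp only [map_sub, map_smul, smul_eq_mul, hlβ]
      ring
  have hsum2 : 2 * ∑ b ∈ hQ.fin.toFinset, x b * l b =
      x β * ∑ b ∈ hQ.fin.toFinset, l b ^ 2 := by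
    have : ∑ b ∈ hQ.fin.toFinset, (x b - l b * x β) * (- l b) =
        x β * ∑ b ∈ hQ.fin.toFinset, l b ^ 2 - ∑ b ∈ hQ.fin.toFinset, x b * l b := by
      rw [Finset.mul_sum, ← Finset.sum_sub_distrib]
      refine Finset.sum_congr rfl fun b _ => by ring
    linarith
  have hlpos : 0 < ∑ b ∈ hQ.fin.toFinset, l b ^ 2 := by
    refine Finset.sum_pos' (fun i _ => sq_nonneg _) ⟨β, hQ.fin.mem_toFinset.2 hβ, ?_⟩
    rw [hlβ]; norm_num
  have hN : ∑ b ∈ hQ.fin.toFinset, (D * (x - l) b) ^ 2 =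
      ∑ b ∈ hQ.fin.toFinset, (D * x b) ^ 2 +
        D ^ 2 * ((1 - x β) * ∑ b ∈ hQ.fin.toFinset, l b ^ 2) := by
    have : ∑ b ∈ hQ.fin.toFinset, (D * (x - l) b) ^ 2 =
      ∑ b ∈ hQ.fin.toFinset, (D * x b) ^ 2 +
        D ^ 2 * (∑ b ∈ hQ.fin.toFinset, l b ^ 2 - 2 * ∑ b ∈ hQ.fin.toFinset, x b * l b) := by
      rw [Finset.mul_sum, ← Finset.sum_sub_distrib, Finset.mul_sum, ← Finset.sum_add_distrib]
      refine Finset.sum_congr rfl fun b _ => ?_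
      rw [LinearMap.sub_apply]; ring
    rw [this, hsum2]; ring
  have hint' : ∀ b ∈ Q, ∃ k : ℤ, D * (x - l) b = k := by
    intro b hb
    obtain ⟨k, hk⟩ := hx3 b hb
    obtain ⟨n, hn, -⟩ := hlint b hb
    refine ⟨k - D * n, ?_⟩
    rw [LinearMap.sub_apply, mul_sub, hk, hn]; push_cast; ring
  have hM' : ∃ M' : ℕ, ∑ b ∈ hQ.fin.toFinset, (D * (x - l) b) ^ 2 = M' := by
    choose! k hk using hint'
    refine ⟨∑ b ∈ hQ.fin.toFinset, (k b).natAbs ^ 2, ?_⟩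
    push_cast
    refine Finset.sum_congr rfl fun b hb => ?_
    rw [hk b (hQ.fin.mem_toFinset.1 hb)]
    simp
  obtain ⟨M', hM'⟩ := hM'
  have hlt : M' < M := by
    have h1 : (0 : ℝ) < D ^ 2 := by positivity
    have h2 : (1 - x β) * ∑ b ∈ hQ.fin.toFinset, l b ^ 2 < 0 :=
      mul_neg_of_neg_of_pos (by linarith) hlpos
    have h3 := mul_neg_of_pos_of_neg h1 h2
    have : (M' : ℝ) < M := by rw [← hM', ← hM, hN]; linarith
    exact_mod_cast this
  refine ih M' hlt (x - l) ?_ ?_ hint' hM'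
  · intro b hb
    obtain ⟨k, hk⟩ := hx1 b hb
    obtain ⟨n, hn, -⟩ := hlint b (hPQ hb)
    exact ⟨k - n, by simp [hk, hn]⟩
  · rintro ⟨k, hk⟩
    obtain ⟨n, hn, -⟩ := hlint q hq
    exact hx2 ⟨k + n, by rw [LinearMap.sub_apply, hn] at hk; push_cast; linarith⟩

lemma main_levi (hQ : RS B Q) (hP : IsClosedSymmetricSubsystem Q P) (f : V →ₗ[ℝ] ℝ)
    (hf : ∀ b ∈ P, f b = 0) {q : V} (hq : q ∈ Q) (hfq : f q ≠ 0) :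
    ∃ S w h, BD B Q S w h ∧ ∃ a ∈ S, ∃ n : ℕ, n ≠ 1 ∧ ∀ b ∈ P, ∃ k : ℤ, w a b = n * k := by
  obtain ⟨S, w, h, d, hS⟩ := exists_base hQ f
  have hex : ∃ a ∈ S, 0 < f a := by
    by_contra! hcon
    have h0 : ∀ v ∈ AddSubmonoid.closure (S : Set V), f v = 0 := by
      intro v hv
      rw [d.apply hv]
      refine Finset.sum_eq_zero fun i hi => ?_
      rw [le_antisymm (hcon i hi) (hS i hi), mul_zero]
    rcases d.mem q hq with h1 | h1
    · exact hfq (h0 q h1)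
    · have := h0 _ h1
      rw [map_neg, neg_eq_zero] at this
      exact hfq this
  obtain ⟨a, ha, hfa⟩ := hex
  refine ⟨S, w, h, d, a, ha, 0, by simp, ?_⟩
  have key : ∀ v ∈ AddSubmonoid.closure (S : Set V), f v = 0 → w a v = 0 := by
    intro v hv hfv
    have h1 := d.lower hv f hS ha
    have h2 := d.wnonneg hv ha
    rw [hfv] at h1
    nlinarith
  intro b hb
  refine ⟨0, ?_⟩
  rcases d.mem b (hP.1 hb) with h1 | h1
  · simpa using key b h1 (hf b hb)
  · simpa using key _ h1 (by simp [hf b hb])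

lemma main_step (hQ : RS B Q) (hP : IsClosedSymmetricSubsystem Q P) (hne : P ≠ Q) :
    ∃ S w h, BD B Q S w h ∧ ∃ a ∈ S, ∃ n : ℕ, n ≠ 1 ∧ ∀ b ∈ P, ∃ k : ℤ, w a b = n * k := by
  obtain ⟨q, hq, hqP⟩ : ∃ q ∈ Q, q ∉ P := by
    by_contra! hcon
    exact hne (Set.Subset.antisymm hP.1 hcon)
  obtain ⟨x0, g1, g2, D, hD, g3⟩ := exists_level hQ hP hq hqP
  have hM : ∃ M : ℕ, ∑ b ∈ hQ.fin.toFinset, (D * x0 b) ^ 2 = M := by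
    choose! k hk using g3
    refine ⟨∑ b ∈ hQ.fin.toFinset, (k b).natAbs ^ 2, ?_⟩
    push_cast
    refine Finset.sum_congr rfl fun b hb => ?_
    rw [hk b (hQ.fin.mem_toFinset.1 hb)]
    simp
  obtain ⟨M, hM⟩ := hM
  obtain ⟨x, hxP, hxq, hx1⟩ := exists_level_le hQ hP.1 hq D hD M x0 g1 g2 g3 hM
  obtain ⟨S, w, h, d, hS⟩ := exists_base hQ x
  -- a simple root with non-integral value
  obtain ⟨a, ha, hxa⟩ : ∃ a ∈ S, ¬ ∃ k : ℤ, x a = k := by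
    by_contra! hcon
    have h0 : ∀ v ∈ AddSubmonoid.closure (S : Set V), ∃ k : ℤ, x v = k := by
      intro v hv
      induction hv using AddSubmonoid.closure_induction with
      | mem a ha => exact hcon a ha
      | zero => exact ⟨0, by simp⟩
      | add u v _ _ hu hv =>
        obtain ⟨k, hk⟩ := hu
        obtain ⟨l, hl⟩ := hv
        exact ⟨k + l, by simp [hk, hl]⟩
    rcases d.mem q hq with h1 | h1
    · exact hxq (h0 q h1)
    · obtain ⟨k, hk⟩ := h0 _ h1
      exact hxq ⟨-k, by rw [map_neg] at hk; push_cast; linarith⟩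
  have hxa0 : 0 < x a := (hS a ha).lt_of_ne fun h0 => hxa ⟨0, by simp [← h0]⟩
  have hxa1 : x a < 1 := (hx1 a (d.sub ha)).lt_of_ne fun h0 => hxa ⟨1, by simp [h0]⟩
  -- positive elements of P have level 0 or 1
  have lev : ∀ b ∈ P, b ∈ AddSubmonoid.closure (S : Set V) → ∀ e ∈ S, 0 < x e → 0 < w e b →
      x b = 1 := by
    intro b hb hbc e he hxe hwe
    have h1 := d.lower hbc x hS he
    have h2 : 0 < x b := (mul_pos hwe hxe).trans_le h1
    have h3 := hx1 b (hP.1 hb)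
    obtain ⟨k, hk⟩ := hxP b hb
    rw [hk] at h2 h3 ⊢
    have h4 : 0 < k := by exact_mod_cast h2
    have h5 : k ≤ 1 := by exact_mod_cast h3
    have : k = 1 := by omega
    simp [this]
  by_cases hall : ∀ b ∈ P, w a b = 0
  · exact ⟨S, w, h, d, a, ha, 0, by simp, fun b hb => ⟨0, by simp [hall b hb]⟩⟩
  obtain ⟨c, hcP, hcc, hwc⟩ : ∃ c ∈ P, c ∈ AddSubmonoid.closure (S : Set V) ∧ 0 < w a c := by
    push Not at hall
    obtain ⟨b, hb, hwb⟩ := hall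
    rcases d.mem b (hP.1 hb) with h1 | h1
    · exact ⟨b, hb, h1, (d.wnonneg h1 ha).lt_of_ne (Ne.symm hwb)⟩
    · exact ⟨-b, hP.2.1 b hb, h1, (d.wnonneg h1 ha).lt_of_ne (by simpa using hwb)⟩
  have hxc := lev c hcP hcc a ha hxa0 hwc
  obtain ⟨n, hn⟩ := d.wnat hcc ha
  by_cases hn1 : n = 1
  · -- Levi case
    subst hn1
    obtain ⟨e, he, hea, hxe, hwe⟩ : ∃ e ∈ S, e ≠ a ∧ 0 < x e ∧ 0 < w e c := by
      by_contra! hcon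
      have h1 := d.apply hcc x
      rw [Finset.sum_eq_single a, hn, hxc] at h1
      · simp at h1; linarith
      · intro i hi hia
        rcases (hS i hi).lt_or_eq with h2 | h2
        · rw [le_antisymm (hcon i hi hia h2) (d.wnonneg hcc hi), zero_mul]
        · rw [← h2, mul_zero]
      · intro h; exact absurd ha h
    let f : V →ₗ[ℝ] ℝ := w e - w e c • w a
    have hfpos : ∀ b ∈ P, b ∈ AddSubmonoid.closure (S : Set V) → f b = 0 := by
      intro b hb hbc
      simp only [f, LinearMap.sub_apply, LinearMap.smul_apply, smul_eq_mul]
      have fin : ∀ g ∈ S, 0 < x g → 0 < w g b → 0 < w g c → w e b - w e c * w a b = 0 := by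
        intro g hg hxg hgb hgc
        have hxb := lev b hb hbc g hg hxg hgb
        have hu := d.uniq hQ x hS hx1 (hP.1 hb) hbc (hP.1 hcP) hcc hxb hxc hg hgb hgc
        rw [hu e he hxe, hu a ha hxa0, hn]; simp
      rcases (d.wnonneg hbc ha).lt_or_eq with h1 | h1
      · exact fin a ha hxa0 h1 hwc
      rcases (d.wnonneg hbc he).lt_or_eq with h2 | h2
      · exact fin e he hxe h2 hwe
      rw [← h1, ← h2]; simp
    refine main_levi hQ hP f ?_ (d.sub he) ?_
    · intro b hb
      rcases d.mem b (hP.1 hb) with h1 | h1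
      · exact hfpos b hb h1
      · have := hfpos _ (hP.2.1 b hb) h1
        simpa using this
    · simp [f, d.hw1 e he, d.hw0 a ha e he hea.symm]
  · refine ⟨S, w, h, d, a, ha, n, hn1, ?_⟩
    have key : ∀ b ∈ P, b ∈ AddSubmonoid.closure (S : Set V) → ∃ k : ℤ, w a b = n * k := by
      intro b hb hbc
      rcases (d.wnonneg hbc ha).lt_or_eq with h1 | h1
      · have hxb := lev b hb hbc a ha hxa0 h1
        have hu := d.uniq hQ x hS hx1 (hP.1 hb) hbc (hP.1 hcP) hcc hxb hxc ha h1 hwc a ha hxa0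
        exact ⟨1, by rw [hu, hn]; simp⟩
      · exact ⟨0, by rw [← h1]; simp⟩
    intro b hb
    rcases d.mem b (hP.1 hb) with h1 | h1
    · exact key b hb h1
    · obtain ⟨k, hk⟩ := key _ (hP.2.1 b hb) h1
      rw [map_neg] at hk
      exact ⟨-k, by push_cast; linarith⟩

lemma chain {O : Set V} (hO : RS B O) (hP : IsClosedSymmetricSubsystem O P) :
    ∀ N : ℕ, ∀ Q : Set V, Q.ncard = N → IsClosedSymmetricSubsystem O Q → P ⊆ Q →
    ∃ (m : ℕ) (c : ℕ → Set V), c 0 = Q ∧ c m = P ∧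
      (∀ j ≤ m, IsClosedSymmetricSubsystem O (c j)) ∧
      (∀ j < m, LeviStep (c j) (c (j + 1)) ∨ DynkinStep (c j) (c (j + 1))) := by
  intro N
  induction N using Nat.strong_induction_on with
  | _ N ih =>
  intro Q hN hQ hPQ
  by_cases hne : P = Q
  · exact ⟨0, fun _ => Q, rfl, hne.symm, fun _ _ => hQ, fun j hj => absurd hj (by omega)⟩
  have hQ' := hO.sub_system hQ
  obtain ⟨S, w, h, d, a, ha, n, hn, hPn⟩ := main_step hQ'
    ⟨hPQ, hP.2.1, fun a ha b hb hab => hP.2.2 a ha b hb (hQ.1 hab)⟩ hne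
  have hss : {b ∈ Q | ∃ k : ℤ, w a b = n * k} ⊂ Q := by
    refine ⟨fun b hb => hb.1, fun hsub => ?_⟩
    obtain ⟨-, k, hk⟩ := hsub (d.sub ha)
    rw [d.hw1 a ha] at hk
    have h1 : (1 : ℤ) = n * k := by exact_mod_cast hk
    have h2 : (n : ℤ) ∣ 1 := ⟨k, h1⟩
    apply hn
    have := Int.natCast_dvd_natCast.1 (by simpa using h2 : (n : ℤ) ∣ ((1 : ℕ) : ℤ))
    exact Nat.dvd_one.1 this
  obtain ⟨m, c, c0, cm, c1, c2⟩ := ih _ (hN ▸ Set.ncard_lt_ncard hss hQ'.fin) _ rfl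
    (step_closed hQ (w a) n) (fun b hb => ⟨hPQ hb, hPn b hb⟩)
  refine ⟨m + 1, fun j => Nat.casesOn j Q c, rfl, cm, ?_, ?_⟩
  · intro j hj
    cases j with
    | zero => exact hQ
    | succ j => exact c1 j (by omega)
  · intro j hj
    cases j with
    | zero =>
      show LeviStep Q (c 0) ∨ DynkinStep Q (c 0)
      rw [c0]
      exact d.step ha n
    | succ j => exact c2 j (by omega)

end main

section concrete
open Module

variable {ι M N : Type*} [Fintype ι] [AddCommGroup M] [Module ℂ M] [AddCommGroup N] [Module ℂ N]

noncomputable def form (R : RootPairing ι ℂ M N) : M →ₗ[ℝ] M →ₗ[ℝ] ℝ :=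
  LinearMap.mk₂ ℝ
    (fun x y => ∑ i, ((R.coroot' i x).re * (R.coroot' i y).re +
      (R.coroot' i x).im * (R.coroot' i y).im))
    (by
      intro x y z
      rw [← Finset.sum_add_distrib]
      refine Finset.sum_congr rfl fun i _ => ?_
      simp only [map_add, Complex.add_re, Complex.add_im]; ring)
    (by
      intro r x y
      rw [Finset.smul_sum]
      refine Finset.sum_congr rfl fun i _ => ?_
      rw [← Complex.coe_smul r x, map_smul]
      simp; ring)
    (by
      intro x y z
      rw [← Finset.sum_add_distrib]
      refine Finset.sum_congr rfl fun i _ => ?_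
      simp only [map_add, Complex.add_re, Complex.add_im]; ring)
    (by
      intro r x y
      rw [Finset.smul_sum]
      refine Finset.sum_congr rfl fun i _ => ?_
      rw [← Complex.coe_smul r y, map_smul]
      simp; ring)

lemma form_apply (R : RootPairing ι ℂ M N) (x y : M) : form R x y =
    ∑ i, ((R.coroot' i x).re * (R.coroot' i y).re +
      (R.coroot' i x).im * (R.coroot' i y).im) := rfl

variable (R : RootPairing ι ℂ M N) [R.IsRootSystem] [R.IsCrystallographic]

lemma sep {x : M} (hx : ∀ i, R.coroot' i x = 0) : x = 0 := by
  have h1 : R.toLinearMap x = 0 := by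
    apply LinearMap.ext_on_range (v := R.coroot) RootPairing.IsRootSystem.span_coroot_eq_top
    intro i
    simpa using hx i
  have : Function.Injective R.toLinearMap := (LinearMap.IsPerfPair.bijective_left R.toLinearMap).1
  exact this (by rw [h1, map_zero])

lemma coroot_root (i j : ι) : R.coroot' i (R.root j) = ((R.pairingIn ℤ j i : ℤ) : ℂ) := by
  have := R.algebraMap_pairingIn ℤ j i
  simpa using this.symm

lemma form_root (i j : ι) : ((form R (R.root i) (R.root j) : ℝ) : ℂ) =
    R.RootForm (R.root i) (R.root j) := by
  rw [form_apply, RootPairing.rootForm_apply_apply]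
  push_cast
  refine Finset.sum_congr rfl fun k _ => ?_
  rw [coroot_root, coroot_root]
  simp

lemma form_symm (x y : M) : form R x y = form R y x := by
  rw [form_apply, form_apply]
  refine Finset.sum_congr rfl fun k _ => by ring

lemma form_pos (x : M) (hx : x ≠ 0) : 0 < form R x x := by
  obtain ⟨i, hi⟩ : ∃ i, R.coroot' i x ≠ 0 := by
    by_contra! hcon
    exact hx (sep R hcon)
  rw [form_apply]
  refine Finset.sum_pos' (fun i _ => add_nonneg (mul_self_nonneg _) (mul_self_nonneg _))
    ⟨i, Finset.mem_univ _, ?_⟩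
  have := Complex.normSq_pos.2 hi
  rwa [Complex.normSq_apply] at this

lemma form_refl (i j : ι) : 2 * form R (R.root i) (R.root j) =
    (R.pairingIn ℤ i j : ℤ) * form R (R.root j) (R.root j) := by
  have h1 := congrArg (fun v => R.toLinearMap (R.root i) v) (R.rootForm_self_smul_coroot j)
  have h2 : R.toLinearMap (R.root i) (R.Polarization (R.root j)) =
      R.RootForm (R.root i) (R.root j) := by
    rw [RootPairing.Polarization_apply, RootPairing.rootForm_apply_apply, map_sum]
    refine Finset.sum_congr rfl fun k _ => ?_
    simp [mul_comm]
  have h3 : R.toLinearMap (R.root i) (R.coroot j) = ((R.pairingIn ℤ i j : ℤ) : ℂ) := by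
    rw [← coroot_root]; rfl
  simp only [map_smul, map_nsmul, h2, h3, ← form_root] at h1
  have h4 : ((2 * form R (R.root i) (R.root j) : ℝ) : ℂ) =
      (((R.pairingIn ℤ i j : ℤ) * form R (R.root j) (R.root j) : ℝ) : ℂ) := by
    push_cast
    rw [smul_eq_mul, nsmul_eq_mul] at h1
    push_cast at h1
    rw [← h1]; ring
  exact_mod_cast h4

lemma rs_root : RS (form R) (Set.range R.root) where
  symm := form_symm R
  pos := form_pos R
  fin := Set.finite_range _
  zero := by
    rintro ⟨i, hi⟩
    exact R.ne_zero i hi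
  neg := by
    rintro - ⟨i, rfl⟩
    exact ⟨R.reflectionPerm i i, by simp⟩
  sub := by
    rintro - ⟨i, rfl⟩ - ⟨j, rfl⟩ hij hpos
    have h1 := form_refl R i j
    have h2 := form_pos R _ (R.ne_zero j)
    have h3 : 0 < R.pairingIn ℤ i j := by
      by_contra! hcon
      have : ((R.pairingIn ℤ i j : ℤ) : ℝ) ≤ 0 := by exact_mod_cast hcon
      nlinarith
    exact R.root_sub_root_mem_of_pairingIn_pos h3 (fun h => hij (by rw [h]))
  refl := by
    rintro - ⟨i, rfl⟩ - ⟨j, rfl⟩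
    refine ⟨R.pairingIn ℤ i j, form_refl R i j, R.reflectionPerm j i, ?_⟩
    rw [RootPairing.root_reflectionPerm, RootPairing.reflection_apply, coroot_root,
      Int.cast_smul_eq_zsmul]
  indep := by
    have him : ∀ u ∈ Submodule.span ℝ (Set.range R.root), ∀ i, (R.coroot' i u).im = 0 := by
      intro u hu i
      induction hu using Submodule.span_induction with
      | mem x hx =>
        obtain ⟨j, rfl⟩ := hx
        rw [coroot_root]; simp
      | zero => simp
      | add x y _ _ hx hy => rw [map_add, Complex.add_im, hx, hy, add_zero]
      | smul r x _ hx => 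
        rw [← Complex.coe_smul r x, map_smul, smul_eq_mul, Complex.mul_im, hx, Complex.ofReal_im]
        ring
    intro u hu w hw huw
    apply sep R
    intro i
    have h1 := congrArg (R.coroot' i) huw
    rw [map_add, map_smul, map_zero, smul_eq_mul] at h1
    have h2 := congrArg Complex.re h1
    rw [Complex.add_re, Complex.mul_re, Complex.I_re, Complex.I_im, him w hw i, Complex.zero_re] at h2
    exact Complex.ext (by rw [Complex.zero_re]; linarith) (by rw [him u hu i]; rfl)

end concrete

lemma lieRoots_eq (L : Type*) [LieRing L] [LieAlgebra ℂ L] [FiniteDimensional ℂ L]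
    [LieAlgebra.IsKilling ℂ L] (H : LieSubalgebra ℂ L) [H.IsCartanSubalgebra] :
    lieRoots L H = Set.range (LieAlgebra.IsKilling.rootSystem H).root := by
  ext α
  constructor
  · rintro ⟨h0, h1⟩
    let χ : LieModule.Weight ℂ H L := ⟨⇑α, h1⟩
    have hχ : χ ∈ H.root := by
      simp only [LieSubalgebra.root, Finset.mem_filter, Finset.mem_univ, true_and]
      intro hz
      apply h0
      ext v
      exact congrFun hz v
    refine ⟨⟨χ, hχ⟩, ?_⟩
    ext v
    rfl
  · rintro ⟨⟨χ, hχ⟩, rfl⟩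
    have hχ' : χ.IsNonZero := by simpa [LieSubalgebra.root] using hχ
    refine ⟨?_, ?_⟩
    · intro hz
      apply hχ'
      funext v
      exact LinearMap.congr_fun hz v
    · exact χ.genWeightSpace_ne_bot

end DynkinAux

/-- **Dynkin's theorem (modified):** every closed symmetric subsystem `P ⊆ Ω` is reached from
`Ω` by a finite chain of closed symmetric subsystems in which each step is a Levi or a Dynkin
procedure. -/
theorem dynkin_chain_exists
    (L : Type*) [LieRing L] [LieAlgebra ℂ L] [FiniteDimensional ℂ L]
    [LieAlgebra.IsSemisimple ℂ L]
    (H : LieSubalgebra ℂ L) [H.IsCartanSubalgebra]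
    (P : Set (Module.Dual ℂ H))
    (hP : IsClosedSymmetricSubsystem (lieRoots L H) P) :
    ∃ (m : ℕ) (c : ℕ → Set (Module.Dual ℂ H)),
      c 0 = lieRoots L H ∧ c m = P ∧
      (∀ j ≤ m, IsClosedSymmetricSubsystem (lieRoots L H) (c j)) ∧
      (∀ j < m, LeviStep (c j) (c (j + 1)) ∨ DynkinStep (c j) (c (j + 1))) := by
  rw [DynkinAux.lieRoots_eq L H] at hP ⊢
  exact DynkinAux.chain (DynkinAux.rs_root _) hP _ _ rfl
    ⟨subset_rfl, (DynkinAux.rs_root _).neg, fun _ _ _ _ h => h⟩ hP.1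
end

section
/- Assume 𝔤 is simple. If Tor(Γ_𝔨) is cyclic, then every non-zero element of Tor(Γ_𝔨) is the image ᾱ of some root α ∈ Ω. -/
open LieAlgebra

structure AbsRS (A : Type*) [AddCommGroup A] where
  Om : Finset A
  B : A →ₗ[ℤ] A →ₗ[ℤ] ℤ
  c : A → A →ₗ[ℤ] ℤ
  symm : ∀ x y, B x y = B y x
  pos : ∀ x, x ≠ 0 → 0 < B x x
  zero_not : (0 : A) ∉ Om
  neg : ∀ a ∈ Om, -a ∈ Om
  add : ∀ a ∈ Om, ∀ b ∈ Om, B a b < 0 → a + b ≠ 0 → a + b ∈ Om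
  span : Submodule.span ℤ (Om : Set A) = ⊤
  hc : ∀ a ∈ Om, ∀ x, 2 * B a x = B a a * c a x
  refl : ∀ a ∈ Om, ∀ b ∈ Om, b - c a b • a ∈ Om
  irr : ∀ X : Set A, X ⊆ Om → X.Nonempty →
    (∀ a ∈ X, ∀ b ∈ Om, b ∉ X → B a b = 0) → ∀ b ∈ Om, b ∈ X

namespace AbsRS

variable {A : Type*} [AddCommGroup A] (R : AbsRS A)

lemma ne_zero {a : A} (ha : a ∈ R.Om) : a ≠ 0 := fun h => R.zero_not (h ▸ ha)

lemma root_sub {a b : A} (ha : a ∈ R.Om) (hb : b ∈ R.Om) (h : 0 < R.B a b) (hne : a ≠ b) :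
    a - b ∈ R.Om := by
  have := R.add a ha (-b) (R.neg b hb) (by simpa using h) (by simpa [← sub_eq_add_neg, sub_eq_zero])
  simpa [← sub_eq_add_neg] using this

lemma c_self {a : A} (ha : a ∈ R.Om) : R.c a a = 2 := by
  have h1 := R.hc a ha a
  have h2 := R.pos a (R.ne_zero ha)
  have : R.B a a * (R.c a a - 2) = 0 := by linarith
  rcases mul_eq_zero.1 this with h | h <;> omega

lemma smul_eq_zero' (R : AbsRS A) {m : ℤ} {x : A} (hm : m ≠ 0) (h : m • x = 0) : x = 0 := by
  by_contra hx
  have h1 := R.pos x hx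
  have h2 : R.B (m • x) x = 0 := by rw [h]; simp
  simp only [map_smul, LinearMap.smul_apply, smul_eq_mul, mul_eq_zero] at h2
  rcases h2 with h2 | h2 <;> omega

/-- moving a functional into the Voronoi cell -/
lemma exists_small (N : ℤ) (hN : 0 < N) : ∀ (n : ℕ) (F : A →ₗ[ℤ] ℤ),
    ∑ a ∈ R.Om, (F a) ^ 2 = (n : ℤ) →
    ∃ F' : A →ₗ[ℤ] ℤ, (∀ a, N ∣ F' a ↔ N ∣ F a) ∧ ∀ a ∈ R.Om, F' a ≤ N := by
  intro n
  induction n using Nat.strong_induction_on with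
  | _ n ih =>
  intro F hF
  by_cases hall : ∀ a ∈ R.Om, F a ≤ N
  · exact ⟨F, fun _ => Iff.rfl, hall⟩
  push Not at hall
  obtain ⟨b, hb, hbN⟩ := hall
  have hcb := R.c_self hb
  -- reflection reindexing
  have key : ∑ a ∈ R.Om, F a * R.c b a = ∑ a ∈ R.Om, (F a - R.c b a * F b) * (- R.c b a) := by
    refine Finset.sum_nbij' (fun a => a - R.c b a • b) (fun a => a - R.c b a • b)
      (fun a ha => R.refl b hb a ha) (fun a ha => R.refl b hb a ha) ?_ ?_ ?_
    · intro a ha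
      simp only [map_sub, map_smul, hcb, smul_eq_mul]
      rw [sub_sub, ← add_smul]
      ring_nf
      simp
    · intro a ha
      simp only [map_sub, map_smul, hcb, smul_eq_mul]
      rw [sub_sub, ← add_smul]
      ring_nf
      simp
    · intro a ha
      simp only [map_sub, map_smul, hcb, smul_eq_mul]
      ring
  have key2 : 2 * ∑ a ∈ R.Om, F a * R.c b a = F b * ∑ a ∈ R.Om, (R.c b a) ^ 2 := by
    have : ∑ a ∈ R.Om, (F a - R.c b a * F b) * (- R.c b a)
      = F b * ∑ a ∈ R.Om, (R.c b a) ^ 2 - ∑ a ∈ R.Om, F a * R.c b a := by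
      rw [Finset.mul_sum, ← Finset.sum_sub_distrib]
      exact Finset.sum_congr rfl fun a _ => by ring
    linarith
  have hC : 0 < ∑ a ∈ R.Om, (R.c b a) ^ 2 :=
    lt_of_lt_of_le (by rw [hcb]; norm_num)
      (Finset.single_le_sum (f := fun a => (R.c b a) ^ 2) (fun a _ => sq_nonneg _) hb)
  have hsum : ∑ a ∈ R.Om, ((F - N • R.c b) a) ^ 2
      = ∑ a ∈ R.Om, (F a) ^ 2 - N * (F b - N) * ∑ a ∈ R.Om, (R.c b a) ^ 2 := by
    have : ∑ a ∈ R.Om, ((F - N • R.c b) a) ^ 2 = ∑ a ∈ R.Om, (F a) ^ 2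
        - N * (2 * ∑ a ∈ R.Om, F a * R.c b a) + N ^ 2 * ∑ a ∈ R.Om, (R.c b a) ^ 2 := by
      simp only [Finset.mul_sum, ← Finset.sum_sub_distrib, ← Finset.sum_add_distrib]
      refine Finset.sum_congr rfl fun a _ => ?_
      simp
      ring
    rw [this, key2]; ring
  have hlt : 0 < N * (F b - N) * ∑ a ∈ R.Om, (R.c b a) ^ 2 := by
    have : 0 < F b - N := by omega
    positivity
  have hnn : 0 ≤ ∑ a ∈ R.Om, ((F - N • R.c b) a) ^ 2 := Finset.sum_nonneg fun a _ => sq_nonneg _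
  obtain ⟨m, hm⟩ := Int.eq_ofNat_of_zero_le hnn
  obtain ⟨F', h1, h2⟩ := ih m (by omega) (F - N • R.c b) hm
  refine ⟨F', fun a => (h1 a).trans ?_, h2⟩
  have : (F - N • R.c b) a = F a - N * R.c b a := by simp
  rw [this]
  exact dvd_sub_left (dvd_mul_right _ _)

open Classical in
/-- simple roots for a generic functional -/
noncomputable def baseOf (h : A →ₗ[ℤ] ℤ) : Finset A :=
  R.Om.filter (fun a => 0 < h a ∧ ∀ b ∈ R.Om, ∀ c ∈ R.Om, 0 < h b → 0 < h c → a ≠ b + c)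

lemma mem_base {h : A →ₗ[ℤ] ℤ} {a : A} : a ∈ R.baseOf h ↔ a ∈ R.Om ∧ 0 < h a ∧
    ∀ b ∈ R.Om, ∀ c ∈ R.Om, 0 < h b → 0 < h c → a ≠ b + c := by
  simp [baseOf]

lemma mem_closure_base {h : A →ₗ[ℤ] ℤ} : ∀ (n : ℕ) (a : A), a ∈ R.Om → 0 < h a → h a ≤ n →
    a ∈ AddSubmonoid.closure (R.baseOf h : Set A) := by
  intro n
  induction n with
  | zero => intro a _ h1 h2; simp at h2; omega
  | succ n ih =>
    intro a ha h1 h2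
    by_cases hs : a ∈ R.baseOf h
    · exact AddSubmonoid.subset_closure hs
    · rw [mem_base] at hs
      push Not at hs
      obtain ⟨b, hb, c, hc, hb0, hc0, rfl⟩ := hs ha h1
      rw [map_add] at h2
      push_cast at h2
      exact add_mem (ih b hb hb0 (by omega)) (ih c hc hc0 (by omega))

lemma mem_closure_base' {h : A →ₗ[ℤ] ℤ} {a : A} (ha : a ∈ R.Om) (h0 : 0 < h a) :
    a ∈ AddSubmonoid.closure (R.baseOf h : Set A) :=
  R.mem_closure_base (h a).toNat a ha h0 (by omega)

lemma exists_sub {h : A →ₗ[ℤ] ℤ} (hg : ∀ a ∈ R.Om, h a ≠ 0) {a : A} (ha : a ∈ R.Om)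
    (h0 : 0 < h a) (hs : a ∉ R.baseOf h) : ∃ s ∈ R.baseOf h, a - s ∈ R.Om ∧ 0 < h (a - s) := by
  have : ∃ s ∈ R.baseOf h, 0 < R.B a s := by
    by_contra hcon
    push Not at hcon
    have h1 : ∀ x ∈ AddSubmonoid.closure (R.baseOf h : Set A), R.B a x ≤ 0 := by
      intro x hx
      induction hx using AddSubmonoid.closure_induction with
      | mem x hx => exact hcon x hx
      | zero => simp
      | add x y _ _ h1 h2 => rw [map_add]; omega
    have := h1 a (R.mem_closure_base' ha h0)
    have := R.pos a (R.ne_zero ha)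
    omega
  obtain ⟨s, hs', hp⟩ := this
  have hs2 := R.mem_base.1 hs'
  have hm : a - s ∈ R.Om := R.root_sub ha hs2.1 hp (by rintro rfl; exact hs hs')
  refine ⟨s, hs', hm, ?_⟩
  by_contra hneg
  have hne := hg _ hm
  refine hs2.2.2 a ha (-(a - s)) (R.neg _ hm) h0 ?_ (by abel)
  rw [map_neg]; omega

lemma pos_induction {h : A →ₗ[ℤ] ℤ} (hg : ∀ a ∈ R.Om, h a ≠ 0) {p : A → Prop}
    (h1 : ∀ s ∈ R.baseOf h, p s)
    (h2 : ∀ a ∈ R.Om, 0 < h a → p a → ∀ s ∈ R.baseOf h, a + s ∈ R.Om → p (a + s)) :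
    ∀ a ∈ R.Om, 0 < h a → p a := by
  have : ∀ (n : ℕ) (a : A), a ∈ R.Om → 0 < h a → h a ≤ n → p a := by
    intro n
    induction n with
    | zero => intro a _ h1 h2; simp at h2; omega
    | succ n ih =>
      intro a ha h0 hn
      by_cases hs : a ∈ R.baseOf h
      · exact h1 a hs
      · obtain ⟨s, hs1, hs2, hs3⟩ := R.exists_sub hg ha h0 hs
        have hsp := (R.mem_base.1 hs1).2.1
        have e : a - s + s = a := by abel
        have := h2 (a - s) hs2 hs3 (ih _ hs2 hs3 (by push_cast at hn; rw [map_sub]; omega)) s hs1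
          (by rwa [e])
        rwa [e] at this
  intro a ha h0
  exact this (h a).toNat a ha h0 (by omega)

lemma base_obtuse {h : A →ₗ[ℤ] ℤ} (hg : ∀ a ∈ R.Om, h a ≠ 0) {s t : A} (hs : s ∈ R.baseOf h)
    (ht : t ∈ R.baseOf h) (hne : s ≠ t) : R.B s t ≤ 0 := by
  by_contra hcon
  have hs2 := R.mem_base.1 hs
  have ht2 := R.mem_base.1 ht
  have hm := R.root_sub hs2.1 ht2.1 (by omega) hne
  rcases lt_or_gt_of_ne (hg _ hm) with h1 | h1
  · exact ht2.2.2 s hs2.1 (-(s - t)) (R.neg _ hm) hs2.2.1 (by rw [map_neg]; omega) (by abel)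
  · exact hs2.2.2 t ht2.1 (s - t) hm ht2.2.1 h1 (by abel)

lemma base_indep {h : A →ₗ[ℤ] ℤ} (hg : ∀ a ∈ R.Om, h a ≠ 0) (n : A → ℤ)
    (hn : ∑ s ∈ R.baseOf h, n s • s = 0) : ∀ s ∈ R.baseOf h, n s = 0 := by
  set S := R.baseOf h with hS
  set v := ∑ s ∈ S, (max (n s) 0) • s with hv
  have hv2 : v = ∑ s ∈ S, (max (-n s) 0) • s := by
    rw [← sub_eq_zero, hv, ← Finset.sum_sub_distrib, ← hn]
    refine Finset.sum_congr rfl fun s _ => ?_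
    rw [← sub_smul]; congr 1; omega
  have hB : R.B v v ≤ 0 := by
    have e : R.B v v = ∑ s ∈ S, max (n s) 0 * ∑ t ∈ S, max (-n t) 0 * R.B s t := by
      calc R.B v v = R.B (∑ s ∈ S, (max (n s) 0) • s) (∑ s ∈ S, (max (-n s) 0) • s) := by
            rw [← hv, ← hv2]
        _ = _ := by
          rw [map_sum R.B, LinearMap.sum_apply]
          refine Finset.sum_congr rfl fun s _ => ?_
          rw [map_smul, LinearMap.smul_apply, map_sum, smul_eq_mul]
          congr 1
          exact Finset.sum_congr rfl fun t _ => by rw [map_smul, smul_eq_mul]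
    rw [e]
    refine Finset.sum_nonpos fun s hs => ?_
    rw [Finset.mul_sum]
    refine Finset.sum_nonpos fun t ht => ?_
    by_cases hst : s = t
    · subst hst
      have : max (n s) 0 * (max (-n s) 0) = 0 := by
        rw [mul_eq_zero]; omega
      rw [← mul_assoc, this, zero_mul]
    · have h1 := R.base_obtuse hg hs ht hst
      have h2 : 0 ≤ max (n s) 0 := le_max_right _ _
      have h3 : 0 ≤ max (-n t) 0 := le_max_right _ _
      exact mul_nonpos_of_nonneg_of_nonpos h2 (mul_nonpos_of_nonneg_of_nonpos h3 h1)
  have hv0 : v = 0 := by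
    by_contra hne
    have := R.pos v hne
    omega
  have hp : ∀ s ∈ S, 0 < h s := fun s hs => (R.mem_base.1 hs).2.1
  have aux : ∀ m : A → ℤ, (∀ s, 0 ≤ m s) → ∑ s ∈ S, m s • s = 0 → ∀ s ∈ S, m s = 0 := by
    intro m hm h0 s hs
    have h1 : ∑ s ∈ S, m s * h s = 0 := by
      have := congrArg h h0
      simpa using this
    rw [Finset.sum_eq_zero_iff_of_nonneg] at h1
    · rcases mul_eq_zero.1 (h1 s hs) with h2 | h2
      · exact h2
      · have := hp s hs; omega
    · intro s hs
      exact mul_nonneg (hm s) (hp s hs).le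
  intro s hs
  have h1 := aux (fun s => max (n s) 0) (fun s => by simp) (by rw [← hv, hv0]) s hs
  have h2 := aux (fun s => max (-n s) 0) (fun s => by simp) (by rw [← hv2, hv0]) s hs
  omega


lemma orth_span (R : AbsRS A) {I J : Set A} (h : ∀ s ∈ I, ∀ t ∈ J, R.B s t = 0) {x y : A}
    (hx : x ∈ Submodule.span ℤ I) (hy : y ∈ Submodule.span ℤ J) : R.B x y = 0 := by
  have h1 : ∀ s ∈ I, R.B s y = 0 := by
    intro s hs
    have : Submodule.span ℤ J ≤ LinearMap.ker (R.B s) :=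
      Submodule.span_le.2 fun t ht => h s hs t ht
    exact this hy
  have : Submodule.span ℤ I ≤ LinearMap.ker (R.B.flip y) :=
    Submodule.span_le.2 fun t ht => by simpa using h1 t ht
  simpa using this hx

lemma closure_le_span (I : Set A) {x : A} (hx : x ∈ AddSubmonoid.closure I) :
    x ∈ Submodule.span ℤ I := by
  induction hx using AddSubmonoid.closure_induction with
  | mem x hx => exact Submodule.subset_span hx
  | zero => exact zero_mem _
  | add x y _ _ h1 h2 => exact add_mem h1 h2

lemma closure_nonneg {h : A →ₗ[ℤ] ℤ} {I : Set A} (hI : ∀ s ∈ I, 0 ≤ h s) {x : A}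
    (hx : x ∈ AddSubmonoid.closure I) : 0 ≤ h x := by
  induction hx using AddSubmonoid.closure_induction with
  | mem x hx => exact hI x hx
  | zero => simp
  | add x y _ _ h1 h2 => rw [map_add]; omega

lemma no_mixed {h : A →ₗ[ℤ] ℤ} (hg : ∀ a ∈ R.Om, h a ≠ 0) {I J : Set A}
    (hU : (R.baseOf h : Set A) = I ∪ J) (ho : ∀ s ∈ I, ∀ t ∈ J, R.B s t = 0) {a s : A}
    (ha : a ∈ R.Om) (ha0 : 0 < h a) (haI : a ∈ Submodule.span ℤ I) (hs : s ∈ J)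
    (has : a + s ∈ R.Om) : False := by
  have hsS : s ∈ R.baseOf h := by
    have : s ∈ (R.baseOf h : Set A) := hU ▸ Or.inr hs
    simpa using this
  have hs2 := R.mem_base.1 hsS
  have hsJ : s ∈ Submodule.span ℤ J := Submodule.subset_span hs
  have hB : R.B a s = 0 := R.orth_span ho haI hsJ
  have hc0 : R.c s a = 0 := by
    have h1 := R.hc s hs2.1 a
    rw [R.symm, hB] at h1
    have h2 := R.pos s (R.ne_zero hs2.1)
    have : R.B s s * R.c s a = 0 := by omega
    rcases mul_eq_zero.1 this with h | h <;> omega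
  have hm : a - s ∈ R.Om := by
    have := R.refl s hs2.1 (a + s) has
    rw [map_add, hc0, R.c_self hs2.1] at this
    convert this using 1
    rw [zero_add, two_smul]; abel
  have hpos : ∀ t ∈ R.baseOf h, 0 ≤ h t := fun t ht => (R.mem_base.1 ht).2.1.le
  have hposI : ∀ t ∈ I, 0 ≤ h t := fun t ht => hpos t (by
    have : t ∈ (R.baseOf h : Set A) := hU ▸ Or.inl ht
    simpa using this)
  have hposJ : ∀ t ∈ J, 0 ≤ h t := fun t ht => hpos t (by
    have : t ∈ (R.baseOf h : Set A) := hU ▸ Or.inr ht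
    simpa using this)
  have dec : ∀ b ∈ R.Om, 0 < h b → ∃ u ∈ AddSubmonoid.closure I, ∃ v ∈ AddSubmonoid.closure J,
      u + v = b := by
    intro b hb hb0
    have := R.mem_closure_base' hb hb0
    rw [hU, AddSubmonoid.closure_union] at this
    exact AddSubmonoid.mem_sup.1 this
  have inter : ∀ z, z ∈ Submodule.span ℤ I → z ∈ Submodule.span ℤ J → z = 0 := by
    intro z h1 h2
    by_contra hz
    have := R.pos z hz
    have := R.orth_span ho h1 h2
    omega
  rcases lt_or_gt_of_ne (hg _ hm) with h1 | h1
  · obtain ⟨u, hu, v, hv, e⟩ := dec (-(a - s)) (R.neg _ hm) (by rw [map_neg]; omega)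
    have e2 : a + u = s - v := by
      have : u = -(a - s) - v := by rw [← e]; abel
      rw [this]; abel
    have hz := inter (a + u) (add_mem haI (closure_le_span I hu))
      (e2 ▸ sub_mem hsJ (closure_le_span J hv))
    have := congrArg h hz
    rw [map_add, map_zero] at this
    have := closure_nonneg hposI hu
    omega
  · obtain ⟨u, hu, v, hv, e⟩ := dec (a - s) hm h1
    have e2 : s + v = a - u := by
      have : v = a - s - u := by rw [← e]; abel
      rw [this]; abel
    have hz := inter (s + v) (e2 ▸ sub_mem haI (closure_le_span I hu))
      (add_mem hsJ (closure_le_span J hv))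
    have := congrArg h hz
    rw [map_add, map_zero] at this
    have := closure_nonneg hposJ hv
    have := hs2.2.1
    omega

lemma exists_coeff {h : A →ₗ[ℤ] ℤ} {x : A} (hx : x ∈ AddSubmonoid.closure (R.baseOf h : Set A)) :
    ∃ n : A → ℤ, (∀ s, 0 ≤ n s) ∧ x = ∑ s ∈ R.baseOf h, n s • s := by
  classical
  induction hx using AddSubmonoid.closure_induction with
  | mem x hx =>
    refine ⟨fun s => if s = x then 1 else 0, fun s => by dsimp only; split_ifs <;> simp, ?_⟩
    simp [ite_smul, Finset.sum_ite_eq', show x ∈ R.baseOf h from hx]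
  | zero => exact ⟨0, by simp, by simp⟩
  | add x y _ _ h1 h2 =>
    obtain ⟨n, hn, rfl⟩ := h1
    obtain ⟨m, hm, rfl⟩ := h2
    exact ⟨n + m, fun s => add_nonneg (hn s) (hm s), by simp [add_smul, Finset.sum_add_distrib]⟩

lemma dominant_pos {h : A →ₗ[ℤ] ℤ} (hg : ∀ a ∈ R.Om, h a ≠ 0) {t u : A}
    (ht : t ∈ R.Om) (ht' : ∀ s ∈ R.baseOf h, 0 ≤ R.B t s)
    (hu : u ∈ R.Om) (hu0 : 0 < h u) (hu' : ∀ s ∈ R.baseOf h, 0 ≤ R.B u s) : 0 < R.B t u := by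
  by_contra hcon
  obtain ⟨n, hn, hun⟩ := R.exists_coeff (R.mem_closure_base' hu hu0)
  set S := R.baseOf h with hS
  set I : Set A := {s | s ∈ S ∧ 0 < n s} with hI
  set J : Set A := {s | s ∈ S ∧ n s = 0} with hJ
  have hU : (S : Set A) = I ∪ J := by
    ext s
    simp only [hI, hJ, Set.mem_union, Set.mem_ofPred_eq, Finset.mem_coe]
    have := hn s
    constructor
    · intro hs
      by_cases h0 : n s = 0
      · exact Or.inr ⟨hs, h0⟩
      · exact Or.inl ⟨hs, by omega⟩
    · rintro (h | h) <;> exact h.1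
  have hBI : ∀ s ∈ I, R.B t s = 0 := by
    have h1 : ∑ s ∈ S, n s * R.B t s ≤ 0 := by
      have : R.B t u = ∑ s ∈ S, n s * R.B t s := by
        conv_lhs => rw [hun]
        rw [map_sum]
        exact Finset.sum_congr rfl fun s _ => by rw [map_smul, smul_eq_mul]
      omega
    have h2 : ∀ s ∈ S, 0 ≤ n s * R.B t s := fun s hs => mul_nonneg (hn s) (ht' s hs)
    have h3 := (Finset.sum_eq_zero_iff_of_nonneg h2).1 (le_antisymm h1 (Finset.sum_nonneg h2))
    intro s hs
    rcases mul_eq_zero.1 (h3 s hs.1) with h4 | h4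
    · have := hs.2; omega
    · exact h4
  have ho : ∀ s ∈ I, ∀ r ∈ J, R.B s r = 0 := by
    intro s hs r hr
    have h1 : 0 ≤ ∑ s ∈ S, n s * R.B s r := by
      have : R.B u r = ∑ s ∈ S, n s * R.B s r := by
        conv_lhs => rw [hun]
        rw [map_sum, LinearMap.sum_apply]
        exact Finset.sum_congr rfl fun s _ => by rw [map_smul, LinearMap.smul_apply, smul_eq_mul]
      rw [← this]; exact hu' r hr.1
    have h2 : ∀ s ∈ S, n s * R.B s r ≤ 0 := by
      intro s hs
      by_cases hsr : s = r
      · subst hsr; rw [hr.2, zero_mul]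
      · exact mul_nonpos_of_nonneg_of_nonpos (hn s) (R.base_obtuse hg hs hr.1 hsr)
    have h3 := (Finset.sum_eq_zero_iff_of_nonpos h2).1 (le_antisymm (Finset.sum_nonpos h2) h1)
    rcases mul_eq_zero.1 (h3 s hs.1) with h4 | h4
    · have := hs.2; omega
    · exact h4
  have ho' : ∀ s ∈ J, ∀ r ∈ I, R.B s r = 0 := fun s hs r hr => by
    rw [R.symm]; exact ho r hr s hs
  have split : ∀ a ∈ R.Om, 0 < h a → (a ∈ Submodule.span ℤ I ∨ a ∈ Submodule.span ℤ J) := by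
    refine R.pos_induction hg (p := fun a => a ∈ Submodule.span ℤ I ∨ a ∈ Submodule.span ℤ J) ?_ ?_
    · intro s hs
      have : s ∈ I ∪ J := hU ▸ hs
      exact this.imp (fun h => Submodule.subset_span h) (fun h => Submodule.subset_span h)
    · intro a ha ha0 hp s hs has
      have : s ∈ I ∪ J := hU ▸ hs
      rcases hp with hp | hp <;> rcases this with h1 | h1
      · exact Or.inl (add_mem hp (Submodule.subset_span h1))
      · exact (R.no_mixed hg hU ho ha ha0 hp h1 has).elim
      · exact (R.no_mixed hg (by rw [← hS, hU, Set.union_comm]) ho' ha ha0 hp h1 has).elim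
      · exact Or.inr (add_mem hp (Submodule.subset_span h1))
  have huI : u ∈ Submodule.span ℤ I := by
    rw [hun]
    refine sum_mem fun s hs => ?_
    by_cases h0 : n s = 0
    · rw [h0, zero_smul]; exact zero_mem _
    · exact Submodule.smul_mem _ _ (Submodule.subset_span ⟨hs, by have := hn s; omega⟩)
  have := R.irr {b | b ∈ R.Om ∧ b ∈ Submodule.span ℤ I} (fun b hb => hb.1) ⟨u, hu, huI⟩ (by
    intro a ha b hb hbX
    have hbI : b ∉ Submodule.span ℤ I := fun h => hbX ⟨hb, h⟩
    have : b ∈ Submodule.span ℤ J := by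
      rcases lt_or_gt_of_ne (hg b hb) with h1 | h1
      · have := split (-b) (R.neg b hb) (by rw [map_neg]; omega)
        simp only [Submodule.neg_mem_iff] at this
        exact this.resolve_left hbI
      · exact (split b hb h1).resolve_left hbI
    exact R.orth_span ho ha.2 this) t ht
  have h1 : R.B t t = 0 := R.orth_span (I := {t}) (J := I) (by simpa using hBI)
    (Submodule.subset_span rfl) this.2
  have := R.pos t (R.ne_zero ht)
  omega

lemma top_coset {F h : A →ₗ[ℤ] ℤ} (hg : ∀ a ∈ R.Om, h a ≠ 0)
    (hF : ∀ a ∈ R.Om, 0 < h a → 0 ≤ F a) {N : ℤ} (hN : 0 < N) (hFN : ∀ a ∈ R.Om, F a ≤ N)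
    {a b : A} (ha : a ∈ R.Om) (hb : b ∈ R.Om) (haN : F a = N) (hbN : F b = N) :
    a - b ∈ Submodule.span ℤ {a | a ∈ R.Om ∧ F a = 0} := by
  classical
  set Z := Submodule.span ℤ {a | a ∈ R.Om ∧ F a = 0} with hZ
  have hpos : ∀ a ∈ R.Om, F a = N → 0 < h a := by
    intro a ha haN
    rcases lt_or_gt_of_ne (hg a ha) with h1 | h1
    · have := hF (-a) (R.neg a ha) (by rw [map_neg]; omega)
      rw [map_neg] at this
      omega
    · exact h1
  have top : ∀ a ∈ R.Om, F a = N → ∃ t ∈ R.Om, F t = N ∧ t - a ∈ Z ∧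
      ∀ s ∈ R.baseOf h, 0 ≤ R.B t s := by
    intro a ha haN
    obtain ⟨t, ht, hmax⟩ := Finset.exists_max_image (R.Om.filter fun t => F t = N ∧ t - a ∈ Z) h
      ⟨a, by simp [ha, haN]⟩
    rw [Finset.mem_filter] at ht
    refine ⟨t, ht.1, ht.2.1, ht.2.2, fun s hs => ?_⟩
    by_contra hcon
    have hs2 := R.mem_base.1 hs
    have htp := hpos t ht.1 ht.2.1
    have hm : t + s ∈ R.Om := R.add t ht.1 s hs2.1 (by omega) (by
      intro h0
      have := congrArg h h0
      rw [map_add, map_zero] at this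
      omega)
    have h1 := hFN _ hm
    have h2 := hF s hs2.1 hs2.2.1
    rw [map_add] at h1
    have h3 : F s = 0 := by omega
    have := hmax (t + s) (by
      rw [Finset.mem_filter]
      refine ⟨hm, by rw [map_add]; omega, ?_⟩
      have : t + s - a = (t - a) + s := by abel
      rw [this]
      exact add_mem ht.2.2 (Submodule.subset_span ⟨hs2.1, h3⟩))
    rw [map_add] at this
    omega
  obtain ⟨t, ht, htN, hta, htd⟩ := top a ha haN
  obtain ⟨u, hu, huN, hub, hud⟩ := top b hb hbN
  have hB := R.dominant_pos hg ht htd hu (hpos u hu huN) hud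
  have htu : t - u ∈ Z := by
    by_cases hne : t = u
    · rw [hne, sub_self]; exact zero_mem _
    · exact Submodule.subset_span ⟨R.root_sub ht hu hB hne, by rw [map_sub]; omega⟩
  have : a - b = (t - u) - (t - a) + (u - b) := by abel
  rw [this]
  exact add_mem (sub_mem htu hta) hub


lemma lex (f h : A →ₗ[ℤ] ℤ) (hg : ∀ a ∈ R.Om, h a ≠ 0) : ∃ k : A →ₗ[ℤ] ℤ,
    (∀ a ∈ R.Om, k a ≠ 0) ∧ (∀ a ∈ R.Om, 0 < k a → 0 ≤ f a) ∧
    (∀ a ∈ R.Om, 0 < k a → f a = 0 → 0 < h a) := by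
  set M : ℤ := 1 + ∑ a ∈ R.Om, |h a| with hM
  have hb : ∀ a ∈ R.Om, |h a| < M := by
    intro a ha
    have := Finset.single_le_sum (f := fun a => |h a|) (fun a _ => abs_nonneg _) ha
    omega
  have e : ∀ a, (M • f + h) a = M * f a + h a := by simp
  refine ⟨M • f + h, fun a ha h0 => ?_, fun a ha h0 => ?_, fun a ha h0 h1 => ?_⟩
  · rw [e] at h0
    have h1 := abs_lt.1 (hb a ha)
    have h2 := hg a ha
    rcases lt_trichotomy (f a) 0 with h3 | h3 | h3
    · nlinarith
    · rw [h3] at h0; simp at h0; exact h2 h0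
    · nlinarith
  · rw [e] at h0
    have h1 := abs_lt.1 (hb a ha)
    by_contra h3
    nlinarith
  · rw [e, h1] at h0; simpa using h0

lemma span_coeff {S : Finset A} {T : Set A} (hT : T ⊆ S) {y : A} (hy : y ∈ Submodule.span ℤ T) :
    ∃ n : A → ℤ, (∀ s, s ∉ T → n s = 0) ∧ y = ∑ s ∈ S, n s • s := by
  classical
  induction hy using Submodule.span_induction with
  | mem x hx =>
    refine ⟨fun s => if s = x then 1 else 0, fun s hs => ?_, ?_⟩
    · dsimp only; rw [if_neg]; rintro rfl; exact hs hx
    · simp [ite_smul, Finset.sum_ite_eq', show x ∈ S from hT hx]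
  | zero => exact ⟨0, by simp, by simp⟩
  | add x y _ _ h1 h2 =>
    obtain ⟨n, hn, rfl⟩ := h1
    obtain ⟨m, hm, rfl⟩ := h2
    exact ⟨n + m, fun s hs => by simp [hn s hs, hm s hs],
      by simp [add_smul, Finset.sum_add_distrib]⟩
  | smul c x _ h1 =>
    obtain ⟨n, hn, rfl⟩ := h1
    exact ⟨c • n, fun s hs => by simp [hn s hs], by simp [Finset.smul_sum, mul_smul]⟩

lemma top_le_span_base {h : A →ₗ[ℤ] ℤ} (hg : ∀ a ∈ R.Om, h a ≠ 0) (x : A) :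
    x ∈ Submodule.span ℤ (R.baseOf h : Set A) := by
  have : Submodule.span ℤ (R.Om : Set A) ≤ Submodule.span ℤ (R.baseOf h : Set A) := by
    refine Submodule.span_le.2 fun a ha => ?_
    rcases lt_or_gt_of_ne (hg a ha) with h1 | h1
    · have := closure_le_span _ (R.mem_closure_base' (h := h) (R.neg a ha) (by rw [map_neg]; omega))
      simpa using this
    · exact closure_le_span _ (R.mem_closure_base' ha h1)
  rw [R.span] at this
  exact this Submodule.mem_top

lemma pure {h : A →ₗ[ℤ] ℤ} (hg : ∀ a ∈ R.Om, h a ≠ 0) {T : Set A} (hT : T ⊆ R.baseOf h)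
    {m : ℤ} (hm : m ≠ 0) {x : A} (hx : m • x ∈ Submodule.span ℤ T) : x ∈ Submodule.span ℤ T := by
  obtain ⟨n, -, hn⟩ := span_coeff (Set.Subset.refl _) (R.top_le_span_base hg x)
  obtain ⟨k, hk, hk2⟩ := span_coeff hT hx
  have h1 := R.base_indep hg (fun s => m * n s - k s) (by
    simp only [sub_smul, Finset.sum_sub_distrib, mul_smul, ← Finset.smul_sum]
    rw [← hn, ← hk2, sub_self])
  rw [hn]
  refine sum_mem fun s hs => ?_
  by_cases hsT : s ∈ T
  · exact Submodule.smul_mem _ _ (Submodule.subset_span hsT)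
  · have h2 := h1 s hs
    simp only [hk s hsT, sub_zero, mul_eq_zero, hm, false_or] at h2
    rw [h2, zero_smul]; exact zero_mem _

lemma not_mem_span {h : A →ₗ[ℤ] ℤ} (hg : ∀ a ∈ R.Om, h a ≠ 0) {T : Set A} (hT : T ⊆ R.baseOf h)
    {s : A} (hs : s ∈ R.baseOf h) (hsT : s ∉ T) : s ∉ Submodule.span ℤ T := by
  classical
  intro hcon
  obtain ⟨n, hn, hn2⟩ := span_coeff hT hcon
  have h1 := R.base_indep hg (fun t => n t - if t = s then 1 else 0) (by
    simp only [sub_smul, Finset.sum_sub_distrib, ite_smul, one_smul, zero_smul,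
      Finset.sum_ite_eq', hs, if_true]
    rw [← hn2, sub_self]) s hs
  simp [hn s hsT] at h1

lemma line_span {Z : Submodule ℤ A} {t : A} {X : Set A} (hX : ∀ a ∈ X, ∃ k : ℤ, a - k • t ∈ Z)
    {y : A} (hy : y ∈ Submodule.span ℤ X) : ∃ k : ℤ, y - k • t ∈ Z := by
  induction hy using Submodule.span_induction with
  | mem x hx => exact hX x hx
  | zero => exact ⟨0, by simp⟩
  | add x y _ _ h1 h2 =>
    obtain ⟨n, hn⟩ := h1
    obtain ⟨m, hm⟩ := h2
    refine ⟨n + m, ?_⟩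
    have : x + y - (n + m) • t = (x - n • t) + (y - m • t) := by rw [add_smul]; abel
    rw [this]; exact add_mem hn hm
  | smul c x _ h1 =>
    obtain ⟨n, hn⟩ := h1
    refine ⟨c * n, ?_⟩
    have : c • x - (c * n) • t = c • (x - n • t) := by rw [smul_sub, mul_smul]
    rw [this]; exact Submodule.smul_mem _ _ hn

lemma core (P : Set A) {N : ℤ} (hN : 0 < N) (F g h0 : A →ₗ[ℤ] ℤ)
    (hP : ∀ a, a ∈ P ↔ a ∈ R.Om ∧ N ∣ F a) (hFN : ∀ a ∈ R.Om, F a ≤ N)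
    (hgP : ∀ a ∈ R.Om, g a = 0 ↔ ∃ m : ℤ, m ≠ 0 ∧ m • a ∈ Submodule.span ℤ P)
    (hh0 : ∀ a ∈ R.Om, h0 a ≠ 0) {x : A} {m : ℤ} (hm : m ≠ 0)
    (hmx : m • x ∈ Submodule.span ℤ P) (hx : x ∉ Submodule.span ℤ P) :
    ∃ a ∈ R.Om, a - x ∈ Submodule.span ℤ P := by
  obtain ⟨h1, hg1, hF1, -⟩ := R.lex F h0 hh0
  obtain ⟨h, hg, hgnn, hg0⟩ := R.lex g h1 hg1
  have hFnn : ∀ a ∈ R.Om, 0 < h a → g a = 0 → 0 ≤ F a := fun a ha h2 h3 =>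
    hF1 a ha (hg0 a ha h2 h3)
  set W := Submodule.span ℤ P with hW
  set S' : Set A := {s | s ∈ R.baseOf h ∧ g s = 0} with hS'
  set S0 : Set A := {s | s ∈ R.baseOf h ∧ g s = 0 ∧ F s = 0} with hS0
  set Z := Submodule.span ℤ S0 with hZ
  have hSO : ∀ s ∈ R.baseOf h, s ∈ R.Om ∧ 0 < h s := fun s hs =>
    ⟨(R.mem_base.1 hs).1, (R.mem_base.1 hs).2.1⟩
  have hZW : Z ≤ W := Submodule.span_le.2 fun s hs =>
    Submodule.subset_span ((hP s).2 ⟨(hSO s hs.1).1, by rw [hs.2.2]; exact dvd_zero _⟩)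
  have hgP0 : ∀ a ∈ P, g a = 0 := fun a ha =>
    (hgP a ((hP a).1 ha).1).2 ⟨1, one_ne_zero, by rw [one_smul]; exact Submodule.subset_span ha⟩
  -- sign reduction
  have sgn : ∀ (T : Submodule ℤ A) (a : A), a ∈ R.Om →
      (0 < h a → a ∈ T) → (0 < h (-a) → -a ∈ T) → a ∈ T := by
    intro T a ha p1 p2
    rcases lt_or_gt_of_ne (hg a ha) with h2 | h2
    · have := p2 (by rw [map_neg]; omega)
      simpa using this
    · exact p1 h2
  have hpos0 : ∀ a ∈ R.Om, 0 < h a → (g a = 0 → F a = 0 → a ∈ Z) := by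
    refine R.pos_induction hg (p := fun a => g a = 0 → F a = 0 → a ∈ Z) ?_ ?_
    · intro s hs h2 h3
      exact Submodule.subset_span ⟨hs, h2, h3⟩
    · intro a ha ha0 ih s hs has h2 h3
      obtain ⟨hs1, hs2⟩ := hSO s hs
      rw [map_add] at h2 h3
      have q1 := hgnn a ha ha0
      have q2 := hgnn s hs1 hs2
      have q3 := hFnn a ha ha0 (by omega)
      have q4 := hFnn s hs1 hs2 (by omega)
      exact add_mem (ih (by omega) (by omega))
        (Submodule.subset_span ⟨hs, by omega, by omega⟩)
  have hpos1 : ∀ a ∈ R.Om, 0 < h a → (g a = 0 → a ∈ Submodule.span ℤ S') := by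
    refine R.pos_induction hg (p := fun a => g a = 0 → a ∈ Submodule.span ℤ S') ?_ ?_
    · intro s hs h2
      exact Submodule.subset_span ⟨hs, h2⟩
    · intro a ha ha0 ih s hs has h2
      obtain ⟨hs1, hs2⟩ := hSO s hs
      rw [map_add] at h2
      have q1 := hgnn a ha ha0
      have q2 := hgnn s hs1 hs2
      exact add_mem (ih (by omega)) (Submodule.subset_span ⟨hs, by omega⟩)
  have hP0Z : ∀ a ∈ R.Om, F a = 0 → a ∈ Z := by
    intro a ha hFa
    have hga := hgP0 a ((hP a).2 ⟨ha, by rw [hFa]; exact dvd_zero _⟩)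
    exact sgn Z a ha (fun h2 => hpos0 a ha h2 hga hFa)
      (fun h2 => hpos0 (-a) (R.neg a ha) h2 (by simpa using hga) (by simpa using hFa))
  have hWS' : W ≤ Submodule.span ℤ S' := Submodule.span_le.2 fun a ha => by
    have hga := hgP0 a ha
    have haO := ((hP a).1 ha).1
    exact sgn _ a haO (fun h2 => hpos1 a haO h2 hga)
      (fun h2 => hpos1 (-a) (R.neg a haO) h2 (by simpa using hga))
  have hS'S : S' ⊆ R.baseOf h := fun s hs => hs.1
  have hS0S : S0 ⊆ R.baseOf h := fun s hs => hs.1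
  have tri : ∀ a ∈ P, F a = 0 ∨ F a = N ∨ F a = -N := by
    intro a ha
    obtain ⟨haO, k, hk⟩ := (hP a).1 ha
    have q1 := hFN a haO
    have q2 := hFN (-a) (R.neg a haO)
    rw [map_neg] at q2
    rw [hk] at q1 q2 ⊢
    have k1 : k ≤ 1 := by nlinarith
    have k2 : -1 ≤ k := by nlinarith
    have : k = 0 ∨ k = 1 ∨ k = -1 := by omega
    rcases this with rfl | rfl | rfl <;> simp
  by_cases hth : ∃ t ∈ R.Om, F t = N
  swap
  · exfalso
    have hWZ : W ≤ Z := Submodule.span_le.2 fun a ha => by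
      have haO := ((hP a).1 ha).1
      rcases tri a ha with h2 | h2 | h2
      · exact hP0Z a haO h2
      · exact (hth ⟨a, haO, h2⟩).elim
      · exact (hth ⟨-a, R.neg a haO, by rw [map_neg]; omega⟩).elim
    exact hx (hZW (R.pure hg hS0S hm (hWZ hmx)))
  obtain ⟨t, ht, htN⟩ := hth
  have htP : t ∈ P := (hP t).2 ⟨ht, by rw [htN]⟩
  have htW : t ∈ W := Submodule.subset_span htP
  have hZspan : Submodule.span ℤ {a | a ∈ R.Om ∧ F a = 0} ≤ Z :=
    Submodule.span_le.2 fun a ha => hP0Z a ha.1 ha.2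
  have hWline : ∀ w ∈ W, ∃ k : ℤ, w - k • t ∈ Z := by
    intro w hw
    refine line_span (fun a ha => ?_) hw
    have haO := ((hP a).1 ha).1
    rcases tri a ha with h2 | h2 | h2
    · exact ⟨0, by simpa using hP0Z a haO h2⟩
    · exact ⟨1, by
        rw [one_smul]
        exact hZspan (R.top_coset hg1 hF1 hN hFN haO ht h2 htN)⟩
    · refine ⟨-1, ?_⟩
      have := hZspan (R.top_coset hg1 hF1 hN hFN (R.neg a haO) ht (by rw [map_neg]; omega) htN)
      have e : a - (-1 : ℤ) • t = -(-a - t) := by rw [neg_smul, one_smul]; abel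
      rw [e]; exact neg_mem this
  have hFZ : ∀ z ∈ Z, F z = 0 := by
    have : Z ≤ LinearMap.ker F := Submodule.span_le.2 fun s hs => hs.2.2
    exact fun z hz => this hz
  have hgt := hgP0 t htP
  have htpos : 0 < h t := by
    rcases lt_or_gt_of_ne (hg t ht) with h2 | h2
    · have := hFnn (-t) (R.neg t ht) (by rw [map_neg]; omega) (by simpa using hgt)
      rw [map_neg] at this
      omega
    · exact h2
  have hF' : ∀ s ∈ S', 0 ≤ F s := fun s hs => hFnn s (hSO s hs.1).1 (hSO s hs.1).2 hs.2
  obtain ⟨b, hbS, hbF⟩ : ∃ b ∈ S', 0 < F b := by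
    by_contra hcon
    push Not at hcon
    have : Submodule.span ℤ S' ≤ LinearMap.ker F := Submodule.span_le.2 fun s hs =>
      le_antisymm (hcon s hs) (hF' s hs)
    have : F t = 0 := this (hWS' htW)
    omega
  have lineS : ∀ s ∈ S', 0 < F s → ∃ m k : ℤ, m ≠ 0 ∧ k ≠ 0 ∧ m • s - k • t ∈ Z := by
    intro s hs hsF
    obtain ⟨m, hm, hms⟩ := (hgP s (hSO s hs.1).1).1 hs.2
    obtain ⟨k, hk⟩ := hWline _ hms
    refine ⟨m, k, hm, ?_, hk⟩
    rintro rfl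
    have := hFZ _ hk
    simp only [zero_smul, sub_zero, map_smul, smul_eq_mul, mul_eq_zero, hm, false_or] at this
    omega
  have uniq : ∀ s ∈ S', s = b ∨ F s = 0 := by
    intro s hs
    by_contra hcon
    push Not at hcon
    have hsF : 0 < F s := lt_of_le_of_ne (hF' s hs) (Ne.symm hcon.2)
    obtain ⟨m1, k1, hm1, hk1, hz1⟩ := lineS s hs hsF
    obtain ⟨m2, k2, hm2, hk2, hz2⟩ := lineS b hbS hbF
    have hT : insert b S0 ⊆ (R.baseOf h : Set A) := Set.insert_subset hbS.1 hS0S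
    have hmem : (k2 * m1) • s ∈ Submodule.span ℤ (insert b S0) := by
      have e : (k2 * m1) • s = k2 • (m1 • s - k1 • t) - k1 • (m2 • b - k2 • t)
          + (k1 * m2) • b := by
        simp only [smul_sub, smul_smul, mul_comm k1 k2]; abel
      rw [e]
      have hle : Z ≤ Submodule.span ℤ (insert b S0) := Submodule.span_mono (Set.subset_insert _ _)
      exact add_mem (sub_mem (Submodule.smul_mem _ _ (hle hz1)) (Submodule.smul_mem _ _ (hle hz2)))
        (Submodule.smul_mem _ _ (Submodule.subset_span (Set.mem_insert _ _)))
    refine R.not_mem_span hg hT hs.1 ?_ (R.pure hg hT (mul_ne_zero hk2 hm1) hmem)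
    rintro (h2 | h2)
    · exact hcon.1 h2
    · exact hcon.2 h2.2.2
  have lineb : ∀ y ∈ Submodule.span ℤ S', ∃ j : ℤ, y - j • b ∈ Z := by
    intro y hy
    refine line_span (fun s hs => ?_) hy
    rcases uniq s hs with rfl | h2
    · exact ⟨1, by simp⟩
    · exact ⟨0, by
        rw [zero_smul, sub_zero]
        exact Submodule.subset_span ⟨hs.1, hs.2, h2⟩⟩
  obtain ⟨j, hj⟩ := lineb x (R.pure hg hS'S hm (hWS' hmx))
  obtain ⟨k, hk⟩ := lineb t (hWS' htW)
  have hFk : ∀ (a : A) (k : ℤ), a - k • b ∈ Z → F a = k * F b := by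
    intro a k hz
    have := hFZ _ hz
    simp only [map_sub, map_smul, smul_eq_mul] at this
    omega
  have hkpos : 0 < k := by
    have := hFk t k hk
    by_contra hcon
    nlinarith
  have hkW : k • b ∈ W := by
    have : k • b = t - (t - k • b) := by abel
    rw [this]; exact sub_mem htW (hZW hk)
  set j0 := j % k with hj0
  have hj0W : x - j0 • b ∈ W := by
    have : x - j0 • b = (x - j • b) + (j / k) • (k • b) := by
      rw [smul_smul]
      have e : j0 = j - j / k * k := by rw [hj0]; have := Int.emod_add_mul_ediv j k; linarith
      rw [e, sub_smul]
      abel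
    rw [this]
    exact add_mem (hZW hj) (Submodule.smul_mem _ _ hkW)
  have hj0lt : j0 < k := Int.emod_lt_of_pos _ hkpos
  have hj0nn : 0 ≤ j0 := Int.emod_nonneg _ (by omega)
  have hj0ne : j0 ≠ 0 := by
    intro h2
    rw [h2, zero_smul, sub_zero] at hj0W
    exact hx hj0W
  have chain : ∀ a ∈ R.Om, 0 < h a → (g a = 0 → ∀ k : ℤ, a - k • b ∈ Z → j0 ≤ k →
      ∃ c ∈ R.Om, c - j0 • b ∈ Z) := by
    refine R.pos_induction hg (p := fun a => g a = 0 → ∀ k : ℤ, a - k • b ∈ Z → j0 ≤ k →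
      ∃ c ∈ R.Om, c - j0 • b ∈ Z) ?_ ?_
    · intro s hs h2 k hk hjk
      rcases eq_or_lt_of_le hjk with h3 | h3
      · exact ⟨s, (hSO s hs).1, h3 ▸ hk⟩
      · exfalso
        have q := hFk s k hk
        have hk2 : 2 ≤ k := by omega
        rcases uniq s ⟨hs, h2⟩ with rfl | h4
        · nlinarith
        · nlinarith
    · intro a ha ha0 ih s hs has h2 k hk hjk
      rcases eq_or_lt_of_le hjk with h3 | h3
      · exact ⟨a + s, has, h3 ▸ hk⟩
      · obtain ⟨hs1, hs2⟩ := hSO s hs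
        rw [map_add] at h2
        have q1 := hgnn a ha ha0
        have q2 := hgnn s hs1 hs2
        have hgs : g s = 0 := by omega
        rcases uniq s ⟨hs, hgs⟩ with rfl | h4
        · refine ih (by omega) (k - 1) ?_ (by omega)
          have : a - (k - 1) • s = a + s - k • s := by rw [sub_smul, one_smul]; abel
          rw [this]; exact hk
        · refine ih (by omega) k ?_ (by omega)
          have : a - k • b = (a + s - k • b) - s := by abel
          rw [this]; exact sub_mem hk (Submodule.subset_span ⟨hs, hgs, h4⟩)
  obtain ⟨c, hc, hcZ⟩ := chain t ht htpos hgt k hk hj0lt.le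
  refine ⟨c, hc, ?_⟩
  have : c - x = (c - j0 • b) - (x - j0 • b) := by abel
  rw [this]
  exact sub_mem (hZW hcZ) hj0W

lemma closed_list {P : Set A} (hPO : P ⊆ R.Om) 
    (hadd : ∀ a ∈ P, ∀ b ∈ P, a + b ∈ R.Om → a + b ∈ P) :
    ∀ (n : ℕ) (l : Multiset A), l.card = n → (∀ p ∈ l, p ∈ P) → l.sum ∈ R.Om → l.sum ∈ P := by
  intro n
  induction n with
  | zero =>
    intro l hl _ h
    rw [Multiset.card_eq_zero.1 hl] at h
    exact absurd h (by simpa using R.zero_not)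
  | succ n ih =>
    intro l hl hlP h
    have hpos := R.pos _ (R.ne_zero h)
    obtain ⟨p, hp, hp0⟩ : ∃ p ∈ l, 0 < R.B l.sum p := by
      by_contra hcon
      push Not at hcon
      have : R.B l.sum l.sum = (l.map (fun p => R.B l.sum p)).sum := by
        conv_lhs => rw [map_multiset_sum]
      have h2 : (l.map (fun p => R.B l.sum p)).sum ≤ 0 := by
        have h7 : ∀ x ∈ l.map (fun p => R.B l.sum p), x ≤ 0 := by
          intro x hx
          obtain ⟨p, hp, rfl⟩ := Multiset.mem_map.1 hx
          exact hcon p hp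
        simpa using Multiset.sum_le_card_nsmul _ _ h7
      omega
    by_cases he : l.sum = p
    · rw [he]; exact hlP p hp
    have h3 := R.root_sub h (hPO (hlP p hp)) hp0 he
    obtain ⟨l', rfl⟩ := Multiset.exists_cons_of_mem hp
    have h4 : (p ::ₘ l').sum - p = l'.sum := by simp
    rw [h4] at h3
    have h5 := ih l' (by simpa using hl) (fun q hq => hlP q (by simp [hq])) h3
    have h6 := hadd p (hlP p hp) _ h5 (by simpa using h)
    simpa using h6

lemma closed_span {P : Set A} (hPO : P ⊆ R.Om) (hneg : ∀ a ∈ P, -a ∈ P)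
    (hadd : ∀ a ∈ P, ∀ b ∈ P, a + b ∈ R.Om → a + b ∈ P) {a : A} (ha : a ∈ R.Om)
    (has : a ∈ Submodule.span ℤ P) : a ∈ P := by
  have h1 : a ∈ AddSubmonoid.closure P := by
    refine Submodule.span_induction (p := fun x _ => x ∈ AddSubmonoid.closure P) ?_ ?_ ?_ ?_ has
    · intro x hx; exact AddSubmonoid.subset_closure hx
    · exact zero_mem _
    · intro x y _ _ hx hy; exact add_mem hx hy
    · intro k x _ hx
      have hnx : -x ∈ AddSubmonoid.closure P := by
        refine AddSubmonoid.closure_induction (motive := fun x _ => -x ∈ AddSubmonoid.closure P)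
          ?_ ?_ ?_ hx
        · intro x hx; exact AddSubmonoid.subset_closure (hneg x hx)
        · simp
        · intro x y _ _ hx hy; rw [neg_add]; exact add_mem hx hy
      rcases Int.eq_nat_or_neg k with ⟨n, rfl | rfl⟩
      · rw [natCast_zsmul]; exact nsmul_mem hx n
      · rw [neg_smul, ← smul_neg, natCast_zsmul]; exact nsmul_mem hnx n
  obtain ⟨l, hl, rfl⟩ := AddSubmonoid.exists_multiset_of_mem_closure h1
  exact R.closed_list hPO hadd _ l rfl hl ha

lemma exists_functional {M : Type*} [AddCommGroup M] [Module.Finite ℤ M] [Module.Free ℤ M]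
    (X : Finset M) (hX : ∀ x ∈ X, x ≠ 0) : ∃ f : M →ₗ[ℤ] ℤ, ∀ x ∈ X, f x ≠ 0 := by
  classical
  induction X using Finset.induction_on with
  | empty => exact ⟨0, by simp⟩
  | insert y X hy ih =>
    obtain ⟨f, hf⟩ := ih fun x hx => hX x (Finset.mem_insert_of_mem hx)
    obtain ⟨e, he⟩ : ∃ e : M →ₗ[ℤ] ℤ, e y ≠ 0 := by
      by_contra hcon
      push Not at hcon
      let b := Module.Free.chooseBasis ℤ M
      apply hX y (Finset.mem_insert_self _ _)
      apply b.ext_elem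
      intro i
      simpa using hcon (b.coord i)
    by_cases hfy : f y = 0
    · set K : ℤ := 1 + ∑ x ∈ X, |e x| with hK
      refine ⟨K • f + e, ?_⟩
      intro x hx
      rcases Finset.mem_insert.1 hx with rfl | hx
      · simpa [hfy] using he
      · have h1 : |e x| ≤ ∑ x ∈ X, |e x| :=
          Finset.single_le_sum (f := fun x => |e x|) (fun _ _ => abs_nonneg _) hx
        intro h
        simp only [LinearMap.add_apply, LinearMap.smul_apply, smul_eq_mul] at h
        have h2 : |e x| = K * |f x| := by
          rw [show e x = - (K * f x) by linarith, abs_neg, abs_mul, abs_of_pos]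
          have := abs_nonneg (e x)
          omega
        have h3 : 1 ≤ |f x| := Int.one_le_abs (hf x hx)
        have := abs_nonneg (e x)
        nlinarith
    · refine ⟨f, fun x hx => ?_⟩
      rcases Finset.mem_insert.1 hx with rfl | hx
      · exact hfy
      · exact hf x hx

/-- saturation -/
def sat (W : Submodule ℤ A) : Submodule ℤ A where
  carrier := {x | ∃ m : ℤ, m ≠ 0 ∧ m • x ∈ W}
  zero_mem' := ⟨1, one_ne_zero, by simp⟩
  add_mem' := by
    rintro x y ⟨m, hm, hx⟩ ⟨n, hn, hy⟩
    refine ⟨m * n, mul_ne_zero hm hn, ?_⟩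
    rw [smul_add, mul_comm, mul_smul, mul_comm, mul_smul]
    exact add_mem (W.smul_mem _ hx) (W.smul_mem _ hy)
  smul_mem' := by
    rintro k x ⟨m, hm, hx⟩
    exact ⟨m, hm, by rw [smul_comm]; exact W.smul_mem _ hx⟩

lemma mem_sat {W : Submodule ℤ A} {x : A} : x ∈ sat W ↔ ∃ m : ℤ, m ≠ 0 ∧ m • x ∈ W := Iff.rfl

lemma main (P : Set A) (hPO : P ⊆ R.Om) (hneg : ∀ a ∈ P, -a ∈ P)
    (hadd : ∀ a ∈ P, ∀ b ∈ P, a + b ∈ R.Om → a + b ∈ P)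
    (t : A) (ht : t ∈ sat (Submodule.span ℤ P))
    (hcyc : ∀ x ∈ sat (Submodule.span ℤ P), ∃ k : ℤ, x - k • t ∈ Submodule.span ℤ P)
    {x : A} (hxs : x ∈ sat (Submodule.span ℤ P)) (hx : x ∉ Submodule.span ℤ P) :
    ∃ a ∈ R.Om, a - x ∈ Submodule.span ℤ P := by
  classical
  set W := Submodule.span ℤ P with hW
  have : Module.Finite ℤ A := ⟨⟨R.Om, R.span⟩⟩
  have : Module.IsTorsionFree ℤ A := by
    rw [Module.isTorsionFree_iff_smul_eq_zero]
    intro m x h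
    by_cases hm : m = 0
    · exact Or.inl hm
    · exact Or.inr (R.smul_eq_zero' hm h)
  have : Module.IsTorsionFree ℤ (A ⧸ sat W) := by
    rw [Module.isTorsionFree_iff_smul_eq_zero]
    intro m x h
    by_cases hm : m = 0
    · exact Or.inl hm
    right
    obtain ⟨x, rfl⟩ := Submodule.Quotient.mk_surjective _ x
    rw [← Submodule.Quotient.mk_smul, Submodule.Quotient.mk_eq_zero] at h
    rw [Submodule.Quotient.mk_eq_zero]
    obtain ⟨n, hn, h⟩ := h
    exact ⟨n * m, mul_ne_zero hn hm, by rwa [mul_smul]⟩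
  obtain ⟨h0, hh0⟩ := exists_functional R.Om fun x hx => R.ne_zero hx
  obtain ⟨g', hg'⟩ := exists_functional ((R.Om.image (sat W).mkQ).erase 0)
    fun x hx => Finset.ne_of_mem_erase hx
  set g := g' ∘ₗ (sat W).mkQ with hgdef
  have hgP : ∀ a ∈ R.Om, g a = 0 ↔ a ∈ sat W := by
    intro a ha
    constructor
    · intro h
      by_contra hcon
      refine hg' ((sat W).mkQ a) ?_ h
      rw [Finset.mem_erase]
      refine ⟨?_, Finset.mem_image_of_mem _ ha⟩
      simpa using hcon
    · intro h
      have : (sat W).mkQ a = 0 := by simpa using h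
      rw [hgdef, LinearMap.comp_apply, this, map_zero]
  obtain ⟨σ, hσ⟩ := Module.projective_lifting_property (sat W).mkQ LinearMap.id
    (Submodule.mkQ_surjective _)
  set π : A →ₗ[ℤ] A := LinearMap.id - σ ∘ₗ (sat W).mkQ with hπ
  have hπm : ∀ a, π a ∈ sat W := by
    intro a
    rw [← Submodule.Quotient.mk_eq_zero, ← Submodule.mkQ_apply]
    have := LinearMap.congr_fun hσ ((sat W).mkQ a)
    simp only [LinearMap.comp_apply, LinearMap.id_apply] at this
    simp only [hπ, LinearMap.sub_apply, LinearMap.comp_apply, LinearMap.id_apply, map_sub]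
    rw [this, sub_self]
  have hπi : ∀ a ∈ sat W, π a = a := by
    intro a ha
    have : (sat W).mkQ a = 0 := by simpa using ha
    simp [hπ, LinearMap.sub_apply, LinearMap.comp_apply, LinearMap.id_apply] 
    simp [(Submodule.Quotient.mk_eq_zero _).2 ha]
  let b := Module.Free.chooseBasis ℤ A
  choose k hk using fun i => hcyc (π (b i)) (hπm (b i))
  set F0 : A →ₗ[ℤ] ℤ := b.constr ℤ k with hF0
  have hF : ∀ a, π a - F0 a • t ∈ W := by
    intro a
    have h1 : W.mkQ ∘ₗ (π - (LinearMap.toSpanSingleton ℤ A t) ∘ₗ F0) = 0 := by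
      apply b.ext
      intro i
      simp only [LinearMap.comp_apply, LinearMap.sub_apply, LinearMap.zero_apply,
        LinearMap.toSpanSingleton_apply, hF0, Module.Basis.constr_basis]
      rw [Submodule.mkQ_apply, Submodule.Quotient.mk_eq_zero]
      exact hk i
    have h2 := LinearMap.congr_fun h1 a
    simp only [LinearMap.comp_apply, LinearMap.sub_apply, LinearMap.zero_apply,
        LinearMap.toSpanSingleton_apply] at h2
    rwa [Submodule.mkQ_apply, Submodule.Quotient.mk_eq_zero] at h2
  obtain ⟨n, hn, hnt⟩ : ∃ n : ℤ, 0 < n ∧ ∀ k : ℤ, k • t ∈ W ↔ n ∣ k := by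
    let I : Ideal ℤ := W.comap (LinearMap.toSpanSingleton ℤ A t)
    have hI : ∀ k : ℤ, k • t ∈ W ↔ Submodule.IsPrincipal.generator I ∣ k := by
      intro k
      rw [← Submodule.IsPrincipal.mem_iff_generator_dvd]
      rfl
    obtain ⟨m, hm, hmt⟩ := ht
    refine ⟨|Submodule.IsPrincipal.generator I|, ?_, ?_⟩
    · rw [abs_pos]
      intro h
      rw [hI, h, zero_dvd_iff] at hmt
      exact hm hmt
    · intro k; rw [hI, abs_dvd]
  have hFW : ∀ a ∈ sat W, a ∈ W ↔ n ∣ F0 a := by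
    intro a ha
    have h1 := hF a
    rw [hπi a ha] at h1
    rw [← hnt]
    constructor
    · intro h
      have := W.sub_mem h h1
      simpa using this
    · intro h
      have := W.add_mem h1 h
      simpa using this
  set M : ℤ := 1 + ∑ a ∈ R.Om, |g a| with hM
  have hM0 : 0 < M := by
    have : 0 ≤ ∑ a ∈ R.Om, |g a| := Finset.sum_nonneg fun _ _ => abs_nonneg _
    omega
  have hgM : ∀ a ∈ R.Om, |g a| < M := by
    intro a ha
    have : |g a| ≤ ∑ a ∈ R.Om, |g a| :=
      Finset.single_le_sum (f := fun x => |g x|) (fun _ _ => abs_nonneg _) ha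
    omega
  have hPW : P ⊆ W := Submodule.subset_span
  have hWs : ∀ a ∈ W, a ∈ sat W := fun a ha => ⟨1, one_ne_zero, by simpa using ha⟩
  have hPF : ∀ a, a ∈ P ↔ a ∈ R.Om ∧ n * M ∣ (M • F0 + g) a := by
    intro a
    simp only [LinearMap.add_apply, LinearMap.smul_apply, smul_eq_mul]
    constructor
    · intro ha
      refine ⟨hPO ha, ?_⟩
      have haW := hPW ha
      rw [(hgP a (hPO ha)).2 (hWs a haW), add_zero, mul_comm]
      exact mul_dvd_mul_left _ ((hFW a (hWs a haW)).1 haW)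
    · rintro ⟨ha, hd⟩
      have hMg : M ∣ g a :=
        (dvd_add_right (dvd_mul_right M (F0 a))).1 (dvd_trans (dvd_mul_left M n) hd)
      have hg0 : g a = 0 := Int.eq_zero_of_abs_lt_dvd hMg (hgM a ha)
      have has := (hgP a ha).1 hg0
      rw [hg0, add_zero, mul_comm] at hd
      have := Int.dvd_of_mul_dvd_mul_left hM0.ne' hd
      exact R.closed_span hPO hneg hadd ha ((hFW a has).2 this)
  have hN : 0 < n * M := by positivity
  obtain ⟨F', hF'1, hF'2⟩ := R.exists_small (n * M) hN
    (∑ a ∈ R.Om, ((M • F0 + g) a) ^ 2).toNat (M • F0 + g)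
    (by rw [Int.toNat_of_nonneg]; exact Finset.sum_nonneg fun _ _ => sq_nonneg _)
  obtain ⟨m, hm, hmx⟩ := hxs
  refine R.core P hN F' g h0 (fun a => by rw [hPF a, hF'1]) hF'2 hgP hh0 hm hmx hx

end AbsRS
section Inst
open Set Module.End
variable {ι V N : Type*} [Fintype ι] [AddCommGroup V] [Module ℂ V] [AddCommGroup N] [Module ℂ N]
  (P : RootPairing ι ℂ V N) [P.IsCrystallographic]

namespace RPaux

lemma two_mul_form (i : ι) (x : P.rootSpan ℤ) :
    2 * P.RootFormIn ℤ (P.rootSpanMem ℤ i) x =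
      P.RootFormIn ℤ (P.rootSpanMem ℤ i) (P.rootSpanMem ℤ i) * P.coroot'In ℤ i x := by
  have h := P.rootFormIn_self_smul_coroot ℤ i
  have h2 := congrArg (P.toLinearMap (x : V)) h
  rw [map_zsmul, map_nsmul, P.toLinearMap_apply_PolarizationIn ℤ] at h2
  have h3 : P.toLinearMap (x : V) (P.coroot i) = algebraMap ℤ ℂ (P.coroot'In ℤ i x) := by
    rw [P.algebraMap_coroot'In_apply]; rfl
  rw [h3] at h2
  apply (algebraMap ℤ ℂ).injective_int
  simp only [map_mul] at h2 ⊢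
  simpa using h2.symm

open Classical in
noncomputable def cc (a : P.rootSpan ℤ) : P.rootSpan ℤ →ₗ[ℤ] ℤ :=
  if h : ∃ i, P.rootSpanMem ℤ i = a then P.coroot'In ℤ h.choose else 0

lemma mem_inj {i j : ι} (h : P.rootSpanMem ℤ i = P.rootSpanMem ℤ j) : i = j :=
  P.root.injective (congrArg Subtype.val h)

lemma cc_root (i : ι) : cc P (P.rootSpanMem ℤ i) = P.coroot'In ℤ i := by
  have h : ∃ j, P.rootSpanMem ℤ j = P.rootSpanMem ℤ i := ⟨i, rfl⟩
  rw [cc, dif_pos h, mem_inj P h.choose_spec]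

lemma form_pos {x : P.rootSpan ℤ} (hx : x ≠ 0) : 0 < P.RootFormIn ℤ x x := by
  simpa using P.posRootForm_posForm_pos_of_ne_zero ℤ hx

lemma rsm_ne_zero (i : ι) : P.rootSpanMem ℤ i ≠ 0 := fun h => P.ne_zero i (congrArg Subtype.val h)

lemma form_eq_zero {i j : ι} (h : P.RootFormIn ℤ (P.rootSpanMem ℤ i) (P.rootSpanMem ℤ j) = 0) :
    P.pairing j i = 0 := by
  have h1 := two_mul_form P i (P.rootSpanMem ℤ j)
  rw [h, P.coroot'In_rootSpanMem_eq_pairingIn] at h1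
  have h2 := form_pos P (rsm_ne_zero P i)
  rw [← P.algebraMap_pairingIn ℤ]
  rcases mul_eq_zero.1 (h1.symm.trans (mul_zero 2)) with h3 | h3
  · omega
  · rw [h3]; simp

open Classical in
noncomputable def absRS [P.IsReduced] [P.IsIrreducible] : AbsRS (P.rootSpan ℤ) where
  Om := Finset.univ.image (P.rootSpanMem ℤ)
  B := P.RootFormIn ℤ
  c := cc P
  symm x y := by simpa using (P.rootFormIn_isSymm ℤ).eq x y
  pos x hx := form_pos P hx
  zero_not := by
    simp only [Finset.mem_image, Finset.mem_univ, true_and, not_exists]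
    exact rsm_ne_zero P
  neg := by
    simp only [Finset.mem_image, Finset.mem_univ, true_and]
    rintro _ ⟨i, rfl⟩
    exact ⟨P.reflectionPerm i i, Subtype.ext (by simp)⟩
  add := by
    simp only [Finset.mem_image, Finset.mem_univ, true_and]
    rintro _ ⟨i, rfl⟩ _ ⟨j, rfl⟩ hB hne
    have h1 := two_mul_form P i (P.rootSpanMem ℤ j)
    rw [P.coroot'In_rootSpanMem_eq_pairingIn] at h1
    have h2 := form_pos P (rsm_ne_zero P i)
    have h3 : P.pairingIn ℤ j i < 0 := by
      by_contra hcon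
      nlinarith
    have h4 : P.root j ≠ - P.root i := by
      intro h
      apply hne
      apply Subtype.ext
      simp [h]
    obtain ⟨k, hk⟩ := P.root_add_root_mem_of_pairingIn_neg h3 h4
    exact ⟨k, Subtype.ext (by simp [hk, add_comm])⟩
  span := by
    rw [eq_top_iff]
    rintro ⟨x, hx⟩ -
    refine Submodule.span_induction (p := fun x hx => (⟨x, hx⟩ : P.rootSpan ℤ) ∈ Submodule.span ℤ
      ((Finset.univ.image (P.rootSpanMem ℤ) : Finset _) : Set (P.rootSpan ℤ))) ?_ ?_ ?_ ?_ hx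
    · rintro _ ⟨i, rfl⟩
      apply Submodule.subset_span
      simp only [Finset.coe_image, Finset.coe_univ, image_univ]
      exact ⟨i, rfl⟩
    · exact zero_mem _
    · intro x y hx hy h1 h2; exact add_mem h1 h2
    · intro k x hx h1; exact Submodule.smul_mem _ k h1
  hc := by
    simp only [Finset.mem_image, Finset.mem_univ, true_and]
    rintro _ ⟨i, rfl⟩ x
    rw [cc_root]
    exact two_mul_form P i x
  refl := by
    simp only [Finset.mem_image, Finset.mem_univ, true_and]
    rintro _ ⟨i, rfl⟩ _ ⟨j, rfl⟩
    refine ⟨P.reflectionPerm i j, Subtype.ext ?_⟩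
    rw [cc_root, P.coroot'In_rootSpanMem_eq_pairingIn]
    change P.root (P.reflectionPerm i j) = P.root j - P.pairingIn ℤ j i • P.root i
    rw [RootPairing.root_reflectionPerm, RootPairing.reflection_apply_root,
      ← P.algebraMap_pairingIn ℤ, algebraMap_smul]
  irr := by
    simp only [Finset.mem_image, Finset.mem_univ, true_and]
    rintro X hX ⟨x, hx⟩ hort _ ⟨b, rfl⟩
    by_contra hb
    let q : Submodule ℂ V := Submodule.span ℂ (Subtype.val '' X)
    have hq : q = ⊤ := by
      apply RootPairing.IsIrreducible.eq_top_of_invtSubmodule_reflection (P := P)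
      · intro i
        rw [Module.End.mem_invtSubmodule]
        refine Submodule.span_le.2 ?_
        rintro _ ⟨y, hy, rfl⟩
        have hyO := hX hy
        simp only [Finset.coe_image, Finset.coe_univ, image_univ] at hyO
        obtain ⟨j, rfl⟩ := hyO
        change P.reflection i (P.root j) ∈ q
        have hj : P.root j ∈ q := Submodule.subset_span ⟨_, hy, rfl⟩
        rw [P.reflection_apply_root]
        by_cases hi : P.rootSpanMem ℤ i ∈ X
        · exact sub_mem hj (q.smul_mem _ (Submodule.subset_span ⟨_, hi, rfl⟩))
        · have h0 := hort _ hy (P.rootSpanMem ℤ i) ⟨i, rfl⟩ hi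
          rw [← (P.rootFormIn_isSymm ℤ).eq] at h0
          rw [form_eq_zero P (by simpa using h0), zero_smul, sub_zero]
          exact hj
      · intro h
        have hxO := hX hx
        simp only [Finset.coe_image, Finset.coe_univ, image_univ] at hxO
        obtain ⟨j, rfl⟩ := hxO
        have hj : P.root j ∈ q := Submodule.subset_span ⟨_, hx, rfl⟩
        rw [h, Submodule.mem_bot] at hj
        exact P.ne_zero j hj
    have hall : ∀ y ∈ q, P.RootForm y (P.root b) = 0 := by
      intro y hy
      refine Submodule.span_induction (p := fun y _ => P.RootForm y (P.root b) = 0)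
        ?_ ?_ ?_ ?_ hy
      · rintro _ ⟨y, hy, rfl⟩
        have := hort y hy _ ⟨b, rfl⟩ hb
        have h2 := P.algebraMap_rootFormIn ℤ y (P.rootSpanMem ℤ b)
        rw [this, map_zero] at h2
        exact h2.symm
      · simp
      · intro x y _ _ hx hy; simp [hx, hy]
      · intro k x _ hx; simp [hx]
    have h1 := hall (P.root b) (hq ▸ Submodule.mem_top)
    have h2 := P.algebraMap_rootFormIn ℤ (P.rootSpanMem ℤ b) (P.rootSpanMem ℤ b)
    have h3 := form_pos P (rsm_ne_zero P b)
    have h4 : P.RootFormIn ℤ (P.rootSpanMem ℤ b) (P.rootSpanMem ℤ b) = 0 := by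
      apply (algebraMap ℤ ℂ).injective_int
      rw [h2, map_zero]; exact h1
    omega

lemma mem_Om [P.IsReduced] [P.IsIrreducible] (a : P.rootSpan ℤ) :
    a ∈ (absRS P).Om ↔ (a : V) ∈ range P.root := by
  simp only [absRS, Finset.mem_image, Finset.mem_univ, true_and, mem_range, Subtype.ext_iff]

end RPaux
end Inst

section Final
open Set LieAlgebra.IsKilling

lemma lieRoots_eq_range (L : Type*) [LieRing L] [LieAlgebra ℂ L] [FiniteDimensional ℂ L]
    [LieAlgebra.IsSimple ℂ L] (H : LieSubalgebra ℂ L) [H.IsCartanSubalgebra] :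
    lieRoots L H = range (rootSystem H).root := by
  ext α
  constructor
  · rintro ⟨h0, h1⟩
    let w : LieModule.Weight ℂ H L := ⟨⇑α, h1⟩
    have hw : w.IsNonZero := by
      intro h
      apply h0
      ext y
      exact congrFun h y
    exact ⟨⟨w, by simpa using hw⟩, by ext y; rfl⟩
  · rintro ⟨⟨w, hw⟩, rfl⟩
    refine ⟨(rootSystem H).ne_zero _, w.genWeightSpace_ne_bot⟩

lemma span_iff {V : Type*} [AddCommGroup V] (S : Submodule ℤ V) {P : Set V} (hP : P ⊆ S) (a : S) :
    a ∈ Submodule.span ℤ {b : S | (b : V) ∈ P} ↔ (a : V) ∈ AddSubgroup.closure P := by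
  have h1 : Subtype.val '' {b : S | (b : V) ∈ P} = P := by
    ext x
    constructor
    · rintro ⟨b, hb, rfl⟩; exact hb
    · intro hx; exact ⟨⟨x, hP hx⟩, hx, rfl⟩
  have h2 : (Submodule.span ℤ {b : S | (b : V) ∈ P}).map S.subtype = Submodule.span ℤ P := by
    rw [Submodule.map_span]
    exact congrArg _ h1
  have h3 : (a : V) ∈ AddSubgroup.closure P ↔ (a : V) ∈ Submodule.span ℤ P := by
    rw [← Submodule.span_int_eq_addSubgroupClosure]; rfl
  rw [h3, ← h2]
  constructor
  · intro h; exact ⟨a, h, rfl⟩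
  · rintro ⟨b, hb, hab⟩
    have : b = a := Subtype.ext hab
    exact this ▸ hb

end Final

/-- If `𝔤` is simple and `Tor(Γ_𝔨)` is cyclic, then every nonzero element of `Tor(Γ_𝔨)` is
the image of a root. -/
theorem torsion_cyclic_every_elt_is_root_image
    (L : Type*) [LieRing L] [LieAlgebra ℂ L] [FiniteDimensional ℂ L]
    [LieAlgebra.IsSimple ℂ L]
    (H : LieSubalgebra ℂ L) [H.IsCartanSubalgebra]
    (P : Set (Module.Dual ℂ H))
    (hP : IsClosedSymmetricSubsystem (lieRoots L H) P)
    (hcyc : IsAddCyclic ↥(AddCommGroup.torsion (GammaK L H P))) :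
    ∀ x ∈ AddCommGroup.torsion (GammaK L H P), x ≠ 0 →
      ∃ (α : Module.Dual ℂ H) (hα : α ∈ lieRoots L H), rootImage L H P hα = x := by
  classical
  obtain ⟨hPO, hneg, hadd⟩ := hP
  let RP := LieAlgebra.IsKilling.rootSystem H
  let R := RPaux.absRS RP
  have hOm : ∀ a : RP.rootSpan ℤ, a ∈ R.Om ↔ (a : Module.Dual ℂ H) ∈ lieRoots L H := by
    intro a
    rw [lieRoots_eq_range]
    exact RPaux.mem_Om RP a
  have hcl : ∀ a, a ∈ AddSubgroup.closure (lieRoots L H) ↔ a ∈ RP.rootSpan ℤ := by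
    intro a
    rw [lieRoots_eq_range, ← Submodule.span_int_eq_addSubgroupClosure]
    rfl
  have hPS : P ⊆ RP.rootSpan ℤ := fun a ha => (hcl a).1 (AddSubgroup.subset_closure (hPO ha))
  let P' : Set (RP.rootSpan ℤ) := {b | (b : Module.Dual ℂ H) ∈ P}
  have hsp : ∀ a : RP.rootSpan ℤ, a ∈ Submodule.span ℤ P' ↔
      (a : Module.Dual ℂ H) ∈ AddSubgroup.closure P := span_iff _ hPS
  let K := (AddSubgroup.closure P).addSubgroupOf (AddSubgroup.closure (lieRoots L H))
  have htor : ∀ (y : AddSubgroup.closure (lieRoots L H)),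
      (QuotientAddGroup.mk y : GammaK L H P) ∈ AddCommGroup.torsion (GammaK L H P) ↔
      (⟨y.1, (hcl y.1).1 y.2⟩ : RP.rootSpan ℤ) ∈ AbsRS.sat (Submodule.span ℤ P') := by
    intro y
    have e : (QuotientAddGroup.mk y : GammaK L H P) ∈ AddCommGroup.torsion (GammaK L H P) ↔
      ∃ n : ℕ, 0 < n ∧ n • (QuotientAddGroup.mk y : GammaK L H P) = 0 :=
      isOfFinAddOrder_iff_nsmul_eq_zero
    have e2 : ∀ n : ℕ, n • (QuotientAddGroup.mk y : GammaK L H P) = 0 ↔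
        n • (y : Module.Dual ℂ H) ∈ AddSubgroup.closure P := by
      intro n
      rw [← QuotientAddGroup.mk_nsmul, QuotientAddGroup.eq_zero_iff, AddSubgroup.mem_addSubgroupOf]
      rfl
    rw [e, AbsRS.mem_sat]
    constructor
    · rintro ⟨n, hn, h⟩
      refine ⟨n, by exact_mod_cast hn.ne', ?_⟩
      rw [hsp, natCast_zsmul]
      exact (e2 n).1 h
    · rintro ⟨m, hm, h⟩
      refine ⟨m.natAbs, Int.natAbs_pos.2 hm, ?_⟩
      rw [e2]
      rw [hsp] at h
      change m • (y : Module.Dual ℂ H) ∈ _ at h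
      rcases Int.natAbs_eq m with h1 | h1
      · rw [h1, natCast_zsmul] at h; exact h
      · rw [h1, neg_smul, natCast_zsmul] at h; simpa using neg_mem h
  have hmk : ∀ (y z : AddSubgroup.closure (lieRoots L H)),
      (QuotientAddGroup.mk y : GammaK L H P) = QuotientAddGroup.mk z ↔
      (y : Module.Dual ℂ H) - z ∈ AddSubgroup.closure P := by
    intro y z
    rw [eq_comm, QuotientAddGroup.eq, AddSubgroup.mem_addSubgroupOf]
    simp [sub_eq_add_neg, add_comm]
  intro x hx hx0
  obtain ⟨y, rfl⟩ := QuotientAddGroup.mk_surjective x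
  obtain ⟨⟨t, ht⟩, hgen⟩ := hcyc.exists_zsmul_surjective
  obtain ⟨t, rfl⟩ := QuotientAddGroup.mk_surjective t
  obtain ⟨a, ha, hax⟩ := R.main P' (fun a ha => (hOm a).2 (hPO ha)) (fun a ha => hneg _ ha)
    (fun a ha b hb hab => hadd _ ha _ hb ((hOm _).1 hab))
    ⟨t.1, (hcl t.1).1 t.2⟩ ((htor t).1 ht)
    (by
      rintro ⟨z, hz⟩ hzs
      have hz1 := (htor ⟨z, (hcl z).2 hz⟩).2 hzs
      obtain ⟨k, hk⟩ := hgen ⟨_, hz1⟩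
      refine ⟨k, ?_⟩
      rw [hsp]
      have hk2 := congrArg Subtype.val hk
      change k • (QuotientAddGroup.mk t : GammaK L H P) = _ at hk2
      rw [← QuotientAddGroup.mk_zsmul, eq_comm, hmk] at hk2
      exact hk2)
    ((htor y).1 hx)
    (by
      intro h
      rw [hsp] at h
      apply hx0
      rw [QuotientAddGroup.eq_zero_iff, AddSubgroup.mem_addSubgroupOf]
      exact h)
  refine ⟨a.1, (hOm a).1 ha, ?_⟩
  rw [hsp] at hax
  exact (hmk _ _).2 hax
end

section
/- Assume 𝔤 is simple. If Tor(Γ_𝔨) is not cyclic, then for every group homomorphism χ : Tor(Γ_𝔨) → ℂ∖{0} there exists a root α ∈ Ω whose image ᾱ lies in Tor(Γ_𝔨), satisfies ᾱ ≠ 0, and χ(ᾱ) = 1; that is, the kernel of any character of Tor(Γ_𝔨) contains a non-zero image of a root. -/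
open LieAlgebra

namespace TorAux
open RootPairing

section
variable {ι M N : Type*} [Finite ι] [AddCommGroup M] [AddCommGroup N]
  [Module ℂ M] [Module ℂ N]
  (P : RootPairing ι ℂ M N) [P.IsCrystallographic]

lemma cast_pair (i j : ι) : ((P.pairingIn ℤ i j : ℤ) : ℂ) = P.coroot' j (P.root i) := by
  have := P.algebraMap_pairingIn ℤ i j
  simpa using this

lemma pair_sub {m k l : ι} (h : P.root m = P.root k - P.root l) (i : ι) :
    P.pairingIn ℤ m i = P.pairingIn ℤ k i - P.pairingIn ℤ l i := by
  have : ((P.pairingIn ℤ m i : ℤ) : ℂ) = ((P.pairingIn ℤ k i - P.pairingIn ℤ l i : ℤ) : ℂ) := by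
    rw [Int.cast_sub, cast_pair, cast_pair, cast_pair, h, map_sub]
  exact_mod_cast this

lemma exists_refl (i k : ι) : ∃ m, P.root m = P.root k - (P.pairingIn ℤ k i) • P.root i ∧
    ∀ j, P.pairingIn ℤ m j = P.pairingIn ℤ k j - P.pairingIn ℤ k i * P.pairingIn ℤ i j := by
  have h : P.root (P.reflectionPerm i k) = P.root k - (P.pairingIn ℤ k i) • P.root i := by
    rw [root_reflectionPerm, reflection_apply, ← cast_pair, Int.cast_smul_eq_zsmul]
  refine ⟨_, h, fun j => ?_⟩
  have : ((P.pairingIn ℤ (P.reflectionPerm i k) j : ℤ) : ℂ) =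
      ((P.pairingIn ℤ k j - P.pairingIn ℤ k i * P.pairingIn ℤ i j : ℤ) : ℂ) := by
    push_cast
    rw [cast_pair, h, map_sub, map_zsmul]
    simp [cast_pair]
  exact_mod_cast this

lemma exists_neg (k : ι) : ∃ m, P.root m = - P.root k ∧
    ∀ j, P.pairingIn ℤ m j = - P.pairingIn ℤ k j := by
  obtain ⟨m, h1, h2⟩ := exists_refl P k k
  have h : P.pairingIn ℤ k k = 2 := by simp
  refine ⟨m, by rw [h1, h, two_smul]; abel, fun j => by rw [h2, h]; ring⟩

/-- Existence of a root non-orthogonal to two given roots. -/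
lemma exists_nonorth [P.IsIrreducible] (i j : ι) :
    ∃ k, P.pairingIn ℤ k i ≠ 0 ∧ P.pairingIn ℤ k j ≠ 0 := by
  by_contra! hcon
  let s : Set ι := {k | P.pairingIn ℤ k i ≠ 0}
  have hz (a b : ι) : P.pairingIn ℤ a b = 0 ↔ P.coroot' b (P.root a) = 0 := by
    rw [← cast_pair]; norm_cast
  have htop : Submodule.span ℂ (P.root '' s) = ⊤ := by
    apply span_root_image_eq_top_of_forall_orthogonal P s ⟨i, by simp [s]⟩
    intro d hd c hc
    have hd' : P.pairingIn ℤ d i = 0 := by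
      by_contra h
      exact hd (Submodule.subset_span ⟨d, h, rfl⟩)
    by_contra hno
    have hcd : P.pairingIn ℤ c d ≠ 0 := by
      intro h
      apply hno
      have h2 := (P.pairingIn_eq_zero_iff (S := ℤ)).1 h
      rw [IsOrthogonal, ← P.algebraMap_pairingIn ℤ, ← P.algebraMap_pairingIn ℤ, h, h2]
      simp
    obtain ⟨m, hm1, hm2⟩ := exists_refl P d c
    have hm : m ∈ s := by
      simp only [s, Set.mem_ofPred_eq, hm2, hd', mul_zero, sub_zero]
      exact hc
    have h3 : (P.pairingIn ℤ c d : ℂ) • P.root d ∈ Submodule.span ℂ (P.root '' s) := by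
      have : (P.pairingIn ℤ c d : ℂ) • P.root d = P.root c - P.root m := by
        rw [hm1, Int.cast_smul_eq_zsmul]; abel
      rw [this]
      exact Submodule.sub_mem _ (Submodule.subset_span ⟨c, hc, rfl⟩)
        (Submodule.subset_span ⟨m, hm, rfl⟩)
    have : (P.pairingIn ℤ c d : ℂ) ≠ 0 := by exact_mod_cast hcd
    exact hd ((Submodule.smul_mem_iff _ this).1 h3)
  have hker : Submodule.span ℂ (P.root '' s) ≤ LinearMap.ker (P.coroot' j) := by
    rw [Submodule.span_le]
    rintro _ ⟨k, hk, rfl⟩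
    exact (hz _ _).1 (hcon k hk)
  rw [htop] at hker
  have h0 := (hz j j).2 (hker (Submodule.mem_top : P.root j ∈ ⊤))
  simp at h0

/-- Two dominant roots are not orthogonal. -/
lemma dominant_nonorth [P.IsIrreducible] (b : M →+ ℚ) (hb : ∀ i, b (P.root i) ≠ 0) (i j : ι)
    (hi : ∀ k, 0 < b (P.root k) → 0 ≤ P.pairingIn ℤ k i)
    (hj : ∀ k, 0 < b (P.root k) → 0 ≤ P.pairingIn ℤ k j) :
    P.pairingIn ℤ i j ≠ 0 := by
  intro h0
  obtain ⟨k, hki, hkj, hk⟩ : ∃ k, P.pairingIn ℤ k i ≠ 0 ∧ P.pairingIn ℤ k j ≠ 0 ∧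
      0 < b (P.root k) := by
    obtain ⟨k, hki, hkj⟩ := exists_nonorth P i j
    rcases lt_or_gt_of_ne (hb k) with h | h
    · obtain ⟨m, hm1, hm2⟩ := exists_neg P k
      exact ⟨m, by simp [hm2, hki], by simp [hm2, hkj], by rw [hm1, map_neg]; linarith⟩
    · exact ⟨k, hki, hkj, h⟩
  have hki' := lt_of_le_of_ne (hi k hk) hki.symm
  have hkj' := lt_of_le_of_ne (hj k hk) hkj.symm
  obtain ⟨m, hm1, hm2⟩ := exists_refl P i k
  have hii : P.pairingIn ℤ i i = 2 := by simp
  have hmi := hm2 i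
  have hmj := hm2 j
  rw [hii] at hmi
  rw [h0] at hmj
  rcases lt_or_gt_of_ne (hb m) with h | h
  · obtain ⟨n, hn1, hn2⟩ := exists_neg P m
    have := hj n (by rw [hn1, map_neg]; linarith)
    rw [hn2] at this
    linarith
  · have := hi m h
    linarith

lemma diff_mem [P.IsIrreducible] (g b : M →+ ℚ) (hb : ∀ i, b (P.root i) ≠ 0)
    (hg1 : ∀ i, g (P.root i) ≤ 1) (hbg : ∀ i, 0 < b (P.root i) → 0 ≤ g (P.root i))
    (hgb : ∀ i, 0 < g (P.root i) → 0 < b (P.root i)) (i j : ι)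
    (hi : g (P.root i) = 1) (hj : g (P.root j) = 1) :
    P.root i - P.root j ∈ AddSubgroup.closure (P.root '' {k | g (P.root k) = 0}) := by
  set D := AddSubgroup.closure (P.root '' {k | g (P.root k) = 0}) with hD
  have hsub : ∀ k, g (P.root k) = 0 → P.root k ∈ D := fun k hk =>
    AddSubgroup.subset_closure ⟨k, hk, rfl⟩
  have key : ∀ i, g (P.root i) = 1 → ∃ i', g (P.root i') = 1 ∧ P.root i' - P.root i ∈ D ∧
      ∀ k, 0 < b (P.root k) → 0 ≤ P.pairingIn ℤ k i' := by
    intro i hi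
    let s : Set ι := {i' | g (P.root i') = 1 ∧ P.root i' - P.root i ∈ D}
    obtain ⟨i', hi', hmax⟩ := Set.exists_max_image s (fun k => b (P.root k)) s.toFinite
      ⟨i, hi, by simp [D.zero_mem]⟩
    refine ⟨i', hi'.1, hi'.2, fun k hk => ?_⟩
    by_contra! hneg
    have hbi : 0 < b (P.root i') := hgb _ (by rw [hi'.1]; norm_num)
    obtain ⟨m, hm⟩ := P.root_add_root_mem_of_pairingIn_neg hneg (by
      intro h
      have := congrArg b h
      rw [map_neg] at this
      linarith)
    have hgm : g (P.root m) = g (P.root k) + g (P.root i') := by rw [hm, map_add]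
    have hbm : b (P.root m) = b (P.root k) + b (P.root i') := by rw [hm, map_add]
    have h1 := hg1 m
    have h2 := hbg k hk
    have h3 := hi'.1
    have hk0 : g (P.root k) = 0 := by linarith
    have hms : m ∈ s := by
      refine ⟨by linarith, ?_⟩
      rw [hm, add_sub_assoc]
      exact D.add_mem (hsub k hk0) hi'.2
    have := hmax m hms
    linarith
  obtain ⟨i', hi1, hi2, hi3⟩ := key i hi
  obtain ⟨j', hj1, hj2, hj3⟩ := key j hj
  have hne := dominant_nonorth P b hb i' j' hi3 hj3
  have hpos : 0 < P.pairingIn ℤ i' j' :=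
    lt_of_le_of_ne (hj3 i' (hgb _ (by rw [hi1]; norm_num))) hne.symm
  have hd : P.root i' - P.root j' ∈ D := by
    by_cases h : i' = j'
    · simp [h, D.zero_mem]
    · obtain ⟨m, hm⟩ := P.root_sub_root_mem_of_pairingIn_pos hpos h
      rw [← hm]
      exact hsub m (by rw [hm, map_sub, hi1, hj1]; norm_num)
  have : P.root i - P.root j = -(P.root i' - P.root i) + (P.root i' - P.root j') +
      (P.root j' - P.root j) := by abel
  rw [this]
  exact D.add_mem (D.add_mem (D.neg_mem hi2) hd) hj2


lemma exists_denom {ι : Type*} [Finite ι] (f : ι → ℚ) :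
    ∃ K : ℕ, 0 < K ∧ ∀ i, ∃ m : ℤ, (K : ℚ) * f i = m := by
  have := Fintype.ofFinite ι
  refine ⟨∏ i, (f i).den, Finset.prod_pos fun i _ => (f i).den_pos, fun i => ?_⟩
  obtain ⟨c, hc⟩ := Finset.dvd_prod_of_mem (fun i => (f i).den) (Finset.mem_univ i)
  refine ⟨c * (f i).num, ?_⟩
  rw [hc]
  push_cast
  rw [mul_right_comm, Rat.den_mul_eq_num]
  ring

lemma exists_retract : ∃ π : ℂ →+ ℚ, ∀ n : ℤ, π (n : ℂ) = n := by
  obtain ⟨g, hg⟩ := LinearMap.exists_leftInverse_of_injective (Algebra.linearMap ℚ ℂ)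
    (LinearMap.ker_eq_bot.2 (algebraMap ℚ ℂ).injective)
  refine ⟨g.toAddMonoidHom, fun n => ?_⟩
  have := LinearMap.congr_fun hg (n : ℚ)
  simpa using this

lemma sum_pair [Fintype ι] (g : M →+ ℚ) (β : ι) :
    2 * ∑ k, g (P.root k) * (P.pairingIn ℤ k β : ℚ) =
      g (P.root β) * ∑ k, (P.pairingIn ℤ k β : ℚ) ^ 2 := by
  have h1 : ∑ k, g (P.root k) * (P.pairingIn ℤ k β : ℚ) =
      ∑ k, (g (P.root k) - P.pairingIn ℤ k β * g (P.root β)) * (-(P.pairingIn ℤ k β : ℚ)) := by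
    rw [← Equiv.sum_comp (P.reflectionPerm β)]
    refine Finset.sum_congr rfl fun k _ => ?_
    have h : P.root (P.reflectionPerm β k) = P.root k - (P.pairingIn ℤ k β) • P.root β := by
      rw [root_reflectionPerm, reflection_apply, ← cast_pair, Int.cast_smul_eq_zsmul]
    have h2 : P.pairingIn ℤ (P.reflectionPerm β k) β = - P.pairingIn ℤ k β := by
      rw [← pairingIn_reflectionPerm, pairingIn_reflectionPerm_self_right]
    rw [h, h2, map_sub, map_zsmul]
    simp
  have h3 : ∑ k, (g (P.root k) - P.pairingIn ℤ k β * g (P.root β)) * (-(P.pairingIn ℤ k β : ℚ)) =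
      g (P.root β) * ∑ k, (P.pairingIn ℤ k β : ℚ) ^ 2 -
        ∑ k, g (P.root k) * (P.pairingIn ℤ k β : ℚ) := by
    rw [Finset.mul_sum, ← Finset.sum_sub_distrib]
    exact Finset.sum_congr rfl fun k _ => by ring
  linarith

/-- Translate a functional by an integral one to make it bounded by one on roots. -/
lemma exists_small (f : M →+ ℚ) : ∃ g : M →+ ℚ,
    (∀ i, ∃ n : ℤ, g (P.root i) = f (P.root i) + n) ∧ ∀ i, g (P.root i) ≤ 1 := by
  classical
  have := Fintype.ofFinite ι
  obtain ⟨K, hK, hKf⟩ := exists_denom (fun i => f (P.root i))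
  let good (e : ℕ) : Prop := ∃ g : M →+ ℚ, (∀ i, ∃ n : ℤ, g (P.root i) = f (P.root i) + n) ∧
    ∑ k, ((K : ℚ) * g (P.root k)) ^ 2 = e
  have hgood : ∀ g : M →+ ℚ, (∀ i, ∃ n : ℤ, g (P.root i) = f (P.root i) + n) →
      ∃ e : ℕ, ∑ k, ((K : ℚ) * g (P.root k)) ^ 2 = e := by
    intro g hg
    have : ∀ i, ∃ m : ℤ, (K : ℚ) * g (P.root i) = m := fun i => by
      obtain ⟨n, hn⟩ := hg i
      obtain ⟨m, hm⟩ := hKf i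
      exact ⟨m + K * n, by rw [hn, mul_add, hm]; push_cast; ring⟩
    choose m hm using this
    refine ⟨∑ k, (m k).natAbs ^ 2, ?_⟩
    push_cast
    refine Finset.sum_congr rfl fun k _ => ?_
    rw [hm, Nat.cast_natAbs]
    push_cast
    rw [sq_abs]
  have hex : ∃ e, good e := by
    have hf : ∀ i, ∃ n : ℤ, f (P.root i) = f (P.root i) + n := fun i => ⟨0, by simp⟩
    obtain ⟨e, he⟩ := hgood f hf
    exact ⟨e, f, hf, he⟩
  obtain ⟨g, hg, he⟩ := Nat.find_spec hex
  refine ⟨g, hg, fun β => ?_⟩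
  obtain ⟨π, hπ⟩ := exists_retract
  let c : M →+ ℚ := π.comp (P.coroot' β).toAddMonoidHom
  have hc : ∀ k, c (P.root k) = P.pairingIn ℤ k β := fun k => by
    rw [← hπ, cast_pair]; rfl
  have hg' : ∀ i, ∃ n : ℤ, (g - c) (P.root i) = f (P.root i) + n := fun i => by
    obtain ⟨n, hn⟩ := hg i
    exact ⟨n - P.pairingIn ℤ i β, by rw [AddMonoidHom.sub_apply, hn, hc]; push_cast; ring⟩
  obtain ⟨e', he'⟩ := hgood _ hg'
  have hle : Nat.find hex ≤ e' := Nat.find_min' hex ⟨_, hg', he'⟩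
  have hle' : ∑ k, ((K : ℚ) * g (P.root k)) ^ 2 ≤ ∑ k, ((K : ℚ) * (g - c) (P.root k)) ^ 2 := by
    rw [he, he']; exact_mod_cast hle
  have hexp : ∑ k, ((K : ℚ) * (g - c) (P.root k)) ^ 2 = ∑ k, ((K : ℚ) * g (P.root k)) ^ 2 -
      K ^ 2 * (2 * ∑ k, g (P.root k) * (P.pairingIn ℤ k β : ℚ)) +
      K ^ 2 * ∑ k, (P.pairingIn ℤ k β : ℚ) ^ 2 := by
    rw [Finset.mul_sum, Finset.mul_sum, Finset.mul_sum, ← Finset.sum_sub_distrib,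
      ← Finset.sum_add_distrib]
    refine Finset.sum_congr rfl fun k _ => ?_
    rw [AddMonoidHom.sub_apply, hc]
    ring
  rw [hexp, sum_pair] at hle'
  have hS : 0 < ∑ k, (P.pairingIn ℤ k β : ℚ) ^ 2 := by
    refine Finset.sum_pos' (fun k _ => sq_nonneg _) ⟨β, Finset.mem_univ _, ?_⟩
    simp
  have hK' : (0 : ℚ) < (K : ℚ) ^ 2 := by positivity
  by_contra! hlt
  have : (0 : ℚ) < (K : ℚ) ^ 2 * ((g (P.root β) - 1) * ∑ k, (P.pairingIn ℤ k β : ℚ) ^ 2) :=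
    mul_pos hK' (mul_pos (by linarith) hS)
  nlinarith

/-- A generic perturbation. -/
lemma exists_generic {ι M : Type*} [Finite ι] [AddCommGroup M] [Module ℂ M] (v : ι → M)
    (hv : ∀ i, v i ≠ 0) (g : M →+ ℚ) :
    ∃ b : M →+ ℚ, (∀ i, b (v i) ≠ 0) ∧ ∀ i, 0 < g (v i) → 0 < b (v i) := by
  have := Fintype.ofFinite ι
  let _i : Module ℚ M := Module.compHom M (algebraMap ℚ ℂ)
  obtain ⟨h, hh⟩ : ∃ h : Module.Dual ℚ M, ∀ i, h (v i) ≠ 0 :=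
    Module.exists_dual_forall_apply_ne_zero v hv
  obtain ⟨n, hn⟩ := exists_nat_gt (∑ i, |h (v i)| / |g (v i)|)
  have key : ∀ i, g (v i) ≠ 0 → |h (v i)| < n * |g (v i)| := fun i hi => by
    have h1 : |h (v i)| / |g (v i)| ≤ ∑ i, |h (v i)| / |g (v i)| :=
      Finset.single_le_sum (f := fun i => |h (v i)| / |g (v i)|) (fun i _ => by positivity)
        (Finset.mem_univ i)
    have h2 : 0 < |g (v i)| := abs_pos.2 hi
    have h3 := lt_of_le_of_lt h1 hn
    rwa [div_lt_iff₀ h2] at h3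
  refine ⟨n • g + h.toAddMonoidHom, fun i => ?_, fun i hi => ?_⟩
  · by_cases hi : g (v i) = 0
    · simpa [hi] using hh i
    · have := key i hi
      intro h0
      have h1 : h (v i) = - (n * g (v i)) := by
        simp at h0
        linarith
      rw [h1, abs_neg, abs_mul, Nat.abs_cast] at this
      exact lt_irrefl _ this
  · have := key i hi.ne'
    rw [abs_of_pos hi] at this
    have h2 := (abs_lt.1 this).1
    simp
    linarith

lemma structure_thm [P.IsRootSystem] [P.IsIrreducible] (f : M →+ ℚ) :
    ∃ (W : Submodule ℂ M) (θ : M), θ ∈ AddSubgroup.closure (Set.range P.root) ∧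
      ∀ x, x ∈ AddSubgroup.closure (P.root '' {i | ∃ n : ℤ, f (P.root i) = n}) ↔
        x ∈ AddSubgroup.closure (Set.range P.root) ∧ ∃ n : ℤ, x - n • θ ∈ W := by
  obtain ⟨g, hgf, hg1⟩ := exists_small P f
  obtain ⟨b, hb, hgb⟩ := exists_generic P.root (fun i => P.ne_zero i) g
  have hbg : ∀ i, 0 < b (P.root i) → 0 ≤ g (P.root i) := fun i hi => by
    by_contra! h
    obtain ⟨m, hm, -⟩ := exists_neg P i
    have := hgb m (by rw [hm, map_neg]; linarith)
    rw [hm, map_neg] at this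
    linarith
  have hgm1 : ∀ i, -1 ≤ g (P.root i) := fun i => by
    obtain ⟨m, hm, -⟩ := exists_neg P i
    have := hg1 m
    rw [hm, map_neg] at this
    linarith
  let _i := P.indexNeg
  let B := IsAddIndecomposable.baseOf P.root b
  have hBpos : ∀ i ∈ B, 0 < b (P.root i) := fun i hi =>
    IsAddIndecomposable.baseOf_subset_pos P.root b hi
  have hli : LinearIndepOn ℂ P.root B := P.linearIndepOn_root_baseOf b hb
  have hsp : ∀ i, P.root i ∈ AddSubmonoid.closure (P.root '' B) ∨
      -P.root i ∈ AddSubmonoid.closure (P.root '' B) := fun i =>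
    IsAddIndecomposable.mem_or_neg_mem_closure_baseOf P.root b i (hb i) (by simp)
  set Λ := AddSubgroup.closure (Set.range P.root) with hΛ
  set S := AddSubgroup.closure (P.root '' {i | ∃ n : ℤ, f (P.root i) = n}) with hS
  let B0 : Set ι := {i ∈ B | g (P.root i) = 0}
  let B1 : Set ι := {i ∈ B | g (P.root i) ≠ 0}
  let D0 := AddSubgroup.closure (P.root '' B0)
  let D1 := AddSubgroup.closure (P.root '' B1)
  let W := Submodule.span ℂ (P.root '' B0)
  have hSiff : ∀ i, (∃ n : ℤ, f (P.root i) = n) ↔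
      g (P.root i) = 0 ∨ g (P.root i) = 1 ∨ g (P.root i) = -1 := by
    intro i
    obtain ⟨n, hn⟩ := hgf i
    constructor
    · rintro ⟨m, hm⟩
      have h1 := hg1 i
      have h2 := hgm1 i
      have h3 : g (P.root i) = ((m + n : ℤ) : ℚ) := by rw [hn, hm]; push_cast; ring
      rw [h3] at h1 h2 ⊢
      have h1' : m + n ≤ 1 := by exact_mod_cast h1
      have h2' : -1 ≤ m + n := by exact_mod_cast h2
      have : m + n = 0 ∨ m + n = 1 ∨ m + n = -1 := by omega
      rcases this with h | h | h <;> rw [h] <;> simp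
    · rintro (h | h | h)
      · exact ⟨-n, by push_cast; linarith⟩
      · exact ⟨1 - n, by push_cast; linarith⟩
      · exact ⟨-1 - n, by push_cast; linarith⟩
  have hD0S : D0 ≤ S := AddSubgroup.closure_mono (Set.image_mono fun i hi =>
    (hSiff i).2 (Or.inl hi.2))
  have hSΛ : S ≤ Λ := AddSubgroup.closure_mono (Set.image_subset_range _ _)
  have hD0W : ∀ x ∈ D0, x ∈ W := fun x hx => by
    have : D0 ≤ W.toAddSubgroup := (AddSubgroup.closure_le _).2 Submodule.subset_span
    exact this hx
  have hWD0 : ∀ x ∈ Λ, x ∈ W → x ∈ D0 := by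
    intro x hx hxW
    have hΛ' : Λ ≤ D0 ⊔ D1 := by
      rw [hΛ, AddSubgroup.closure_le]
      have hB : AddSubmonoid.closure (P.root '' B) ≤ (D0 ⊔ D1).toAddSubmonoid := by
        rw [AddSubmonoid.closure_le]
        rintro _ ⟨i, hi, rfl⟩
        by_cases h : g (P.root i) = 0
        · exact (le_sup_left : D0 ≤ D0 ⊔ D1) (AddSubgroup.subset_closure ⟨i, ⟨hi, h⟩, rfl⟩)
        · exact (le_sup_right : D1 ≤ D0 ⊔ D1) (AddSubgroup.subset_closure ⟨i, ⟨hi, h⟩, rfl⟩)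
      rintro _ ⟨i, rfl⟩
      rcases hsp i with h | h
      · exact hB h
      · exact neg_mem_iff.1 (hB h : -P.root i ∈ D0 ⊔ D1)
    obtain ⟨d, hd, e, he, rfl⟩ := AddSubgroup.mem_sup.1 (hΛ' hx)
    have heW : e ∈ W := by
      have := W.sub_mem hxW (hD0W d hd)
      rwa [add_sub_cancel_left] at this
    have heW1 : e ∈ Submodule.span ℂ (P.root '' B1) := by
      have : D1 ≤ (Submodule.span ℂ (P.root '' B1)).toAddSubgroup :=
        (AddSubgroup.closure_le _).2 Submodule.subset_span
      exact this he
    have hdisj : Disjoint (Submodule.span ℂ (P.root '' B0)) (Submodule.span ℂ (P.root '' B1)) := by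
      have := hli.linearIndependent.disjoint_span_image
        (s := {i : B | g (P.root i) = 0}) (t := {i : B | g (P.root i) ≠ 0})
        (Set.disjoint_left.2 fun i h1 h2 => h2 h1)
      convert this using 2
      · ext y; simp [B0, and_assoc, and_left_comm]
      · ext y; simp [B1, and_assoc, and_left_comm]
    have : e = 0 := Submodule.disjoint_def.1 hdisj e heW heW1
    rw [this, add_zero]
    exact hd
  have hind : ∀ x ∈ AddSubmonoid.closure (P.root '' B), 0 ≤ g x ∧ (g x = 0 → x ∈ D0) := by
    intro x hx
    induction hx using AddSubmonoid.closure_induction with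
    | mem x h =>
      obtain ⟨i, hi, rfl⟩ := h
      exact ⟨hbg i (hBpos i hi), fun h => AddSubgroup.subset_closure ⟨i, ⟨hi, h⟩, rfl⟩⟩
    | zero => exact ⟨by simp, fun _ => D0.zero_mem⟩
    | add x y _ _ hx hy =>
      rw [map_add]
      refine ⟨add_nonneg hx.1 hy.1, fun h => ?_⟩
      have := hx.1
      have := hy.1
      exact D0.add_mem (hx.2 (by linarith)) (hy.2 (by linarith))
  have hP0 : ∀ i, g (P.root i) = 0 → P.root i ∈ D0 := fun i hi => by
    rcases hsp i with h | h
    · exact (hind _ h).2 hi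
    · exact neg_mem_iff.1 ((hind _ h).2 (by rw [map_neg, hi, neg_zero]))
  have hP0' : AddSubgroup.closure (P.root '' {k | g (P.root k) = 0}) ≤ D0 := by
    rw [AddSubgroup.closure_le]
    rintro _ ⟨i, hi, rfl⟩
    exact hP0 i hi
  have fin : ∀ θ ∈ S, (∀ i, (∃ n : ℤ, f (P.root i) = n) → ∃ n : ℤ, P.root i - n • θ ∈ D0) →
      ∃ (W : Submodule ℂ M) (θ : M), θ ∈ Λ ∧
      ∀ x, x ∈ S ↔ x ∈ Λ ∧ ∃ n : ℤ, x - n • θ ∈ W := by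
    intro θ hθ h
    refine ⟨W, θ, hSΛ hθ, fun x => ⟨fun hx => ⟨hSΛ hx, ?_⟩, ?_⟩⟩
    · have : ∃ n : ℤ, x - n • θ ∈ D0 := by
        induction hx using AddSubgroup.closure_induction with
        | mem x hx =>
          obtain ⟨i, hi, rfl⟩ := hx
          exact h i hi
        | zero => exact ⟨0, by simp [D0.zero_mem]⟩
        | add x y _ _ hx hy =>
          obtain ⟨n, hn⟩ := hx
          obtain ⟨m, hm⟩ := hy
          refine ⟨n + m, ?_⟩
          have := D0.add_mem hn hm
          rw [add_smul]
          convert this using 1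
          abel
        | neg x _ hx =>
          obtain ⟨n, hn⟩ := hx
          refine ⟨-n, ?_⟩
          have := D0.neg_mem hn
          rw [neg_smul]
          convert this using 1
          abel
      obtain ⟨n, hn⟩ := this
      exact ⟨n, hD0W _ hn⟩
    · rintro ⟨hx, n, hn⟩
      have h1 : x - n • θ ∈ D0 := hWD0 _ (Λ.sub_mem hx (Λ.zsmul_mem (hSΛ hθ) n)) hn
      have := S.add_mem (hD0S h1) (S.zsmul_mem hθ n)
      rwa [sub_add_cancel] at this
  by_cases hex : ∃ i, g (P.root i) = 1
  · obtain ⟨j, hj⟩ := hex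
    refine fin (P.root j) (AddSubgroup.subset_closure ⟨j, (hSiff j).2 (by simp [hj]), rfl⟩) ?_
    intro i hi
    rcases (hSiff i).1 hi with h | h | h
    · exact ⟨0, by simpa using hP0 i h⟩
    · exact ⟨1, by simpa using hP0' (diff_mem P g b hb hg1 hbg hgb i j h hj)⟩
    · obtain ⟨m, hm, -⟩ := exists_neg P i
      have h1 := hP0' (diff_mem P g b hb hg1 hbg hgb m j (by rw [hm, map_neg, h]; norm_num) hj)
      rw [hm] at h1
      refine ⟨-1, ?_⟩
      have := D0.neg_mem h1
      convert this using 1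
      simp
      abel
  · push Not at hex
    refine fin 0 S.zero_mem fun i hi => ⟨0, ?_⟩
    rcases (hSiff i).1 hi with h | h | h
    · simpa using hP0 i h
    · exact absurd h (hex i)
    · obtain ⟨m, hm, -⟩ := exists_neg P i
      exact absurd (by rw [hm, map_neg, h]; norm_num) (hex m)
end


section lattice
variable {ι M : Type*} [Finite ι] [AddCommGroup M] [Module ℂ M]

/-- Elements of `Λ` having a positive multiple in `Γ`. -/
def sat (Λ Γ : AddSubgroup M) : AddSubgroup M where
  carrier := {x | x ∈ Λ ∧ ∃ k : ℕ, 0 < k ∧ k • x ∈ Γ}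
  zero_mem' := ⟨Λ.zero_mem, 1, one_pos, by simp [Γ.zero_mem]⟩
  add_mem' := by
    rintro x y ⟨hx, k, hk, hkx⟩ ⟨hy, l, hl, hly⟩
    refine ⟨Λ.add_mem hx hy, k * l, Nat.mul_pos hk hl, ?_⟩
    rw [smul_add]
    refine Γ.add_mem ?_ ?_
    · rw [mul_comm, mul_smul]; exact Γ.nsmul_mem hkx l
    · rw [mul_smul]; exact Γ.nsmul_mem hly k
  neg_mem' := by
    rintro x ⟨hx, k, hk, hkx⟩
    exact ⟨Λ.neg_mem hx, k, hk, by rw [smul_neg]; exact Γ.neg_mem hkx⟩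

lemma mem_sat {Λ Γ : AddSubgroup M} {x : M} :
    x ∈ sat Λ Γ ↔ x ∈ Λ ∧ ∃ k : ℕ, 0 < k ∧ k • x ∈ Γ := Iff.rfl

lemma fg_of_le (v : ι → M) (A : AddSubgroup M) (h : A ≤ AddSubgroup.closure (Set.range v)) :
    Module.Finite ℤ A := by
  have h1 : Module.Finite ℤ (Submodule.span ℤ (Set.range v)) :=
    Module.Finite.span_of_finite ℤ (Set.finite_range v)
  have h2 : IsNoetherian ℤ (Submodule.span ℤ (Set.range v)) := inferInstance
  have h3 : AddSubgroup.toIntSubmodule A ≤ Submodule.span ℤ (Set.range v) := by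
    intro x hx
    have := h hx
    rw [← Submodule.span_int_eq_addSubgroupClosure] at this
    exact this
  have h4 : (AddSubgroup.toIntSubmodule A).FG := by
    have := isNoetherian_submodule.1 h2 _ h3
    exact this
  exact Module.Finite.iff_fg.2 h4

lemma exists_functional (v : ι → M) (Γ : AddSubgroup M)
    (X : M → ℂ) (hmul : ∀ x ∈ sat (AddSubgroup.closure (Set.range v)) Γ,
      ∀ y ∈ sat (AddSubgroup.closure (Set.range v)) Γ, X (x + y) = X x * X y)
    (hΓ : Γ ≤ AddSubgroup.closure (Set.range v)) (h1 : ∀ x ∈ Γ, X x = 1) :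
    ∃ f : M →+ ℚ, (∀ x ∈ Γ, ∃ n : ℤ, f x = n) ∧
      ∀ i, (∃ n : ℤ, f (v i) = n) →
        v i ∈ sat (AddSubgroup.closure (Set.range v)) Γ ∧ X (v i) = 1 := by
  have := Fintype.ofFinite ι
  set Λ := AddSubgroup.closure (Set.range v) with hΛ
  have hΓs : Γ ≤ sat Λ Γ := fun x hx => ⟨hΓ hx, 1, one_pos, by simpa using hx⟩
  have htf : IsAddTorsionFree M := .of_isTorsionFree ℂ M
  have hfin : Module.Finite ℤ (sat Λ Γ) := fg_of_le v _ (fun x hx => hx.1)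
  have hfree : Module.Free ℤ (sat Λ Γ) := inferInstance
  have h0 : X 0 = 1 := h1 0 Γ.zero_mem
  have hpow : ∀ x ∈ sat Λ Γ, ∀ n : ℕ, X (n • x) = X x ^ n := by
    intro x hx n
    induction n with
    | zero => simp [h0]
    | succ n ih => rw [succ_nsmul, hmul _ ((sat Λ Γ).nsmul_mem hx n) _ hx, ih, pow_succ]
  have hq : ∀ x ∈ sat Λ Γ, ∃ q : ℚ, Complex.exp (2 * Real.pi * Complex.I * q) = X x := by
    rintro x hx
    obtain ⟨-, k, hk, hkx⟩ := id hx
    have hr : X x ^ k = 1 := by rw [← hpow x hx, h1 _ hkx]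
    have : NeZero k := ⟨hk.ne'⟩
    obtain ⟨i, -, hi⟩ := (Complex.mem_rootsOfUnity k (Units.ofPowEqOne _ k hr hk.ne')).1
      (by rw [mem_rootsOfUnity]; ext; simpa using hr)
    refine ⟨i / k, ?_⟩
    push_cast
    rw [hi]
    rfl
  let e := Module.Free.chooseBasis ℤ (sat Λ Γ)
  choose q hq using hq
  let c0 : sat Λ Γ →ₗ[ℤ] ℚ := e.constr ℤ (fun i => q (e i) (e i).2)
  have hc0 : ∀ x : sat Λ Γ, Complex.exp (2 * Real.pi * Complex.I * (c0 x : ℚ)) = X x := by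
    let A : AddSubgroup (sat Λ Γ) :=
      { carrier := {x | Complex.exp (2 * Real.pi * Complex.I * (c0 x : ℚ)) = X x}
        zero_mem' := by simp [h0]
        add_mem' := by
          intro x y hx hy
          simp only [Set.mem_ofPred_eq] at hx hy ⊢
          rw [map_add, AddSubgroup.coe_add, hmul _ x.2 _ y.2, ← hx, ← hy, ← Complex.exp_add]
          congr 1
          push_cast
          ring
        neg_mem' := by
          intro x hx
          simp only [Set.mem_ofPred_eq] at hx ⊢
          have h2 : X x * X (-x : sat Λ Γ) = 1 := by
            rw [← hmul _ x.2 _ (-x).2]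
            simp [h0]
          rw [← hx] at h2
          rw [map_neg, Rat.cast_neg, mul_neg, Complex.exp_neg]
          exact inv_eq_of_mul_eq_one_right h2 }
    have hA : AddSubgroup.toIntSubmodule A = ⊤ := by
      rw [eq_top_iff, ← e.span_eq, Submodule.span_le]
      rintro _ ⟨i, rfl⟩
      change Complex.exp (2 * Real.pi * Complex.I * (c0 (e i) : ℚ)) = X (e i)
      rw [← hq (e i) (e i).2]
      simp [c0]
    intro x
    have : x ∈ AddSubgroup.toIntSubmodule A := by rw [hA]; trivial
    exact this
  obtain ⟨c, hc⟩ := (Module.Baer.of_divisible ℚ).extension_property_addMonoidHom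
    (sat Λ Γ).subtype (sat Λ Γ).subtype_injective c0.toAddMonoidHom
  have hcX : ∀ x ∈ sat Λ Γ, Complex.exp (2 * Real.pi * Complex.I * (c x : ℚ)) = X x := by
    intro x hx
    have := DFunLike.congr_fun hc ⟨x, hx⟩
    have h2 : c x = c0 ⟨x, hx⟩ := this
    rw [h2, hc0]
  have hint : ∀ x ∈ sat Λ Γ, X x = 1 ↔ ∃ n : ℤ, c x = n := by
    intro x hx
    rw [← hcX x hx, Complex.exp_eq_one_iff]
    have hpi : (2 * Real.pi * Complex.I : ℂ) ≠ 0 := Complex.two_pi_I_ne_zero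
    refine exists_congr fun n => ?_
    rw [mul_comm (n : ℂ), mul_right_inj' hpi]
    exact_mod_cast Iff.rfl
  let _i : Module ℚ M := Module.compHom M (algebraMap ℚ ℂ)
  let U : Submodule ℚ M :=
    { sat ⊤ Γ with
      smul_mem' := by
        rintro q x ⟨-, k, hk, hkx⟩
        refine ⟨trivial, q.den * k, Nat.mul_pos q.den_pos hk, ?_⟩
        have : (q.den * k) • q • x = q.num • (k • x) := by
          rw [mul_comm, mul_smul, ← Nat.cast_smul_eq_nsmul ℚ q.den, smul_smul,
            Rat.den_mul_eq_num, Int.cast_smul_eq_zsmul, smul_comm]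
        rw [this]
        exact Γ.zsmul_mem hkx _ }
  have hU : ∀ x ∈ Λ, x ∈ U ↔ x ∈ sat Λ Γ := fun x hx =>
    ⟨fun h => ⟨hx, h.2⟩, fun h => ⟨trivial, h.2⟩⟩
  obtain ⟨h', hh'⟩ : ∃ h : Module.Dual ℚ (M ⧸ U), ∀ i : {i // v i ∉ U}, h (U.mkQ (v i)) ≠ 0 :=
    Module.exists_dual_forall_apply_ne_zero (fun i : {i // v i ∉ U} => U.mkQ (v i))
      (fun i => by simpa using i.2)
  let h : Module.Dual ℚ M := h'.comp U.mkQ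
  have hhU : ∀ x ∈ U, h x = 0 := fun x hx => by
    have : U.mkQ x = 0 := by simpa using hx
    simp only [h, LinearMap.comp_apply, this, map_zero]
  have hhv : ∀ i, v i ∉ U → h (v i) ≠ 0 := fun i hi => hh' ⟨i, hi⟩
  obtain ⟨K, hK, hKc⟩ := exists_denom (fun i => c (v i))
  obtain ⟨m, hm⟩ := exists_nat_gt (∑ i, |h (v i)|)
  have hm' : ∀ i, |h (v i)| < m := fun i => lt_of_le_of_lt
    (Finset.single_le_sum (f := fun i => |h (v i)|) (fun i _ => abs_nonneg _)
      (Finset.mem_univ i)) hm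
  let t : ℚ := 1 / (K * m)
  let f : M →+ ℚ := c + (t • h).toAddMonoidHom
  have hf : ∀ x, f x = c x + t * h x := fun x => rfl
  refine ⟨f, fun x hx => ?_, fun i => ?_⟩
  · have hxs := hΓs hx
    obtain ⟨n, hn⟩ := (hint x hxs).1 (h1 x hx)
    exact ⟨n, by rw [hf, hhU x ((hU x (hΓ hx)).2 hxs), hn]; ring⟩
  · rintro ⟨n, hn⟩
    have hvΛ : v i ∈ Λ := AddSubgroup.subset_closure ⟨i, rfl⟩
    rw [hf] at hn
    by_cases hi : v i ∈ U
    · have his := (hU _ hvΛ).1 hi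
      refine ⟨his, (hint _ his).2 ⟨n, ?_⟩⟩
      rw [hhU _ hi] at hn
      linarith
    · exfalso
      obtain ⟨a, ha⟩ := hKc i
      have hm0 : (0 : ℚ) < m := lt_of_le_of_lt (abs_nonneg _) (hm' i)
      have hK0 : (0 : ℚ) < K := by exact_mod_cast hK
      have h3 : h (v i) = m * ((K * n - a : ℤ) : ℚ) := by
        have : (K : ℚ) * c (v i) + h (v i) / m = K * n := by
          rw [← hn]
          simp only [t]
          field_simp
        rw [ha] at this
        push_cast
        rw [← this]
        field_simp
        ring
      have h4 : (K * n - a : ℤ) ≠ 0 := by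
        intro h0
        rw [h0] at h3
        exact hhv i hi (by simpa using h3)
      have h5 := hm' i
      rw [h3, abs_mul, abs_of_pos hm0] at h5
      have h6 : (1 : ℚ) ≤ |((K * n - a : ℤ) : ℚ)| := by
        rw [← Int.cast_abs]
        exact_mod_cast Int.one_le_abs h4
      nlinarith

lemma exists_gen (v : ι → M) (Γ : AddSubgroup M) (W : Submodule ℂ M) (θ : M)
    (hΓ : ∀ x, x ∈ Γ ↔ x ∈ AddSubgroup.closure (Set.range v) ∧ ∃ n : ℤ, x - n • θ ∈ W) :
    ∃ y ∈ sat (AddSubgroup.closure (Set.range v)) Γ,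
      ∀ x ∈ sat (AddSubgroup.closure (Set.range v)) Γ, ∃ m : ℤ, x - m • y ∈ Γ := by
  set Λ := AddSubgroup.closure (Set.range v) with hΛ
  let A : AddSubgroup (M ⧸ W) := (sat Λ Γ).map W.mkQ.toAddMonoidHom
  have htf : IsAddTorsionFree (M ⧸ W) := .of_isTorsionFree ℂ (M ⧸ W)
  have hfin : Module.Finite ℤ A := by
    apply fg_of_le (fun i => W.mkQ (v i))
    rintro _ ⟨x, hx, rfl⟩
    have h1 := AddSubgroup.mem_map_of_mem W.mkQ.toAddMonoidHom hx.1
    rw [hΛ, AddMonoidHom.map_closure, ← Set.range_comp] at h1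
    exact h1
  have hfree : Module.Free ℤ A := inferInstance
  let e := Module.Free.chooseBasis ℤ A
  have hA : ∀ a : A, ∃ (k : ℕ) (n : ℤ), 0 < k ∧ k • (a : M ⧸ W) = n • W.mkQ θ := by
    rintro ⟨_, x, hx, rfl⟩
    obtain ⟨hx, k, hk, hkx⟩ := hx
    obtain ⟨-, n, hn⟩ := (hΓ _).1 hkx
    refine ⟨k, n, hk, ?_⟩
    have : W.mkQ (k • x - n • θ) = 0 := (Submodule.Quotient.mk_eq_zero W).2 hn
    rw [map_sub, map_nsmul, map_zsmul, sub_eq_zero] at this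
    exact this
  have hsub : Subsingleton (Module.Free.ChooseBasisIndex ℤ A) := by
    refine ⟨fun i j => ?_⟩
    by_contra hij
    obtain ⟨k, n, hk, hkn⟩ := hA (e i)
    obtain ⟨l, m, hl, hlm⟩ := hA (e j)
    have hrel : (m * k) • e i + (-(n * l)) • e j = 0 := by
      apply Subtype.ext
      push_cast
      rw [mul_smul, neg_smul, mul_smul, natCast_zsmul, natCast_zsmul, hkn, hlm, smul_comm]
      simp
    have hp : m * k = 0 := by
      have h0 := congrArg (fun z => e.repr z i) hrel
      simpa only [map_add, map_smul, e.repr_self, Finsupp.add_apply, Finsupp.smul_apply,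
        Finsupp.single_eq_same, Finsupp.single_eq_of_ne hij, smul_zero, add_zero, smul_eq_mul,
        mul_one, mul_zero, map_zero, Finsupp.zero_apply] using h0
    have hm : m = 0 := by
      rcases mul_eq_zero.1 hp with h | h
      · exact h
      · omega
    rw [hm, zero_smul] at hlm
    have : (e j : M ⧸ W) = 0 := by
      rcases smul_eq_zero.1 hlm with h | h
      · omega
      · exact h
    exact e.ne_zero j (Subtype.ext this)
  obtain ⟨a, ha⟩ : ∃ a : A, ∀ x : A, ∃ m : ℤ, x = m • a := by
    rcases isEmpty_or_nonempty (Module.Free.ChooseBasisIndex ℤ A) with hE | ⟨⟨i⟩⟩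
    · refine ⟨0, fun x => ⟨0, ?_⟩⟩
      rw [← e.sum_repr x]
      simp
    · refine ⟨e i, fun x => ⟨e.repr x i, ?_⟩⟩
      have : Unique (Module.Free.ChooseBasisIndex ℤ A) := ⟨⟨i⟩, fun j => Subsingleton.elim _ _⟩
      conv_lhs => rw [← e.sum_repr x]
      rw [Fintype.sum_subsingleton _ i]
  obtain ⟨_, y, hy, rfl⟩ := a
  refine ⟨y, hy, fun x hx => ?_⟩
  obtain ⟨m, hm⟩ := ha ⟨_, x, hx, rfl⟩
  have hm' : W.mkQ x = m • W.mkQ y := congrArg Subtype.val hm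
  refine ⟨m, (hΓ _).2 ⟨Λ.sub_mem hx.1 (Λ.zsmul_mem hy.1 m), 0, ?_⟩⟩
  rw [zero_smul, sub_zero]
  have : W.mkQ (x - m • y) = 0 := by rw [map_sub, map_zsmul, hm', sub_self]
  exact (Submodule.Quotient.mk_eq_zero W).1 this

end lattice

lemma range_rootSystem (L : Type*) [LieRing L] [LieAlgebra ℂ L] [FiniteDimensional ℂ L]
    [LieAlgebra.IsKilling ℂ L] (H : LieSubalgebra ℂ L) [H.IsCartanSubalgebra] :
    Set.range (LieAlgebra.IsKilling.rootSystem H).root = lieRoots L H := by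
  ext α
  constructor
  · rintro ⟨i, rfl⟩
    rw [LieAlgebra.IsKilling.rootSystem_root_apply]
    have hi := i.2
    simp only [LieSubalgebra.root, Finset.mem_filter, Finset.mem_univ, true_and] at hi
    refine ⟨fun h => hi ?_, i.1.genWeightSpace_ne_bot⟩
    have := congrArg (fun g : Module.Dual ℂ H => (g : H → ℂ)) h
    exact this
  · rintro ⟨h0, hα⟩
    let w : LieModule.Weight ℂ H L := ⟨⇑α, hα⟩
    have hw : w ∈ H.root := by
      simp only [LieSubalgebra.root, Finset.mem_filter, Finset.mem_univ, true_and]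
      intro h
      apply h0
      ext x
      exact congrFun h x
    refine ⟨⟨w, hw⟩, ?_⟩
    rw [LieAlgebra.IsKilling.rootSystem_root_apply]
    ext x
    rfl

end TorAux

/-- If `𝔤` is simple and `Tor(Γ_𝔨)` is not cyclic, then the kernel of any character
`χ : Tor(Γ_𝔨) → ℂ∖{0}` contains a nonzero image of a root. -/
theorem torsion_noncyclic_character_kernel_contains_root_image
    (L : Type*) [LieRing L] [LieAlgebra ℂ L] [FiniteDimensional ℂ L]
    [LieAlgebra.IsSimple ℂ L]
    (H : LieSubalgebra ℂ L) [H.IsCartanSubalgebra]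
    (P : Set (Module.Dual ℂ H))
    (hP : IsClosedSymmetricSubsystem (lieRoots L H) P)
    (hnc : ¬ IsAddCyclic ↥(AddCommGroup.torsion (GammaK L H P)))
    (χ : ↥(AddCommGroup.torsion (GammaK L H P)) → ℂ)
    (hmul : ∀ x y, χ (x + y) = χ x * χ y)
    (hne : ∀ x, χ x ≠ 0) :
    ∃ (α : Module.Dual ℂ H) (hα : α ∈ lieRoots L H)
      (hmem : rootImage L H P hα ∈ AddCommGroup.torsion (GammaK L H P)),
      rootImage L H P hα ≠ 0 ∧ χ ⟨rootImage L H P hα, hmem⟩ = 1 := by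
  classical
  have hrange := TorAux.range_rootSystem L H
  set R := LieAlgebra.IsKilling.rootSystem H with hR
  set Λ := AddSubgroup.closure (lieRoots L H) with hΛ
  set Γ := AddSubgroup.closure P with hΓ
  have hΓΛ : Γ ≤ Λ := AddSubgroup.closure_mono hP.1
  have hcl : AddSubgroup.closure (Set.range R.root) = Λ := by rw [hrange]
  let q : Λ → GammaK L H P := fun x => QuotientAddGroup.mk x
  have hq0 : ∀ x : Λ, q x = 0 ↔ (x : Module.Dual ℂ H) ∈ Γ := fun x => by
    rw [← AddSubgroup.mem_addSubgroupOf]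
    exact QuotientAddGroup.eq_zero_iff x
  have htor : ∀ x : Λ, q x ∈ AddCommGroup.torsion (GammaK L H P) ↔
      (x : Module.Dual ℂ H) ∈ TorAux.sat Λ Γ := fun x => by
    rw [TorAux.mem_sat]
    have h1 : q x ∈ AddCommGroup.torsion (GammaK L H P) ↔ IsOfFinAddOrder (q x) := Iff.rfl
    rw [h1, isOfFinAddOrder_iff_nsmul_eq_zero]
    constructor
    · rintro ⟨k, hk, h⟩
      exact ⟨x.2, k, hk, (hq0 (k • x)).1 h⟩
    · rintro ⟨-, k, hk, h⟩
      exact ⟨k, hk, (hq0 (k • x)).2 h⟩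
  let X : Module.Dual ℂ H → ℂ := fun x =>
    if h : ∃ hx : x ∈ Λ, q ⟨x, hx⟩ ∈ AddCommGroup.torsion (GammaK L H P) then
      χ ⟨q ⟨x, h.1⟩, h.2⟩ else 0
  have hX : ∀ x (hx : x ∈ Λ) (ht : q ⟨x, hx⟩ ∈ AddCommGroup.torsion (GammaK L H P)),
      X x = χ ⟨q ⟨x, hx⟩, ht⟩ := fun x hx ht => dif_pos ⟨hx, ht⟩
  have hχ0 : χ 0 = 1 := by
    have h := hmul 0 0
    rw [add_zero] at h
    exact mul_left_cancel₀ (hne 0) (by rw [← h, mul_one])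
  have hXmul : ∀ x ∈ TorAux.sat Λ Γ, ∀ y ∈ TorAux.sat Λ Γ, X (x + y) = X x * X y := by
    intro x hx y hy
    have hxΛ := (TorAux.mem_sat.1 hx).1
    have hyΛ := (TorAux.mem_sat.1 hy).1
    rw [hX x hxΛ ((htor _).2 hx), hX y hyΛ ((htor _).2 hy), ← hmul]
    exact hX (x + y) (Λ.add_mem hxΛ hyΛ) ((htor _).2 (AddSubgroup.add_mem _ hx hy))
  have hsatΓ : ∀ x ∈ Γ, x ∈ TorAux.sat Λ Γ := fun x hx =>
    TorAux.mem_sat.2 ⟨hΓΛ hx, 1, one_pos, by rwa [one_smul]⟩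
  have hX1 : ∀ x ∈ Γ, X x = 1 := by
    intro x hx
    rw [hX x (hΓΛ hx) ((htor _).2 (hsatΓ x hx)), ← hχ0]
    congr 1
    exact Subtype.ext ((hq0 ⟨x, hΓΛ hx⟩).2 hx)
  by_contra hcon
  obtain ⟨f, hf1, hf2⟩ := TorAux.exists_functional (fun i => R.root i) Γ X
    (by rw [hcl]; exact hXmul) (by rw [hcl]; exact hΓΛ) hX1
  rw [hcl] at hf2
  have hS : Γ = AddSubgroup.closure (R.root '' {i | ∃ n : ℤ, f (R.root i) = n}) := by
    apply le_antisymm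
    · rw [hΓ, AddSubgroup.closure_le]
      intro α hα
      have h1 := hP.1 hα
      rw [← hrange] at h1
      obtain ⟨i, rfl⟩ := h1
      exact AddSubgroup.subset_closure ⟨i, hf1 _ (AddSubgroup.subset_closure hα), rfl⟩
    · rw [AddSubgroup.closure_le]
      rintro _ ⟨i, hi, rfl⟩
      obtain ⟨hs, h1⟩ := hf2 i hi
      have hr : R.root i ∈ lieRoots L H := by rw [← hrange]; exact ⟨i, rfl⟩
      by_contra hni
      have ht := (htor ⟨R.root i, AddSubgroup.subset_closure hr⟩).2 hs
      refine hcon ⟨R.root i, hr, ht, fun h0 => hni ((hq0 _).1 h0), ?_⟩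
      rw [← h1]
      exact (hX _ _ ht).symm
  obtain ⟨W, θ, -, hW⟩ := TorAux.structure_thm R f
  rw [← hS] at hW
  obtain ⟨y, hy, hgen⟩ := TorAux.exists_gen (fun i => R.root i) Γ W θ hW
  rw [hcl] at hy hgen
  have hyΛ := (TorAux.mem_sat.1 hy).1
  apply hnc
  refine ⟨⟨⟨q ⟨y, hyΛ⟩, (htor _).2 hy⟩, ?_⟩⟩
  rintro ⟨z, hz⟩
  obtain ⟨⟨x, hxΛ⟩, rfl⟩ := QuotientAddGroup.mk_surjective z
  have hx := (htor ⟨x, hxΛ⟩).1 hz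
  obtain ⟨m, hm⟩ := hgen x hx
  refine ⟨m, Subtype.ext ?_⟩
  have h2 : q (⟨x, hxΛ⟩ - m • ⟨y, hyΛ⟩) = 0 := (hq0 _).2 hm
  have h3 : q ⟨x, hxΛ⟩ - m • q ⟨y, hyΛ⟩ = 0 := h2
  exact (sub_eq_zero.1 h3).symm
end
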